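/- arXiv:2508.15564 — 2 statements merged into one kernel-verified Lean document; each statement's English description precedes it below -/
import Mathlib

section
/- Let 0 < r ≤ R < ∞ and 0 < s < 1. The infimum over φ ∈ C^∞_0(B_R) with ∫_{B_r} |φ| dx = 1 of ∬_{R^N×R^N} |φ(x)−φ(y)|/|x−y|^{N+s} dx dy equals P_s(B_r)/|B_r|, and the ball B_r is the unique optimal set (up to translations) for the corresponding Cheeger-type problem h_s(B_r; B_R). In particular, for every φ ∈ C^∞_0(B_R), the average ⨍_{B_r} |φ| dx ≤ (1/P_s(B_r)) ∬_{R^N×R^N} |φ(x)−φ(y)|/|x−y|^{N+s} dx dy, and this constant is sharp. -/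
open MeasureTheory Metric Filter
open scoped ENNReal

noncomputable section

abbrev Euc (N : ℕ) := EuclideanSpace ℝ (Fin N)

/-- The (p-th power of the) Gagliardo–Slobodeckii seminorm on `ℝ^N`. -/
def gag (N : ℕ) (p s : ℝ) (u : Euc N → ℝ) : ℝ :=
  ∫ z : Euc N × Euc N, |u z.1 - u z.2| ^ p / ‖z.1 - z.2‖ ^ ((N : ℝ) + s * p)

/-- `u ∈ C^∞_0(Ω)`: smooth with compact support contained in `Ω`. -/
def TestOn {N : ℕ} (Ω : Set (Euc N)) (u : Euc N → ℝ) : Prop :=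
  ContDiff ℝ (⊤ : ℕ∞) u ∧ HasCompactSupport u ∧ tsupport u ⊆ Ω

/-- The fractional principal frequency `λ^s_{p,q}(Ω)`. -/
def lam (N : ℕ) (p q s : ℝ) (Ω : Set (Euc N)) : ℝ :=
  sInf { c | ∃ u : Euc N → ℝ, TestOn Ω u ∧ (∫ x in Ω, |u x| ^ q) = 1 ∧ c = gag N p s u }

/-- The homogeneous relative `(s,p)`-capacity of `A` in `E`. -/
def fcap (N : ℕ) (p s : ℝ) (A E : Set (Euc N)) : ℝ :=
  sInf { c | ∃ φ : Euc N → ℝ, TestOn E φ ∧ (∀ x ∈ A, 1 ≤ φ x) ∧ c = gag N p s φ }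

/-- The fractional `s`-perimeter of a set `A ⊆ ℝ^N`. -/
def sPer (N : ℕ) (s : ℝ) (A : Set (Euc N)) : ℝ :=
  ∫ z : Euc N × Euc N,
    |A.indicator (fun _ => (1 : ℝ)) z.1 - A.indicator (fun _ => (1 : ℝ)) z.2| /
      ‖z.1 - z.2‖ ^ ((N : ℝ) + s)

/-- An open set with smooth boundary, described as a regular sublevel set of a smooth function. -/
def SmoothBdry {N : ℕ} (O : Set (Euc N)) : Prop :=
  ∃ f : Euc N → ℝ, ContDiff ℝ (⊤ : ℕ∞) f ∧ O = {x | f x < 0} ∧ ∀ x, f x = 0 → fderiv ℝ f x ≠ 0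

/-- The sharp constant in the fractional Sobolev inequality. -/
def sobConst (N : ℕ) (p s : ℝ) : ℝ :=
  sSup {c | ∃ u : Euc N → ℝ, TestOn Set.univ u ∧ gag N p s u = 1 ∧
    c = (∫ x, |u x| ^ ((N : ℝ) * p / (N - s * p))) ^ (((N : ℝ) - s * p) / N)}

/-- Membership in `W̃^{s,p}_0(Ω)`, the closure of `C^∞_0(Ω)` in `W^{s,p}(ℝ^N)`. -/
def MemW0 (N : ℕ) (p s : ℝ) (Ω : Set (Euc N)) (V : Euc N → ℝ) : Prop :=
  ∃ u : ℕ → Euc N → ℝ, (∀ n, TestOn Ω (u n)) ∧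
    Filter.Tendsto (fun n => (∫ x, |u n x - V x| ^ p) + gag N p s (fun x => u n x - V x))
      Filter.atTop (nhds 0)

/-- The relative (local) `p`-capacity of `A` in `E`. -/
def pcap (N : ℕ) (p : ℝ) (A E : Set (Euc N)) : ℝ :=
  sInf { c | ∃ φ : Euc N → ℝ, TestOn E φ ∧ (∀ x ∈ A, 1 ≤ φ x) ∧
    c = ∫ x in E, ‖fderiv ℝ φ x‖ ^ p }

/-- The sharp constant in the local `p`-Poincaré inequality on `E`. -/
def lamLoc (N : ℕ) (p : ℝ) (E : Set (Euc N)) : ℝ :=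
  sInf { c | ∃ u : Euc N → ℝ, TestOn E u ∧ (∫ x in E, |u x| ^ p) = 1 ∧
    c = ∫ x in E, ‖fderiv ℝ u x‖ ^ p }

/-- The compact set `A ⊆ closure (B_r(x0))` is `(s,p,γ)`-negligible. -/
def Negligible (N : ℕ) (p s γ : ℝ) (x0 : Euc N) (r : ℝ) (A : Set (Euc N)) : Prop :=
  fcap N p s A (ball x0 (2 * r)) ≤ γ * fcap N p s (closedBall x0 r) (ball x0 (2 * r))

/-- The fractional `(p,γ)`-capacitary inradius of order `s` of `Ω` (valued in `ℝ≥0∞`). -/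
def capInr (N : ℕ) (p s γ : ℝ) (Ω : Set (Euc N)) : ℝ≥0∞ :=
  sSup {R | ∃ r : ℝ, 0 < r ∧ R = ENNReal.ofReal r ∧
    ∃ x0 : Euc N, Negligible N p s γ x0 r (closedBall x0 r \ Ω)}

end

/-!
Polarization with respect to a hyperplane decreases every energy
`∬ |u x - u y| k (|x - y|)` with antitone kernel `k`, and preserves the distribution of `u`. In the
compact class of Lipschitz functions equimeasurable with `u` and of no larger energy, a minimiser of
the second moment is therefore radially decreasing: otherwise some polarization towards the origin
would lower the moment. For radially decreasing functions, the coarea formula and Minkowski's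
inequality for the layer-cake representation give the sharp fractional Sobolev inequality
`κ ‖u‖_{d/(d-s)} ≤ ∬ |u x - u y| / |x - y| ^ (d + s)`, with equality for (indicators of) balls.

Hölder's inequality on `B_r` turns this into the bound of `∫_{B_r} |u|`, and mollification turns it
into the isoperimetric inequality `κ |A| ^ ((d-s)/d) ≤ P_s(A)`. If `A` is optimal for the Cheeger
problem, `P_s(A) |B_r| = P_s(B_r) |A ∩ B_r|`, then comparing with `|A ∩ B_r| ≤ |A|` and
`|A ∩ B_r| ≤ |B_r|` forces `A = B_r` up to a null set. Sharpness follows from smooth radial cutoffs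
between `B_ρ` and `B_r` with `ρ → r`, whose energy is at most `P_s(B_r)` by the coarea formula.
-/

open scoped RealInnerProductSpace Topology

section Reflection

lemma dist_sq_sub_dist_sq_div_mul_cancel {E : Type*} [NormedAddCommGroup E] (p q x : E) :
    (dist x p ^ 2 - dist x q ^ 2) / ‖q - p‖ ^ 2 * ‖q - p‖ ^ 2 = dist x p ^ 2 - dist x q ^ 2 := by
  refine div_mul_cancel_of_imp fun h => ?_
  rw [pow_eq_zero_iff two_ne_zero, norm_eq_zero, sub_eq_zero] at h
  rw [h, sub_self]

variable {E : Type*} [NormedAddCommGroup E] [InnerProductSpace ℝ E]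

instance nonempty_perpBisector (p q : E) : Nonempty (AffineSubspace.perpBisector p q) :=
  AffineSubspace.perpBisector_nonempty.to_subtype

lemma dist_sq_sub_dist_sq (p q x : E) :
    dist x p ^ 2 - dist x q ^ 2 = 2 * ⟪x, q - p⟫ + (‖p‖ ^ 2 - ‖q‖ ^ 2) := by
  rw [dist_eq_norm, dist_eq_norm, norm_sub_sq_real, norm_sub_sq_real, inner_sub_right]
  ring

variable [FiniteDimensional ℝ E]

/-- The reflection of `E` in the perpendicular bisector of `p` and `q`, along which functions are
polarized; it is the identity when `p = q`. -/
noncomputable def bisectorReflection (p q : E) : E ≃ᵃⁱ[ℝ] E :=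
  EuclideanGeometry.reflection (AffineSubspace.perpBisector p q)

variable (p q x y : E)

@[simp]
lemma bisectorReflection_bisectorReflection :
    bisectorReflection p q (bisectorReflection p q x) = x :=
  EuclideanGeometry.reflection_reflection _ x

lemma dist_bisectorReflection_comm :
    dist (bisectorReflection p q x) y = dist x (bisectorReflection p q y) := by
  rw [← (bisectorReflection p q).dist_map, bisectorReflection_bisectorReflection]

lemma bisectorReflection_apply :
    bisectorReflection p q x =
      x - ((dist x p ^ 2 - dist x q ^ 2) / ‖q - p‖ ^ 2) • (q - p) := by
  have hcancel := dist_sq_sub_dist_sq_div_mul_cancel p q x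
  set t := (dist x p ^ 2 - dist x q ^ 2) / ‖q - p‖ ^ 2
  have hfoot : x - (t / 2) • (q - p) ∈ AffineSubspace.perpBisector p q := by
    rw [AffineSubspace.mem_perpBisector_iff_dist_eq, ← sq_eq_sq₀ dist_nonneg dist_nonneg,
      ← sub_eq_zero, dist_sq_sub_dist_sq, inner_sub_left, real_inner_smul_left,
      real_inner_self_eq_norm_sq]
    linarith [dist_sq_sub_dist_sq p q x]
  have hnormal : (t / 2) • (q - p) ∈ (AffineSubspace.perpBisector p q).directionᗮ := by
    rw [AffineSubspace.direction_perpBisector, Submodule.orthogonal_orthogonal]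
    exact Submodule.smul_mem _ _ (Submodule.mem_span_singleton_self _)
  have h := EuclideanGeometry.reflection_orthogonal_vadd hfoot hnormal
  rw [vadd_eq_add, vadd_eq_add, add_sub_cancel] at h
  rw [bisectorReflection, h]
  module

@[simp]
lemma bisectorReflection_left : bisectorReflection p q p = q := by
  rcases eq_or_ne p q with rfl | hpq
  · simp [bisectorReflection_apply]
  have hne : ‖q - p‖ ^ 2 ≠ 0 := by simpa [sub_eq_zero] using hpq.symm
  rw [bisectorReflection_apply, dist_self, dist_comm, dist_eq_norm]
  simp [neg_div, div_self hne]

lemma dist_bisectorReflection_left :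
    dist (bisectorReflection p q x) p = dist x q := by
  rw [dist_bisectorReflection_comm, bisectorReflection_left]

lemma dist_bisectorReflection_right :
    dist (bisectorReflection p q x) q = dist x p := by
  rw [← dist_bisectorReflection_left, bisectorReflection_bisectorReflection]

lemma bisectorReflection_eq_self {p q x : E} (h : dist x p = dist x q) :
    bisectorReflection p q x = x := by
  simp [bisectorReflection_apply, h]

lemma dist_bisectorReflection_sq :
    dist x (bisectorReflection p q y) ^ 2 = dist x y ^ 2 +
      (dist x p ^ 2 - dist x q ^ 2) * ((dist y p ^ 2 - dist y q ^ 2) / ‖q - p‖ ^ 2) := by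
  have hcancel := dist_sq_sub_dist_sq_div_mul_cancel p q y
  set t := (dist y p ^ 2 - dist y q ^ 2) / ‖q - p‖ ^ 2 with ht
  have hdiff : 2 * ⟪x - y, q - p⟫ =
      (dist x p ^ 2 - dist x q ^ 2) - (dist y p ^ 2 - dist y q ^ 2) := by
    rw [dist_sq_sub_dist_sq, dist_sq_sub_dist_sq, inner_sub_left]
    ring
  rw [bisectorReflection_apply, ← ht, dist_eq_norm, dist_eq_norm x y, sub_sub_eq_add_sub,
    add_sub_right_comm, norm_add_sq_real, real_inner_smul_right, norm_smul, mul_pow,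
    Real.norm_eq_abs, sq_abs]
  linear_combination t * hcancel + t * hdiff

variable {p q x y}

lemma dist_bisectorReflection_le (hx : dist x p ≤ dist x q) (hy : dist y q ≤ dist y p) :
    dist x (bisectorReflection p q y) ≤ dist x y := by
  have hx' : dist x p ^ 2 - dist x q ^ 2 ≤ 0 := sub_nonpos.2 (by gcongr)
  have hy' : 0 ≤ dist y p ^ 2 - dist y q ^ 2 := sub_nonneg.2 (by gcongr)
  refine le_of_sq_le_sq ?_ dist_nonneg
  rw [dist_bisectorReflection_sq, add_le_iff_nonpos_right]
  exact mul_nonpos_of_nonpos_of_nonneg hx' (div_nonneg hy' (sq_nonneg _))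

lemma dist_le_dist_bisectorReflection (hx : dist x p ≤ dist x q) (hy : dist y p ≤ dist y q) :
    dist x y ≤ dist x (bisectorReflection p q y) := by
  simpa only [bisectorReflection_bisectorReflection] using
    dist_bisectorReflection_le (y := bisectorReflection p q y) hx
      (by rwa [dist_bisectorReflection_left, dist_bisectorReflection_right])

lemma dist_le_dist_bisectorReflection' (hx : dist x q ≤ dist x p) (hy : dist y q ≤ dist y p) :
    dist x y ≤ dist x (bisectorReflection p q y) := by
  have h := dist_le_dist_bisectorReflection (p := p) (q := q) (x := bisectorReflection p q x)
    (y := bisectorReflection p q y)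
  rw [dist_bisectorReflection_left, dist_bisectorReflection_left, dist_bisectorReflection_right,
    dist_bisectorReflection_right, (bisectorReflection p q).dist_map,
    (bisectorReflection p q).dist_map] at h
  exact h hx hy

lemma norm_bisectorReflection_le (h : ‖p‖ ≤ ‖q‖) (hx : dist x q ≤ dist x p) :
    ‖bisectorReflection p q x‖ ≤ ‖x‖ := by
  simpa only [dist_zero_left] using
    dist_bisectorReflection_le (x := 0) (by simpa only [dist_zero_left] using h) hx

variable [MeasurableSpace E] [BorelSpace E]

lemma measurePreserving_bisectorReflection (p q : E) :
    MeasurePreserving (bisectorReflection p q) := by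
  have h : ⇑(bisectorReflection p q) =
      (· + bisectorReflection p q 0) ∘ (bisectorReflection p q).linearIsometryEquiv := by
    ext x
    simpa using (bisectorReflection p q).map_vadd 0 x
  rw [h]
  exact (measurePreserving_add_right volume _).comp (LinearIsometryEquiv.measurePreserving _)

lemma lintegral_bisectorReflection (p q : E) (f : E → ℝ≥0∞) :
    ∫⁻ x, f (bisectorReflection p q x) = ∫⁻ x, f x :=
  (measurePreserving_bisectorReflection p q).lintegral_comp_emb
    (bisectorReflection p q).toHomeomorph.measurableEmbedding f

lemma integral_bisectorReflection (p q : E) (f : E → ℝ) :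
    ∫ x, f (bisectorReflection p q x) = ∫ x, f x :=
  (measurePreserving_bisectorReflection p q).integral_comp
    (bisectorReflection p q).toHomeomorph.measurableEmbedding f

end Reflection

section NonlocalEnergy

/-- The nonlocal energy `∬ |u x - u y| k(|x - y|)` of `u` for the interaction kernel `k`. It is
valued in `ℝ≥0∞`, so that neither the kernel nor the function has to be integrable. -/
noncomputable def nonlocalEnergy {X : Type*} [PseudoMetricSpace X] [MeasureSpace X]
    (k : ℝ → ℝ≥0∞) (u : X → ℝ) : ℝ≥0∞ :=
  ∫⁻ x, ∫⁻ y, ‖u x - u y‖ₑ * k (dist x y)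

/-- The perimeter of `A` associated with the kernel `k`: the nonlocal energy of its indicator. -/
noncomputable def nonlocalPerimeter {X : Type*} [PseudoMetricSpace X] [MeasureSpace X]
    (k : ℝ → ℝ≥0∞) (A : Set X) : ℝ≥0∞ :=
  nonlocalEnergy k (A.indicator fun _ => (1 : ℝ))

lemma nonlocalEnergy_mono {X : Type*} [PseudoMetricSpace X] [MeasureSpace X]
    {k : ℝ → ℝ≥0∞} {u v : X → ℝ} (h : ∀ x y, |v x - v y| ≤ |u x - u y|) :
    nonlocalEnergy k v ≤ nonlocalEnergy k u := by
  refine lintegral_mono fun x => lintegral_mono fun y => ?_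
  gcongr
  simpa only [enorm_le_iff_norm_le, Real.norm_eq_abs] using h x y

lemma enorm_sub_eq_lintegral_enorm_indicator_sub {a b : ℝ} (ha : 0 ≤ a) (hb : 0 ≤ b) :
    ‖a - b‖ₑ = ∫⁻ t in Set.Ioi (0 : ℝ),
      ‖(Set.Iio a).indicator (fun _ => (1 : ℝ)) t -
        (Set.Iio b).indicator (fun _ => (1 : ℝ)) t‖ₑ := by
  wlog hab : a ≤ b generalizing a b
  · simpa only [enorm_sub_rev] using this hb ha (le_of_not_ge hab)
  have hdiff : ∀ t, ‖(Set.Iio a).indicator (fun _ => (1 : ℝ)) t -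
      (Set.Iio b).indicator (fun _ => (1 : ℝ)) t‖ₑ = (Set.Ico a b).indicator 1 t := by
    intro t
    by_cases hta : t < a
    · simp [Set.indicator, hta, hta.trans_le hab]
    · by_cases htb : t < b <;> simp [Set.indicator, hta, htb, not_lt.1 hta]
  have hinter : Set.Ico a b ∩ Set.Ici 0 = Set.Ico a b :=
    Set.inter_eq_left.2 fun t ht => ha.trans ht.1
  simp only [hdiff]
  rw [setLIntegral_congr Ioi_ae_eq_Ici, lintegral_indicator_one measurableSet_Ico,
    Measure.restrict_apply measurableSet_Ico, hinter, Real.volume_Ico, enorm_sub_rev,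
    Real.enorm_of_nonneg (sub_nonneg.2 hab)]

variable {X : Type*} [PseudoMetricSpace X] [SecondCountableTopology X] [MeasureSpace X]
  [OpensMeasurableSpace X] [SFinite (volume : Measure X)] {k : ℝ → ℝ≥0∞} {u : X → ℝ}

lemma nonlocalEnergy_eq_lintegral_prod (hk : Measurable k) (hu : Measurable u) :
    nonlocalEnergy k u = ∫⁻ z : X × X, ‖u z.1 - u z.2‖ₑ * k (dist z.1 z.2) := by
  rw [Measure.volume_eq_prod, lintegral_prod _ (by fun_prop), nonlocalEnergy]

lemma nonlocalEnergy_le_of_tendsto {C : ℝ≥0∞} {w : ℕ → X → ℝ} (hk : Measurable k)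
    (hw : ∀ n, Measurable (w n)) (hwC : ∀ n, nonlocalEnergy k (w n) ≤ C)
    (hlim : ∀ x, Tendsto (fun n => w n x) atTop (𝓝 (u x))) :
    nonlocalEnergy k u ≤ C := by
  have hu : Measurable u := measurable_of_tendsto_metrizable hw (tendsto_pi_nhds.2 hlim)
  simp only [nonlocalEnergy_eq_lintegral_prod hk, hw, hu] at hwC ⊢
  calc ∫⁻ z : X × X, ‖u z.1 - u z.2‖ₑ * k (dist z.1 z.2)
      ≤ ∫⁻ z : X × X, liminf (fun n => ‖w n z.1 - w n z.2‖ₑ * k (dist z.1 z.2)) atTop := by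
        refine lintegral_mono fun z => ?_
        rcases eq_or_ne ‖u z.1 - u z.2‖ₑ 0 with h0 | h0
        · simp [h0]
        · exact ((ENNReal.Tendsto.mul_const ((hlim z.1).sub (hlim z.2)).enorm
            (Or.inl h0)).liminf_eq).ge
    _ ≤ liminf (fun n => ∫⁻ z : X × X, ‖w n z.1 - w n z.2‖ₑ * k (dist z.1 z.2)) atTop :=
        lintegral_liminf_le fun n => by fun_prop
    _ ≤ C := (liminf_le_liminf (.of_forall hwC)).trans_eq (liminf_const C)

lemma nonlocalEnergy_eq_lintegral_nonlocalPerimeter (hk : Measurable k) (hu : Measurable u)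
    (h0 : ∀ x, 0 ≤ u x) :
    nonlocalEnergy k u = ∫⁻ t in Set.Ioi (0 : ℝ), nonlocalPerimeter k {x | t < u x} := by
  let χ : ℝ → ℝ → ℝ := fun a => (Set.Iio a).indicator fun _ => 1
  have hχ : Measurable (Function.uncurry χ) :=
    Measurable.ite (measurableSet_lt measurable_snd measurable_fst) measurable_const
      measurable_const
  have hχ' : ∀ z : X × X, Measurable fun t => ‖χ (u z.1) t - χ (u z.2) t‖ₑ := fun z =>
    ((hχ.of_uncurry_left (x := u z.1)).sub (hχ.of_uncurry_left (x := u z.2))).enorm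
  have hlevel : ∀ t, nonlocalPerimeter k {x | t < u x} =
      ∫⁻ z : X × X, ‖χ (u z.1) t - χ (u z.2) t‖ₑ * k (dist z.1 z.2) := fun t =>
    nonlocalEnergy_eq_lintegral_prod hk
      (measurable_const.indicator (measurableSet_lt measurable_const hu))
  have hjoint : Measurable (Function.uncurry fun (t : ℝ) (z : X × X) =>
      ‖χ (u z.1) t - χ (u z.2) t‖ₑ * k (dist z.1 z.2)) := by
    have h1 : Measurable fun w : ℝ × (X × X) => χ (u w.2.1) w.1 :=
      hχ.comp (.prodMk (by fun_prop) measurable_fst)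
    have h2 : Measurable fun w : ℝ × (X × X) => χ (u w.2.2) w.1 :=
      hχ.comp (.prodMk (by fun_prop) measurable_fst)
    exact (h1.sub h2).enorm.mul (by fun_prop)
  simp only [hlevel]
  rw [lintegral_lintegral_swap hjoint.aemeasurable, nonlocalEnergy_eq_lintegral_prod hk hu]
  refine lintegral_congr fun z => ?_
  rw [lintegral_mul_const _ (hχ' z),
    enorm_sub_eq_lintegral_enorm_indicator_sub (h0 z.1) (h0 z.2)]

end NonlocalEnergy

section Polarization

lemma abs_max_sub_min_le {a a' b b' C : ℝ} (h₁ : |a - b| ≤ C) (h₂ : |a' - b'| ≤ C)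
    (h₃ : |a - b'| ≤ C) (h₄ : |a' - b| ≤ C) : |max a a' - min b b'| ≤ C := by
  rcases max_choice a a' with h | h <;> rcases min_choice b b' with h' | h' <;>
    rw [h, h'] <;> assumption

lemma enorm_max_sub_max_add_enorm_min_sub_min_le (a a' b b' : ℝ) :
    ‖max a a' - max b b'‖ₑ + ‖min a a' - min b b'‖ₑ ≤ ‖a - b‖ₑ + ‖a' - b'‖ₑ := by
  simp only [Real.enorm_eq_ofReal_abs, ← ENNReal.ofReal_add (abs_nonneg _) (abs_nonneg _)]
  refine ENNReal.ofReal_le_ofReal ?_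
  rcases le_total a a' with h | h <;> rcases le_total b b' with h' | h' <;>
    simp only [max_eq_left, max_eq_right, min_eq_left, min_eq_right, h, h'] <;> grind

lemma four_point_le (a a' b b' : ℝ) {k₁ k₂ : ℝ≥0∞} (hk : k₂ ≤ k₁) :
    ‖max a a' - max b b'‖ₑ * k₁ + ‖min a a' - min b b'‖ₑ * k₁ +
        (‖max a a' - min b b'‖ₑ * k₂ + ‖min a a' - max b b'‖ₑ * k₂) ≤
      ‖a - b‖ₑ * k₁ + ‖a' - b'‖ₑ * k₁ + (‖a - b'‖ₑ * k₂ + ‖a' - b‖ₑ * k₂) := by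
  obtain ⟨c, rfl⟩ := exists_add_of_le hk
  have hsplit : ∀ e₁ e₂ e₃ e₄ : ℝ≥0∞, e₁ * (k₂ + c) + e₂ * (k₂ + c) + (e₃ * k₂ + e₄ * k₂) =
      (e₁ + e₂ + (e₃ + e₄)) * k₂ + (e₁ + e₂) * c := fun _ _ _ _ => by ring
  have htotal : ‖max a a' - max b b'‖ₑ + ‖min a a' - min b b'‖ₑ +
      (‖max a a' - min b b'‖ₑ + ‖min a a' - max b b'‖ₑ) =
      ‖a - b‖ₑ + ‖a' - b'‖ₑ + (‖a - b'‖ₑ + ‖a' - b‖ₑ) := by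
    rcases le_total a a' with h | h <;> rcases le_total b b' with h' | h' <;>
      simp only [max_eq_left, max_eq_right, min_eq_left, min_eq_right, h, h'] <;> ring
  rw [hsplit, hsplit, htotal]
  gcongr _ + ?_ * c
  exact enorm_max_sub_max_add_enorm_min_sub_min_le a a' b b'

lemma four_mul_lintegral_prod_of_measurePreserving {X : Type*} [MeasureSpace X]
    [SFinite (volume : Measure X)] {σ : X → X} (hσ : MeasurePreserving σ) {F : X × X → ℝ≥0∞}
    (hF : Measurable F) :
    4 * ∫⁻ z, F z = ∫⁻ z : X × X, (F z + F (σ z.1, σ z.2) + (F (z.1, σ z.2) + F (σ z.1, z.2))) := by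
  have hid := MeasurePreserving.id (volume : Measure X)
  have hσm := hσ.measurable
  have h₁ : ∫⁻ z : X × X, F (σ z.1, σ z.2) = ∫⁻ z, F z := (hσ.prod hσ).lintegral_comp hF
  have h₂ : ∫⁻ z : X × X, F (z.1, σ z.2) = ∫⁻ z, F z := (hid.prod hσ).lintegral_comp hF
  have h₃ : ∫⁻ z : X × X, F (σ z.1, z.2) = ∫⁻ z, F z := (hσ.prod hid).lintegral_comp hF
  rw [lintegral_add_left (by fun_prop), lintegral_add_left (by fun_prop),
    lintegral_add_left (by fun_prop), h₁, h₂, h₃]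
  ring

variable {E : Type*} [NormedAddCommGroup E] [InnerProductSpace ℝ E] [FiniteDimensional ℝ E]

/-- The two-point rearrangement of `u` that moves the larger of the values at `x` and at its mirror
image to the side of the bisector of `p` and `q` on which `p` lies. -/
noncomputable def polarization (p q : E) (u : E → ℝ) (x : E) : ℝ :=
  if dist x p ≤ dist x q then max (u x) (u (bisectorReflection p q x))
  else min (u x) (u (bisectorReflection p q x))

variable {p q x : E} {u : E → ℝ}

lemma polarization_of_le (h : dist x p ≤ dist x q) :
    polarization p q u x = max (u x) (u (bisectorReflection p q x)) :=
  if_pos h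

lemma polarization_of_ge (h : dist x q ≤ dist x p) :
    polarization p q u x = min (u x) (u (bisectorReflection p q x)) := by
  rcases h.eq_or_lt with h' | h'
  · rw [polarization_of_le h'.ge, bisectorReflection_eq_self h'.symm, max_self, min_self]
  · exact if_neg h'.not_ge

lemma polarization_bisectorReflection_of_le (h : dist x p ≤ dist x q) :
    polarization p q u (bisectorReflection p q x) = min (u x) (u (bisectorReflection p q x)) := by
  rw [polarization_of_ge, bisectorReflection_bisectorReflection, min_comm]
  rwa [dist_bisectorReflection_left, dist_bisectorReflection_right]

lemma polarization_bisectorReflection_of_ge (h : dist x q ≤ dist x p) :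
    polarization p q u (bisectorReflection p q x) = max (u x) (u (bisectorReflection p q x)) := by
  rw [polarization_of_le, bisectorReflection_bisectorReflection, max_comm]
  rwa [dist_bisectorReflection_left, dist_bisectorReflection_right]

lemma polarization_add_polarization_bisectorReflection {β : Type*} [AddCommMonoid β] (h : ℝ → β) :
    h (polarization p q u x) + h (polarization p q u (bisectorReflection p q x)) =
      h (u x) + h (u (bisectorReflection p q x)) := by
  rcases le_total (dist x p) (dist x q) with hx | hx
  · rw [polarization_of_le hx, polarization_bisectorReflection_of_le hx]
    rcases le_total (u x) (u (bisectorReflection p q x)) with h | h <;> simp [h, add_comm]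
  · rw [polarization_of_ge hx, polarization_bisectorReflection_of_ge hx]
    rcases le_total (u x) (u (bisectorReflection p q x)) with h | h <;> simp [h, add_comm]

lemma polarization_mem {s : Set ℝ} (hu : ∀ x, u x ∈ s) : polarization p q u x ∈ s := by
  unfold polarization
  rcases max_choice (u x) (u (bisectorReflection p q x)) with h | h <;>
    rcases min_choice (u x) (u (bisectorReflection p q x)) with h' | h' <;>
    rw [h, h'] <;> split_ifs <;> exact hu _

lemma polarization_eq_zero_of_lt_norm {R : ℝ} (hpq : ‖p‖ ≤ ‖q‖) (h0 : ∀ x, 0 ≤ u x)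
    (hu : ∀ x, R < ‖x‖ → u x = 0) (hx : R < ‖x‖) : polarization p q u x = 0 := by
  rcases le_total (dist x p) (dist x q) with h | h
  · have hσ : R < ‖bisectorReflection p q x‖ := by
      refine hx.trans_le ?_
      simpa only [bisectorReflection_bisectorReflection] using
        norm_bisectorReflection_le (x := bisectorReflection p q x) hpq
          (by rwa [dist_bisectorReflection_left, dist_bisectorReflection_right])
    rw [polarization_of_le h, hu x hx, hu _ hσ, max_self]
  · rw [polarization_of_ge h, hu x hx, min_eq_left (h0 _)]

lemma lipschitzWith_polarization {K : NNReal} (hu : LipschitzWith K u) :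
    LipschitzWith K (polarization p q u) := by
  have hσ : LipschitzWith K (u ∘ bisectorReflection p q) := by
    simpa only [mul_one] using hu.comp (bisectorReflection p q).isometry.lipschitz
  have hopp : ∀ x y, dist x p ≤ dist x q → dist y q ≤ dist y p →
      dist (polarization p q u x) (polarization p q u y) ≤ K * dist x y := by
    intro x y hx hy
    have hle := mul_le_mul_of_nonneg_left (dist_bisectorReflection_le hx hy) K.coe_nonneg
    rw [polarization_of_le hx, polarization_of_ge hy]
    refine abs_max_sub_min_le (hu.dist_le_mul x y) (hσ.dist_le_mul x y)
      ((hu.dist_le_mul _ _).trans hle) ((hu.dist_le_mul _ _).trans ?_)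
    rwa [dist_bisectorReflection_comm]
  refine LipschitzWith.of_dist_le_mul fun x y => ?_
  rcases le_total (dist x p) (dist x q) with hx | hx <;>
    rcases le_total (dist y p) (dist y q) with hy | hy
  · rw [polarization_of_le hx, polarization_of_le hy]
    exact (abs_max_sub_max_le_max _ _ _ _).trans
      (max_le (hu.dist_le_mul x y) (hσ.dist_le_mul x y))
  · exact hopp x y hx hy
  · rw [dist_comm, dist_comm x]
    exact hopp y x hy hx
  · rw [polarization_of_ge hx, polarization_of_ge hy]
    exact (abs_min_sub_min_le_max _ _ _ _).trans
      (max_le (hu.dist_le_mul x y) (hσ.dist_le_mul x y))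

variable {k : ℝ → ℝ≥0∞}

lemma polarization_four_point_le (hk : Antitone k) (x y : E) :
    ‖polarization p q u x - polarization p q u y‖ₑ * k (dist x y) +
        ‖polarization p q u (bisectorReflection p q x) -
          polarization p q u (bisectorReflection p q y)‖ₑ * k (dist x y) +
        (‖polarization p q u x - polarization p q u (bisectorReflection p q y)‖ₑ *
            k (dist x (bisectorReflection p q y)) +
          ‖polarization p q u (bisectorReflection p q x) - polarization p q u y‖ₑ *
            k (dist x (bisectorReflection p q y))) ≤
      ‖u x - u y‖ₑ * k (dist x y) +
        ‖u (bisectorReflection p q x) - u (bisectorReflection p q y)‖ₑ * k (dist x y) +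
        (‖u x - u (bisectorReflection p q y)‖ₑ * k (dist x (bisectorReflection p q y)) +
          ‖u (bisectorReflection p q x) - u y‖ₑ * k (dist x (bisectorReflection p q y))) := by
  set a := u x with ha
  set a' := u (bisectorReflection p q x) with ha'
  set b := u y with hb
  set b' := u (bisectorReflection p q y) with hb'
  rcases le_total (dist x p) (dist x q) with hx | hx <;>
    rcases le_total (dist y p) (dist y q) with hy | hy
  · rw [polarization_of_le hx, polarization_of_le hy, polarization_bisectorReflection_of_le hx,
      polarization_bisectorReflection_of_le hy]
    exact four_point_le a a' b b' (hk (dist_le_dist_bisectorReflection hx hy))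
  · have hdist := hk (dist_bisectorReflection_le hx hy)
    rw [polarization_of_le hx, polarization_of_ge hy, polarization_bisectorReflection_of_le hx,
      polarization_bisectorReflection_of_ge hy]
    simpa only [← ha, ← ha', ← hb, ← hb', add_comm, max_comm, min_comm] using
      four_point_le a a' b' b hdist
  · have hdist := hk (dist_bisectorReflection_le hy hx)
    rw [dist_comm y x, dist_comm y, dist_bisectorReflection_comm] at hdist
    rw [polarization_of_ge hx, polarization_of_le hy, polarization_bisectorReflection_of_ge hx,
      polarization_bisectorReflection_of_le hy]
    simpa only [← ha, ← ha', ← hb, ← hb', add_comm, max_comm, min_comm] using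
      four_point_le a' a b b' hdist
  · have hdist := hk (dist_le_dist_bisectorReflection' hx hy)
    rw [polarization_of_ge hx, polarization_of_ge hy, polarization_bisectorReflection_of_ge hx,
      polarization_bisectorReflection_of_ge hy]
    simpa only [← ha, ← ha', ← hb, ← hb', add_comm, max_comm, min_comm] using
      four_point_le a a' b b' hdist

variable [MeasurableSpace E] [BorelSpace E]

lemma measurable_polarization (hu : Measurable u) : Measurable (polarization p q u) :=
  Measurable.ite (measurableSet_le (by fun_prop) (by fun_prop))
    (hu.max (hu.comp (bisectorReflection p q).continuous.measurable))
    (hu.min (hu.comp (bisectorReflection p q).continuous.measurable))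

lemma lintegral_comp_polarization (hu : Measurable u) {h : ℝ → ℝ≥0∞} (hh : Measurable h) :
    ∫⁻ x, h (polarization p q u x) = ∫⁻ x, h (u x) := by
  have hdouble : ∀ v : E → ℝ, Measurable v →
      2 * ∫⁻ x, h (v x) = ∫⁻ x, (h (v x) + h (v (bisectorReflection p q x))) := fun v hv => by
    rw [lintegral_add_left (f := fun x => h (v x)) (hh.comp hv),
      lintegral_bisectorReflection p q fun x => h (v x), two_mul]
  refine (ENNReal.mul_right_inj two_ne_zero ENNReal.ofNat_ne_top).1 ?_
  rw [hdouble _ hu, hdouble _ (measurable_polarization hu)]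
  exact lintegral_congr fun x => polarization_add_polarization_bisectorReflection h

lemma nonlocalEnergy_polarization_le (hk : Antitone k) (hu : Measurable u) :
    nonlocalEnergy k (polarization p q u) ≤ nonlocalEnergy k u := by
  have hkm := hk.measurable
  have hpol : Measurable (polarization p q u) := measurable_polarization hu
  refine (ENNReal.mul_le_mul_iff_right (a := 4) (by simp) (by simp)).1 ?_
  rw [nonlocalEnergy_eq_lintegral_prod hkm hu, nonlocalEnergy_eq_lintegral_prod hkm hpol,
    four_mul_lintegral_prod_of_measurePreserving (measurePreserving_bisectorReflection p q)
      (by fun_prop),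
    four_mul_lintegral_prod_of_measurePreserving (measurePreserving_bisectorReflection p q)
      (by fun_prop)]
  refine lintegral_mono fun z => ?_
  simpa only [(bisectorReflection p q).dist_map, dist_bisectorReflection_comm] using
    polarization_four_point_le hk z.1 z.2

end Polarization

section RadialRearrangement

lemma exists_subseq_tendsto_of_lipschitzWith {X : Type*} [MetricSpace X] [ProperSpace X]
    {K : NNReal} {s : Set ℝ} (hs : IsCompact s) {g : ℕ → X → ℝ}
    (hg : ∀ n, LipschitzWith K (g n)) (hgs : ∀ n x, g n x ∈ s) :
    ∃ (g' : X → ℝ) (ψ : ℕ → ℕ), StrictMono ψ ∧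
      ∀ x, Tendsto (fun n => g (ψ n) x) atTop (𝓝 (g' x)) := by
  set S : Set C(X, ℝ) := {f | (∀ x, f x ∈ s) ∧ LipschitzWith K f}
  have himage : ContinuousMap.toFun '' S =
      (Set.univ.pi fun _ => s) ∩ {f : X → ℝ | LipschitzWith K f} := by
    ext f
    constructor
    · rintro ⟨f, hf, rfl⟩
      exact ⟨fun x _ => hf.1 x, hf.2⟩
    · rintro ⟨h₁, h₂⟩
      exact ⟨⟨f, h₂.continuous⟩, ⟨fun x => h₁ x trivial, h₂⟩, rfl⟩
  have hS : IsCompact S := by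
    refine ArzelaAscoli.isCompact_of_equicontinuous S ?_
      (LipschitzWith.uniformEquicontinuous _ K fun f => f.2.2).equicontinuous
    rw [himage]
    exact (isCompact_univ_pi fun _ => hs).inter_right (isClosed_setOfPred_lipschitzWith K)
  obtain ⟨f, -, ψ, hψ, hlim⟩ := hS.isSeqCompact (x := fun n => ⟨g n, (hg n).continuous⟩)
    fun n => ⟨hgs n, hg n⟩
  exact ⟨f, ψ, hψ, fun x => ((continuous_eval_const x).tendsto f).comp hlim⟩

lemma sub_polarization_mul_nonneg {E : Type*} [NormedAddCommGroup E] [InnerProductSpace ℝ E]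
    [FiniteDimensional ℝ E] {a b : E} (hab : ‖a‖ ≤ ‖b‖) (u : E → ℝ) (x : E) :
    0 ≤ (u x - polarization a b u x) * (‖x‖ ^ 2 - ‖bisectorReflection a b x‖ ^ 2) := by
  rcases le_total (dist x a) (dist x b) with hx | hx
  · have hσx : ‖x‖ ≤ ‖bisectorReflection a b x‖ := by
      simpa only [bisectorReflection_bisectorReflection] using
        norm_bisectorReflection_le hab (x := bisectorReflection a b x)
          (by rwa [dist_bisectorReflection_left, dist_bisectorReflection_right])
    refine mul_nonneg_of_nonpos_of_nonpos ?_ (sub_nonpos.2 (by gcongr))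
    simp only [polarization_of_le hx, sub_nonpos, le_max_left]
  · have hσx := norm_bisectorReflection_le hab hx
    refine mul_nonneg ?_ (sub_nonneg.2 (by gcongr))
    simp only [polarization_of_ge hx, sub_nonneg, min_le_left]

lemma integral_bisectorReflection_sub_mul {E : Type*} [NormedAddCommGroup E]
    [InnerProductSpace ℝ E] [FiniteDimensional ℝ E] [MeasurableSpace E] [BorelSpace E] {a b : E}
    {w W : E → ℝ} (hw : ∀ x, w (bisectorReflection a b x) = -w x) (hwc : Continuous w)
    (hws : HasCompactSupport w) (hW : Continuous W) :
    ∫ x, w x * (W x - W (bisectorReflection a b x)) = 2 * ∫ x, w x * W x := by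
  have hσ := (bisectorReflection a b).continuous
  have hint : Integrable fun x => w x * W x :=
    (hwc.mul hW).integrable_of_hasCompactSupport hws.mul_right
  have hint' : Integrable fun x => w x * W (bisectorReflection a b x) :=
    (hwc.mul (hW.comp hσ)).integrable_of_hasCompactSupport hws.mul_right
  have hflip : ∫ x, w x * W (bisectorReflection a b x) = -∫ x, w x * W x := by
    rw [← integral_neg, ← integral_bisectorReflection a b]
    simp only [hw, bisectorReflection_bisectorReflection, neg_mul]
  simp only [mul_sub]
  rw [integral_sub hint hint', hflip]
  ring

/-- The class of functions in which a radially nonincreasing representative of a given function is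
sought. It is stable under the polarizations that move mass towards the origin and sequentially
compact for pointwise convergence. -/
structure IsCompetitor {E : Type*} [NormedAddCommGroup E] [MeasureSpace E] (k : ℝ → ℝ≥0∞)
    (K : NNReal) (M R p : ℝ) (C I : ℝ≥0∞) (g : E → ℝ) : Prop where
  lipschitzWith : LipschitzWith K g
  mem_Icc : ∀ x, g x ∈ Set.Icc 0 M
  eq_zero_of_lt_norm : ∀ x, R < ‖x‖ → g x = 0
  nonlocalEnergy_le : nonlocalEnergy k g ≤ C
  lintegral_rpow_eq : ∫⁻ x, ‖g x‖ₑ ^ p = I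

/-- The quantity that polarization towards the origin strictly decreases, so that its minimizers are
radially nonincreasing. -/
noncomputable def secondMoment {E : Type*} [NormedAddCommGroup E] [MeasureSpace E]
    (g : E → ℝ) : ℝ :=
  ∫ x, g x * ‖x‖ ^ 2

variable {E : Type*} [NormedAddCommGroup E] [InnerProductSpace ℝ E] [FiniteDimensional ℝ E]
  [MeasurableSpace E] [BorelSpace E] {k : ℝ → ℝ≥0∞} {K : NNReal} {M R p : ℝ} {C I : ℝ≥0∞}
  {g : E → ℝ} {a b : E}

namespace IsCompetitor

lemma hasCompactSupport (hg : IsCompetitor k K M R p C I g) : HasCompactSupport g :=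
  .intro (isCompact_closedBall 0 R) fun x hx => hg.eq_zero_of_lt_norm x (by simpa using hx)

lemma secondMoment_nonneg (hg : IsCompetitor k K M R p C I g) : 0 ≤ secondMoment g :=
  integral_nonneg fun x => mul_nonneg (hg.mem_Icc x).1 (by positivity)

lemma polarization (hk : Antitone k) (hab : ‖a‖ ≤ ‖b‖) (hg : IsCompetitor k K M R p C I g) :
    IsCompetitor k K M R p C I (polarization a b g) where
  lipschitzWith := lipschitzWith_polarization hg.lipschitzWith
  mem_Icc _ := polarization_mem hg.mem_Icc
  eq_zero_of_lt_norm _ :=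
    polarization_eq_zero_of_lt_norm hab (fun x => (hg.mem_Icc x).1) hg.eq_zero_of_lt_norm
  nonlocalEnergy_le :=
    (nonlocalEnergy_polarization_le hk hg.lipschitzWith.continuous.measurable).trans
      hg.nonlocalEnergy_le
  lintegral_rpow_eq :=
    (lintegral_comp_polarization (h := fun t => ‖t‖ₑ ^ p) hg.lipschitzWith.continuous.measurable
      (by fun_prop)).trans hg.lintegral_rpow_eq

lemma secondMoment_polarization_lt (hk : Antitone k) (hab : ‖a‖ < ‖b‖) (hlt : g a < g b)
    (hg : IsCompetitor k K M R p C I g) :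
    secondMoment (_root_.polarization a b g) < secondMoment g := by
  have hpol := hg.polarization hk hab.le
  have hgc := hg.lipschitzWith.continuous
  have hpolc := hpol.lipschitzWith.continuous
  have hσ := (bisectorReflection a b).continuous
  set w : E → ℝ := fun x => g x - _root_.polarization a b g x
  have hwc : Continuous w := hgc.sub hpolc
  have hws : HasCompactSupport w := hg.hasCompactSupport.sub hpol.hasCompactSupport
  have hodd : ∀ x, w (bisectorReflection a b x) = -w x := fun x => by
    have := polarization_add_polarization_bisectorReflection (p := a) (q := b) (x := x) (u := g) id
    simp only [id] at this
    simp only [w]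
    linarith
  have hpos : 0 < w a * (‖a‖ ^ 2 - ‖bisectorReflection a b a‖ ^ 2) := by
    have hwa : w a = g a - g b := by
      simp only [w]
      rw [polarization_of_le (by simp), bisectorReflection_left, max_eq_right hlt.le]
    rw [hwa, bisectorReflection_left]
    exact mul_pos_of_neg_of_neg (sub_neg.2 hlt) (sub_neg.2 (by gcongr))
  have hint : 0 < ∫ x, w x * (‖x‖ ^ 2 - ‖bisectorReflection a b x‖ ^ 2) :=
    Continuous.integral_pos_of_hasCompactSupport_nonneg_nonzero (by fun_prop) hws.mul_right
      (sub_polarization_mul_nonneg hab.le g) hpos.ne'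
  rw [integral_bisectorReflection_sub_mul (W := fun x => ‖x‖ ^ 2) hodd hwc hws
    (by fun_prop)] at hint
  have hsub : ∫ x, w x * ‖x‖ ^ 2 = secondMoment g - secondMoment (_root_.polarization a b g) := by
    simp only [w, sub_mul]
    exact integral_sub
      (Continuous.integrable_of_hasCompactSupport (by fun_prop) hg.hasCompactSupport.mul_right)
      (Continuous.integrable_of_hasCompactSupport (by fun_prop) hpol.hasCompactSupport.mul_right)
  linarith

lemma of_tendsto {w : ℕ → E → ℝ} (hk : Antitone k) (hp : 0 < p)
    (hw : ∀ n, IsCompetitor k K M R p C I (w n))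
    (hlim : ∀ x, Tendsto (fun n => w n x) atTop (𝓝 (g x))) : IsCompetitor k K M R p C I g where
  lipschitzWith := (isClosed_setOfPred_lipschitzWith K).mem_of_tendsto (tendsto_pi_nhds.2 hlim)
    (.of_forall fun n => (hw n).lipschitzWith)
  mem_Icc x := isClosed_Icc.mem_of_tendsto (hlim x) (.of_forall fun n => (hw n).mem_Icc x)
  eq_zero_of_lt_norm x hx := tendsto_nhds_unique (hlim x) (by
    simpa only [(hw _).eq_zero_of_lt_norm x hx] using tendsto_const_nhds)
  nonlocalEnergy_le := nonlocalEnergy_le_of_tendsto hk.measurable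
    (fun n => (hw n).lipschitzWith.continuous.measurable) (fun n => (hw n).nonlocalEnergy_le) hlim
  lintegral_rpow_eq := by
    have htendsto : Tendsto (fun n => ∫⁻ x, ‖w n x‖ₑ ^ p) atTop (𝓝 (∫⁻ x, ‖g x‖ₑ ^ p)) := by
      refine tendsto_lintegral_of_dominated_convergence
        ((closedBall (0 : E) R).indicator fun _ => ENNReal.ofReal M ^ p)
        (fun n => (hw n).lipschitzWith.continuous.measurable.enorm.pow_const p)
        (fun n => .of_forall fun x => ?_) ?_
        (.of_forall fun x => ((ENNReal.continuous_rpow_const.tendsto _).comp (hlim x).enorm))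
      · by_cases hx : x ∈ closedBall (0 : E) R
        · have hgx := (hw n).mem_Icc x
          change ‖w n x‖ₑ ^ p ≤ _
          rw [Set.indicator_of_mem hx, Real.enorm_of_nonneg hgx.1]
          gcongr
          exact hgx.2
        · simp [(hw n).eq_zero_of_lt_norm x (by simpa using hx), hp]
      · rw [lintegral_indicator_const isClosed_closedBall.measurableSet]
        exact ENNReal.mul_ne_top (ENNReal.rpow_ne_top_of_nonneg hp.le ENNReal.ofReal_ne_top)
          measure_closedBall_lt_top.ne
    simpa only [(hw _).lintegral_rpow_eq, tendsto_const_nhds_iff, eq_comm] using htendsto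

lemma tendsto_secondMoment {w : ℕ → E → ℝ} (hw : ∀ n, IsCompetitor k K M R p C I (w n))
    (hlim : ∀ x, Tendsto (fun n => w n x) atTop (𝓝 (g x))) :
    Tendsto (fun n => secondMoment (w n)) atTop (𝓝 (secondMoment g)) := by
  refine tendsto_integral_of_dominated_convergence
    ((closedBall (0 : E) R).indicator fun x => M * ‖x‖ ^ 2)
    (fun n => ((hw n).lipschitzWith.continuous.mul (by fun_prop)).aestronglyMeasurable) ?_
    (fun n => .of_forall fun x => ?_) (.of_forall fun x => (hlim x).mul_const _)
  · exact (ContinuousOn.integrableOn_compact (isCompact_closedBall 0 R)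
      (by fun_prop)).integrable_indicator isClosed_closedBall.measurableSet
  · by_cases hx : x ∈ closedBall (0 : E) R
    · have hgx := (hw n).mem_Icc x
      rw [Set.indicator_of_mem hx, Real.norm_of_nonneg (mul_nonneg hgx.1 (by positivity))]
      gcongr
      exact hgx.2
    · simp [(hw n).eq_zero_of_lt_norm x (by simpa using hx), hx]

lemma exists_forall_secondMoment_le (hk : Antitone k) (hp : 0 < p)
    (hg : IsCompetitor k K M R p C I g) :
    ∃ g' : E → ℝ, IsCompetitor k K M R p C I g' ∧
      ∀ f : E → ℝ, IsCompetitor k K M R p C I f → secondMoment g' ≤ secondMoment f := by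
  set S : Set ℝ := secondMoment '' {f : E → ℝ | IsCompetitor k K M R p C I f}
  have hbdd : BddBelow S := ⟨0, by rintro _ ⟨f, hf, rfl⟩; exact secondMoment_nonneg hf⟩
  obtain ⟨m, -, hm, hmS⟩ := exists_seq_tendsto_sInf (S := S) ⟨_, g, hg, rfl⟩ hbdd
  choose f hf hfm using hmS
  obtain ⟨g', ψ, hψ, hlim⟩ := exists_subseq_tendsto_of_lipschitzWith isCompact_Icc
    (fun n => (hf n).lipschitzWith) fun n => (hf n).mem_Icc
  have hmin : secondMoment g' = sInf S := by
    refine tendsto_nhds_unique (tendsto_secondMoment (fun n => hf (ψ n)) hlim) ?_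
    simpa only [hfm, Function.comp_def] using hm.comp hψ.tendsto_atTop
  exact ⟨g', of_tendsto hk hp (fun n => hf (ψ n)) hlim,
    fun f hf => hmin.trans_le (csInf_le hbdd ⟨f, hf, rfl⟩)⟩

lemma exists_radial (hk : Antitone k) (hp : 0 < p) (hg : IsCompetitor k K M R p C I g) :
    ∃ g' : E → ℝ, IsCompetitor k K M R p C I g' ∧ ∀ x y, ‖x‖ < ‖y‖ → g' y ≤ g' x := by
  obtain ⟨g', hg', hmin⟩ := hg.exists_forall_secondMoment_le hk hp
  refine ⟨g', hg', fun x y hxy => not_lt.1 fun hlt => ?_⟩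
  exact (hmin _ (hg'.polarization hk hxy.le)).not_gt (hg'.secondMoment_polarization_lt hk hxy hlt)

end IsCompetitor

end RadialRearrangement

section MinkowskiLayerCake

variable {X : Type*} [MeasurableSpace X] {μ : Measure X} {p q : ℝ}

lemma setLIntegral_le_measure_rpow_mul_lintegral_rpow (hpq : p.HolderConjugate q) {s : Set X}
    (hs : MeasurableSet s) {f : X → ℝ≥0∞} (hf : AEMeasurable f μ) :
    ∫⁻ x in s, f x ∂μ ≤ μ s ^ (1 / p) * (∫⁻ x, f x ^ q ∂μ) ^ (1 / q) := by
  have hone : ∫⁻ x, s.indicator 1 x ^ p ∂μ = μ s := by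
    rw [← lintegral_indicator_one hs]
    congr with x
    by_cases hx : x ∈ s <;> simp [hx, hpq.pos]
  calc ∫⁻ x in s, f x ∂μ = ∫⁻ x, (s.indicator (1 : X → ℝ≥0∞) * f) x ∂μ := by
        rw [← lintegral_indicator hs]
        congr with x
        by_cases hx : x ∈ s <;> simp [hx]
    _ ≤ (∫⁻ x, s.indicator 1 x ^ p ∂μ) ^ (1 / p) * (∫⁻ x, f x ^ q ∂μ) ^ (1 / q) :=
        ENNReal.lintegral_mul_le_Lp_mul_Lq μ hpq (aemeasurable_one.indicator hs) hf
    _ = _ := by rw [hone]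

-- The layer cake formula for the measure `f ^ (p - 1) μ`, whose superlevel sets are controlled by
-- Hölder's inequality, replaces the duality argument.
lemma lintegral_rpow_rpow_le_lintegral_measure_lt (hpq : p.HolderConjugate q) {f : X → ℝ}
    (hf : Measurable f) (hf0 : ∀ x, 0 ≤ f x) (hfin : ∫⁻ x, ‖f x‖ₑ ^ p ∂μ ≠ ⊤) :
    (∫⁻ x, ‖f x‖ₑ ^ p ∂μ) ^ (1 / p) ≤ ∫⁻ t in Set.Ioi (0 : ℝ), μ {x | t < f x} ^ (1 / p) := by
  set J := ∫⁻ x, ‖f x‖ₑ ^ p ∂μ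
  rcases eq_or_ne J 0 with hJ | hJ
  · simp [hJ, hpq.pos]
  have hJq : J ^ (1 / q) ≠ 0 ∧ J ^ (1 / q) ≠ ⊤ := by simp [hJ, hfin]
  set ν := μ.withDensity fun x => ‖f x‖ₑ ^ (p - 1)
  have hνf : ∫⁻ x, ENNReal.ofReal (f x) ∂ν = J := by
    rw [lintegral_withDensity_eq_lintegral_mul _ (by fun_prop) (by fun_prop)]
    refine lintegral_congr fun x => ?_
    rw [Pi.mul_apply, ← Real.enorm_of_nonneg (hf0 x)]
    nth_rw 2 [← ENNReal.rpow_one ‖f x‖ₑ]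
    rw [← ENNReal.rpow_add_of_nonneg _ _ hpq.sub_one_pos.le zero_le_one, sub_add_cancel]
  have hν : ∀ t, ν {x | t < f x} ≤ μ {x | t < f x} ^ (1 / p) * J ^ (1 / q) := fun t => by
    have ht : MeasurableSet {x | t < f x} := measurableSet_lt measurable_const hf
    rw [withDensity_apply _ ht]
    refine (setLIntegral_le_measure_rpow_mul_lintegral_rpow hpq ht (by fun_prop)).trans_eq ?_
    simp only [← ENNReal.rpow_mul, hpq.sub_one_mul_conj, J]
  have hmul : J ≤ (∫⁻ t in Set.Ioi (0 : ℝ), μ {x | t < f x} ^ (1 / p)) * J ^ (1 / q) := by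
    rw [← lintegral_mul_const' _ _ hJq.2]
    conv_lhs => rw [← hνf, lintegral_eq_lintegral_meas_lt ν (.of_forall hf0) hf.aemeasurable]
    exact lintegral_mono hν
  have hsplit : J = J ^ (1 / p) * J ^ (1 / q) := by
    rw [← ENNReal.rpow_add _ _ hJ hfin, one_div, one_div, hpq.inv_add_inv_eq_one,
      ENNReal.rpow_one]
  exact (ENNReal.mul_le_mul_iff_left hJq.1 hJq.2).1 (hsplit.symm.trans_le hmul)

end MinkowskiLayerCake

section Mollification

open scoped Convolution

variable {E : Type*} [NormedAddCommGroup E] [InnerProductSpace ℝ E] [FiniteDimensional ℝ E]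
  [MeasurableSpace E] [BorelSpace E] {k : ℝ → ℝ≥0∞} {u : E → ℝ}

lemma nonlocalEnergy_comp_sub (u : E → ℝ) (t : E) :
    nonlocalEnergy k (fun x => u (x - t)) = nonlocalEnergy k u := by
  have hinner : ∀ x, ∫⁻ y, ‖u (x - t) - u (y - t)‖ₑ * k (dist x y) =
      ∫⁻ y, ‖u (x - t) - u y‖ₑ * k (dist (x - t) y) := fun x => by
    rw [← lintegral_sub_right_eq_self (fun y => ‖u (x - t) - u y‖ₑ * k (dist (x - t) y)) t]
    simp only [dist_sub_right]
  simp only [nonlocalEnergy, hinner]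
  exact lintegral_sub_right_eq_self (fun x => ∫⁻ y, ‖u x - u y‖ₑ * k (dist x y)) t

lemma nonlocalEnergy_convolution_le {η : E → ℝ} (hk : Measurable k)
    (hη : Measurable η) (hu : Measurable u)
    (hηu : ConvolutionExists η u (ContinuousLinearMap.lsmul ℝ ℝ)) :
    nonlocalEnergy k (η ⋆[ContinuousLinearMap.lsmul ℝ ℝ] u) ≤
      (∫⁻ t, ‖η t‖ₑ) * nonlocalEnergy k u := by
  have hbound : ∀ x y, ‖(η ⋆[ContinuousLinearMap.lsmul ℝ ℝ] u) x -
      (η ⋆[ContinuousLinearMap.lsmul ℝ ℝ] u) y‖ₑ ≤ ∫⁻ t, ‖η t‖ₑ * ‖u (x - t) - u (y - t)‖ₑ :=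
    fun x y => by
      rw [convolution_def, convolution_def, ← integral_sub (hηu x) (hηu y)]
      refine (enorm_integral_le_lintegral_enorm _).trans_eq (lintegral_congr fun t => ?_)
      rw [← map_sub, ContinuousLinearMap.lsmul_apply, enorm_smul]
  calc nonlocalEnergy k (η ⋆[ContinuousLinearMap.lsmul ℝ ℝ] u)
      ≤ ∫⁻ x, ∫⁻ y, ∫⁻ t, ‖η t‖ₑ * ‖u (x - t) - u (y - t)‖ₑ * k (dist x y) := by
        refine lintegral_mono fun x => lintegral_mono fun y => ?_
        rw [lintegral_mul_const _ (by fun_prop)]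
        gcongr
        exact hbound x y
    _ = ∫⁻ z : E × E, ∫⁻ t, ‖η t‖ₑ * ‖u (z.1 - t) - u (z.2 - t)‖ₑ * k (dist z.1 z.2) := by
        rw [Measure.volume_eq_prod, lintegral_prod]
        exact (Measurable.lintegral_prod_right' (f := fun w : (E × E) × E =>
          ‖η w.2‖ₑ * ‖u (w.1.1 - w.2) - u (w.1.2 - w.2)‖ₑ * k (dist w.1.1 w.1.2))
          (by fun_prop)).aemeasurable
    _ = ∫⁻ t, ∫⁻ z : E × E, ‖η t‖ₑ * ‖u (z.1 - t) - u (z.2 - t)‖ₑ * k (dist z.1 z.2) :=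
        lintegral_lintegral_swap (by fun_prop)
    _ = ∫⁻ t, ‖η t‖ₑ * nonlocalEnergy k u := by
        refine lintegral_congr fun t => ?_
        simp only [mul_assoc]
        rw [lintegral_const_mul' _ _ enorm_ne_top, ← nonlocalEnergy_comp_sub u t,
          nonlocalEnergy_eq_lintegral_prod hk (by fun_prop)]
    _ = (∫⁻ t, ‖η t‖ₑ) * nonlocalEnergy k u := lintegral_mul_const _ (by fun_prop)

lemma exists_lipschitzWith_tendsto_ae_of_nonlocalEnergy_le (hk : Measurable k) (hu : Measurable u)
    (hui : Integrable u) (hus : HasCompactSupport u) :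
    ∃ φ : ℕ → E → ℝ, (∀ n, ∃ K, LipschitzWith K (φ n)) ∧ (∀ n, HasCompactSupport (φ n)) ∧
      (∀ n, nonlocalEnergy k (φ n) ≤ nonlocalEnergy k u) ∧
      ∀ᵐ x, Tendsto (fun n => φ n x) atTop (𝓝 (u x)) := by
  let b : ℕ → ContDiffBump (0 : E) := fun n =>
    { rIn := 1 / (2 * (n + 1)), rOut := 1 / (n + 1), rIn_pos := by positivity,
      rIn_lt_rOut := one_div_lt_one_div_of_lt (by positivity) (by linarith) }
  have hb : ∀ n, HasCompactSupport ((b n).normed volume) := fun n => (b n).hasCompactSupport_normed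
  have hsupp : ∀ n, HasCompactSupport
      ((b n).normed volume ⋆[ContinuousLinearMap.lsmul ℝ ℝ] u) := fun n => (hb n).convolution _ hus
  refine ⟨fun n => (b n).normed volume ⋆[ContinuousLinearMap.lsmul ℝ ℝ] u, fun n => ?_, hsupp,
    fun n => ?_, ?_⟩
  · exact ContDiff.lipschitzWith_of_hasCompactSupport (hsupp n)
      ((hb n).contDiff_convolution_left _ (n := 1) (b n).contDiff_normed hui.locallyIntegrable)
      one_ne_zero
  · have hmass : ∫⁻ t, ‖(b n).normed volume t‖ₑ = 1 := by
      rw [← ofReal_integral_norm_eq_lintegral_enorm (b n).integrable_normed]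
      simp only [Real.norm_of_nonneg ((b n).nonneg_normed _), (b n).integral_normed,
        ENNReal.ofReal_one]
    simpa only [hmass, one_mul] using nonlocalEnergy_convolution_le hk
      (b n).continuous_normed.measurable hu ((hb n).convolutionExists_left _
        (b n).continuous_normed hui.locallyIntegrable)
  · refine ContDiffBump.ae_convolution_tendsto_right_of_locallyIntegrable (K := 2)
      tendsto_one_div_add_atTop_nhds_zero_nat (.of_forall fun n => ?_) hui.locallyIntegrable
    exact le_of_eq (by simp only [b]; field_simp)

end Mollification

section FractionalKernel

open Module (finrank)

/-- The interaction kernel `t ↦ t ^ (-(dim E + s))` of the Gagliardo seminorm `W^{s,1}` on `E`. -/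
noncomputable def fractionalKernel (E : Type*) [AddCommGroup E] [Module ℝ E] (s t : ℝ) : ℝ≥0∞ :=
  ENNReal.ofReal t ^ (-(finrank ℝ E + s))

section Kernel

variable {E : Type*} [AddCommGroup E] [Module ℝ E] {ρ s t : ℝ}

lemma antitone_fractionalKernel (hs : 0 ≤ s) : Antitone (fractionalKernel E s) := fun t₁ t₂ h => by
  have : 0 ≤ finrank ℝ E + s := by positivity
  simp only [fractionalKernel, ENNReal.rpow_neg]
  gcongr

@[fun_prop]
lemma measurable_fractionalKernel : Measurable (fractionalKernel E s) :=
  ENNReal.measurable_ofReal.pow_const _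

lemma fractionalKernel_ne_zero (hs : 0 ≤ s) : fractionalKernel E s t ≠ 0 := by
  have : 0 ≤ finrank ℝ E + s := by positivity
  rw [fractionalKernel, Ne, ENNReal.rpow_eq_zero_iff]
  rintro (⟨-, h⟩ | ⟨h, -⟩)
  · exact h.not_ge (neg_nonpos.2 this)
  · exact ENNReal.ofReal_ne_top h

lemma fractionalKernel_of_pos (ht : 0 < t) :
    fractionalKernel E s t = ENNReal.ofReal (t ^ (-(finrank ℝ E + s))) :=
  ENNReal.ofReal_rpow_of_pos ht

lemma fractionalKernel_mul (hρ : 0 < ρ) : fractionalKernel E s (ρ * t) =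
    ENNReal.ofReal ρ ^ (-(finrank ℝ E + s)) * fractionalKernel E s t := by
  rw [fractionalKernel, ENNReal.ofReal_mul hρ.le,
    ENNReal.mul_rpow_of_ne_top ENNReal.ofReal_ne_top ENNReal.ofReal_ne_top, fractionalKernel]

end Kernel

section Finiteness

variable {E : Type*} [NormedAddCommGroup E] [InnerProductSpace ℝ E] [FiniteDimensional ℝ E]
  [MeasurableSpace E] [BorelSpace E] {k : ℝ → ℝ≥0∞} {u : E → ℝ} {s : ℝ}

lemma lintegral_lintegral_mul_comp_sub {f H : E → ℝ≥0∞} (hf : Measurable f) (hH : Measurable H) :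
    ∫⁻ x, ∫⁻ y, f x * H (x - y) = (∫⁻ x, f x) * ∫⁻ x, H x := by
  rw [← lintegral_mul_const _ hf]
  refine lintegral_congr fun x => ?_
  rw [lintegral_const_mul _ (by fun_prop), lintegral_sub_left_eq_self H x]

lemma lintegral_lintegral_mul_comp_sub' {f H : E → ℝ≥0∞} (hf : Measurable f) (hH : Measurable H) :
    ∫⁻ x, ∫⁻ y, f y * H (x - y) = (∫⁻ x, f x) * ∫⁻ x, H x := by
  rw [lintegral_lintegral_swap (by fun_prop), ← lintegral_mul_const _ hf]
  refine lintegral_congr fun y => ?_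
  rw [lintegral_const_mul _ (by fun_prop), lintegral_sub_right_eq_self H y]

lemma abs_sub_le_max_mul_min {X : Type*} [PseudoMetricSpace X] {u : X → ℝ} {K : NNReal} {M : ℝ}
    (hu : LipschitzWith K u) (hM : ∀ x, ‖u x‖ ≤ M) (x y : X) :
    |u x - u y| ≤ max (K : ℝ) (2 * M) * min (dist x y) 1 := by
  rw [mul_min_of_nonneg _ _ (le_max_of_le_left K.coe_nonneg), mul_one]
  refine le_min ?_ ?_
  · exact (hu.dist_le_mul x y).trans (by gcongr; exact le_max_left _ _)
  · exact (norm_sub_le_of_le (hM x) (hM y)).trans (by rw [← two_mul]; exact le_max_right _ _)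

lemma nonlocalEnergy_ne_top {K : NNReal} (hk : Measurable k)
    (hkint : ∫⁻ x : E, ENNReal.ofReal (min ‖x‖ 1) * k ‖x‖ ≠ ⊤) (hu : LipschitzWith K u)
    (hus : HasCompactSupport u) : nonlocalEnergy k u ≠ ⊤ := by
  obtain ⟨M, hM⟩ := hus.exists_bound_of_continuous hu.continuous
  set C := max (K : ℝ) (2 * M)
  set S := tsupport u
  set H : E → ℝ≥0∞ := fun x => ENNReal.ofReal C * (ENNReal.ofReal (min ‖x‖ 1) * k ‖x‖)
  have hC : 0 ≤ C := le_max_of_le_left K.coe_nonneg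
  have hSm : MeasurableSet S := (isClosed_tsupport u).measurableSet
  have hind : Measurable (S.indicator (1 : E → ℝ≥0∞)) := measurable_one.indicator hSm
  have hHm : Measurable H := by fun_prop
  have hbound : ∀ x y, ‖u x - u y‖ₑ * k (dist x y) ≤
      S.indicator 1 x * H (x - y) + S.indicator 1 y * H (x - y) := fun x y => by
    have hH : ‖u x - u y‖ₑ * k (dist x y) ≤ H (x - y) := by
      simp only [H]
      rw [← dist_eq_norm, ← mul_assoc, ← ENNReal.ofReal_mul hC, Real.enorm_eq_ofReal_abs]
      gcongr
      exact abs_sub_le_max_mul_min hu hM x y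
    by_cases hx : x ∈ S
    · simpa only [Set.indicator_of_mem hx, Pi.one_apply, one_mul] using le_add_right hH
    · by_cases hy : y ∈ S
      · simpa only [Set.indicator_of_mem hy, Pi.one_apply, one_mul] using le_add_left hH
      · simp [image_eq_zero_of_notMem_tsupport hx, image_eq_zero_of_notMem_tsupport hy]
  have hfin : volume S * ∫⁻ x, H x ≠ ⊤ := by
    rw [lintegral_const_mul _ (by fun_prop)]
    exact ENNReal.mul_ne_top hus.isCompact.measure_lt_top.ne
      (ENNReal.mul_ne_top ENNReal.ofReal_ne_top hkint)
  refine ne_top_of_le_ne_top (ENNReal.add_ne_top.2 ⟨hfin, hfin⟩) ?_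
  calc nonlocalEnergy k u
      ≤ ∫⁻ x, ∫⁻ y, (S.indicator 1 x * H (x - y) + S.indicator 1 y * H (x - y)) :=
        lintegral_mono fun x => lintegral_mono fun y => hbound x y
    _ = (∫⁻ x, ∫⁻ y, S.indicator 1 x * H (x - y)) +
          ∫⁻ x, ∫⁻ y, S.indicator 1 y * H (x - y) := by
        rw [← lintegral_add_left (by fun_prop)]
        exact lintegral_congr fun x => lintegral_add_left (by fun_prop) _
    _ = volume S * (∫⁻ x, H x) + volume S * ∫⁻ x, H x := by
        rw [lintegral_lintegral_mul_comp_sub hind hHm, lintegral_lintegral_mul_comp_sub' hind hHm,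
          lintegral_indicator_one hSm]

lemma integrable_min_norm_one_mul_norm_rpow [Nontrivial E] (hs0 : 0 < s) (hs1 : s < 1) :
    Integrable fun x : E => min ‖x‖ 1 * ‖x‖ ^ (-(finrank ℝ E + s)) := by
  rw [← integrableOn_univ, ← Set.union_compl_self (ball (0 : E) 1)]
  have hmeas : Measurable fun x : E => min ‖x‖ 1 * ‖x‖ ^ (-(finrank ℝ E + s)) := by fun_prop
  refine IntegrableOn.union ?_ ?_
  · refine integrableOn_ball_of_norm_le_rpow (C := 1) (α := finrank ℝ E + s - 1)
      Module.finrank_pos (by linarith) (.of_forall fun x => ?_) hmeas.aestronglyMeasurable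
    rw [Real.norm_of_nonneg (by positivity), one_mul]
    rcases eq_or_ne x 0 with rfl | hx
    · simpa using Real.rpow_nonneg le_rfl _
    · calc min ‖x‖ 1 * ‖x‖ ^ (-(finrank ℝ E + s))
          ≤ ‖x‖ * ‖x‖ ^ (-(finrank ℝ E + s)) := by gcongr; exact min_le_left _ _
        _ = ‖x‖ ^ (-(finrank ℝ E + s - 1)) := by
          rw [mul_comm, ← Real.rpow_add_one (norm_ne_zero_iff.2 hx)]
          ring_nf
  · refine ((integrable_one_add_norm (μ := volume) (r := finrank ℝ E + s)
      (by linarith)).const_mul (2 ^ (finrank ℝ E + s))).integrableOn.mono'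
      hmeas.aestronglyMeasurable
      ((ae_restrict_iff' measurableSet_ball.compl).2 (.of_forall fun x hx => ?_))
    have hx1 : 1 ≤ ‖x‖ := by simpa using hx
    have hx2 : (2 * ‖x‖) ^ (-(finrank ℝ E + s)) ≤ (1 + ‖x‖) ^ (-(finrank ℝ E + s)) :=
      Real.rpow_le_rpow_of_nonpos (by positivity) (by linarith)
        (neg_nonpos.2 (add_nonneg (Nat.cast_nonneg _) hs0.le))
    calc ‖min ‖x‖ 1 * ‖x‖ ^ (-(finrank ℝ E + s))‖ = ‖x‖ ^ (-(finrank ℝ E + s)) := by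
          rw [Real.norm_of_nonneg (by positivity), min_eq_right hx1, one_mul]
      _ = 2 ^ (finrank ℝ E + s) * (2 * ‖x‖) ^ (-(finrank ℝ E + s)) := by
          rw [Real.mul_rpow zero_le_two (norm_nonneg x), ← mul_assoc, ← Real.rpow_add two_pos,
            add_neg_cancel, Real.rpow_zero, one_mul]
      _ ≤ 2 ^ (finrank ℝ E + s) * (1 + ‖x‖) ^ (-(finrank ℝ E + s)) := by gcongr

lemma lintegral_min_norm_one_mul_fractionalKernel_ne_top [Nontrivial E] (hs0 : 0 < s)
    (hs1 : s < 1) :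
    ∫⁻ x : E, ENNReal.ofReal (min ‖x‖ 1) * fractionalKernel E s ‖x‖ ≠ ⊤ := by
  have hreal (x : E) : ENNReal.ofReal (min ‖x‖ 1) * fractionalKernel E s ‖x‖ =
      ENNReal.ofReal (min ‖x‖ 1 * ‖x‖ ^ (-(finrank ℝ E + s))) := by
    rcases eq_or_ne x 0 with rfl | hx
    · simp
    · rw [fractionalKernel_of_pos (norm_pos_iff.2 hx), ENNReal.ofReal_mul (by positivity)]
  simp only [hreal]
  exact (integrable_min_norm_one_mul_norm_rpow hs0 hs1).lintegral_lt_top.ne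

lemma nonlocalEnergy_fractionalKernel_ne_top [Nontrivial E] (hs0 : 0 < s) (hs1 : s < 1)
    {K : NNReal} (hu : LipschitzWith K u) (hus : HasCompactSupport u) :
    nonlocalEnergy (fractionalKernel E s) u ≠ ⊤ :=
  nonlocalEnergy_ne_top measurable_fractionalKernel
    (lintegral_min_norm_one_mul_fractionalKernel_ne_top hs0 hs1) hu hus

end Finiteness

section PerimeterOfBalls

variable {E : Type*} [NormedAddCommGroup E] [InnerProductSpace ℝ E] [FiniteDimensional ℝ E]
  [MeasurableSpace E] [BorelSpace E] {ρ s : ℝ}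

lemma lintegral_eq_ofReal_pow_mul_lintegral_comp_smul (hρ : 0 < ρ) (f : E → ℝ≥0∞) :
    ∫⁻ x, f x = ENNReal.ofReal ρ ^ finrank ℝ E * ∫⁻ x, f (ρ • x) := by
  have hemb : MeasurableEmbedding fun x : E => ρ • x :=
    (Homeomorph.smulOfNeZero ρ hρ.ne').measurableEmbedding
  rw [← hemb.lintegral_map, Measure.map_addHaar_smul volume hρ.ne', lintegral_smul_measure,
    smul_eq_mul, ← mul_assoc, ← ENNReal.ofReal_pow hρ.le, ← ENNReal.ofReal_mul (by positivity),
    abs_of_pos (by positivity), mul_inv_cancel₀ (by positivity), ENNReal.ofReal_one, one_mul]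

lemma nonlocalEnergy_fractionalKernel_eq_mul_comp_smul (hρ : 0 < ρ) (u : E → ℝ) :
    nonlocalEnergy (fractionalKernel E s) u =
      ENNReal.ofReal ρ ^ (finrank ℝ E - s) *
        nonlocalEnergy (fractionalKernel E s) fun x => u (ρ • x) := by
  have hρ0 : ENNReal.ofReal ρ ≠ 0 := (ENNReal.ofReal_pos.2 hρ).ne'
  have hexp : ENNReal.ofReal ρ ^ (finrank ℝ E - s) = ENNReal.ofReal ρ ^ finrank ℝ E *
      (ENNReal.ofReal ρ ^ finrank ℝ E * ENNReal.ofReal ρ ^ (-(finrank ℝ E + s))) := by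
    rw [← ENNReal.rpow_natCast, ← ENNReal.rpow_add _ _ hρ0 ENNReal.ofReal_ne_top,
      ← ENNReal.rpow_add _ _ hρ0 ENNReal.ofReal_ne_top]
    ring_nf
  have hinner : ∀ x, ∫⁻ y, ‖u (ρ • x) - u y‖ₑ * fractionalKernel E s (dist (ρ • x) y) =
      ENNReal.ofReal ρ ^ finrank ℝ E * ENNReal.ofReal ρ ^ (-(finrank ℝ E + s)) *
        ∫⁻ y, ‖u (ρ • x) - u (ρ • y)‖ₑ * fractionalKernel E s (dist x y) :=
    fun x => by
      rw [lintegral_eq_ofReal_pow_mul_lintegral_comp_smul hρ, mul_assoc,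
        ← lintegral_const_mul' _ _ (ENNReal.rpow_ne_top_of_ne_zero hρ0 ENNReal.ofReal_ne_top)]
      simp only [dist_smul₀, Real.norm_of_nonneg hρ.le, fractionalKernel_mul hρ, mul_left_comm]
  rw [nonlocalEnergy, lintegral_eq_ofReal_pow_mul_lintegral_comp_smul hρ, hexp, mul_assoc]
  simp only [hinner]
  rw [lintegral_const_mul' _ _ (ENNReal.mul_ne_top (ENNReal.pow_ne_top ENNReal.ofReal_ne_top)
    (ENNReal.rpow_ne_top_of_ne_zero hρ0 ENNReal.ofReal_ne_top)), nonlocalEnergy]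

lemma nonlocalPerimeter_ball (hρ : 0 < ρ) :
    nonlocalPerimeter (fractionalKernel E s) (ball (0 : E) ρ) =
      ENNReal.ofReal ρ ^ (finrank ℝ E - s) *
        nonlocalPerimeter (fractionalKernel E s) (ball (0 : E) 1) := by
  rw [nonlocalPerimeter, nonlocalEnergy_fractionalKernel_eq_mul_comp_smul hρ, nonlocalPerimeter]
  congr 2 with x
  simp [Set.indicator, norm_smul, abs_of_pos hρ, hρ]

lemma nonlocalPerimeter_ball_one_ne_top [Nontrivial E] (hs0 : 0 < s) (hs1 : s < 1) :
    nonlocalPerimeter (fractionalKernel E s) (ball (0 : E) 1) ≠ ⊤ := by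
  set u : E → ℝ := fun x => max (1 - ‖x‖) 0
  have hu : LipschitzWith 1 u := by
    refine LipschitzWith.max_const (LipschitzWith.of_dist_le_mul fun x y => ?_) 0
    simpa only [dist_sub_left, NNReal.coe_one, one_mul, dist_eq_norm x] using
      dist_norm_norm_le x y
  have hus : HasCompactSupport u := .intro (isCompact_closedBall 0 1) fun x hx => by
    simpa [u] using (not_le.1 (by simpa using hx : ¬‖x‖ ≤ 1)).le
  have hfin := nonlocalEnergy_fractionalKernel_ne_top hs0 hs1 hu hus
  refine fun htop => hfin (top_unique ?_)
  have hlevel : ∀ t ∈ Set.Ioo (0 : ℝ) 1,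
      nonlocalPerimeter (fractionalKernel E s) {x | t < u x} = ⊤ := fun t ht => by
    have hball : {x | t < u x} = ball (0 : E) (1 - t) := by
      ext x
      simp [u, ht.1.not_gt, lt_sub_comm]
    rw [hball, nonlocalPerimeter_ball (sub_pos.2 ht.2), htop, ENNReal.mul_top]
    simp [ENNReal.rpow_eq_zero_iff, ht.2]
  calc ⊤ = ∫⁻ _ in Set.Ioo (0 : ℝ) 1, ⊤ := by simp
    _ = ∫⁻ t in Set.Ioo (0 : ℝ) 1, nonlocalPerimeter (fractionalKernel E s) {x | t < u x} :=
        (setLIntegral_congr_fun measurableSet_Ioo hlevel).symm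
    _ ≤ ∫⁻ t in Set.Ioi (0 : ℝ), nonlocalPerimeter (fractionalKernel E s) {x | t < u x} :=
        lintegral_mono_set Set.Ioo_subset_Ioi_self
    _ = nonlocalEnergy (fractionalKernel E s) u :=
        (nonlocalEnergy_eq_lintegral_nonlocalPerimeter measurable_fractionalKernel
          hu.continuous.measurable fun x => le_max_right _ _).symm

lemma nonlocalPerimeter_ne_zero {k : ℝ → ℝ≥0∞} {A : Set E} (hk : Measurable k) (hk0 : ∀ t, k t ≠ 0)
    (hA : MeasurableSet A) (hA0 : volume A ≠ 0) (hAc : volume Aᶜ ≠ 0) :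
    nonlocalPerimeter k A ≠ 0 := by
  have hu : Measurable (A.indicator fun _ => (1 : ℝ)) := measurable_const.indicator hA
  rw [nonlocalPerimeter, nonlocalEnergy_eq_lintegral_prod hk hu, ← pos_iff_ne_zero,
    lintegral_pos_iff_support (by fun_prop)]
  refine lt_of_lt_of_le ?_ (measure_mono (?_ : A ×ˢ Aᶜ ⊆ _))
  · rw [Measure.volume_eq_prod, Measure.prod_prod]
    exact ENNReal.mul_pos hA0 hAc
  · rintro ⟨x, y⟩ ⟨hx, hy⟩
    simp [hx, Set.indicator_of_notMem hy, hk0]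

lemma nonlocalPerimeter_ball_ne_zero [Nontrivial E] {k : ℝ → ℝ≥0∞} (hk : Measurable k)
    (hk0 : ∀ t, k t ≠ 0) (x : E) (hρ : 0 < ρ) : nonlocalPerimeter k (ball x ρ) ≠ 0 := by
  refine nonlocalPerimeter_ne_zero hk hk0 measurableSet_ball (measure_ball_pos volume x hρ).ne' ?_
  rw [measure_compl measurableSet_ball measure_ball_lt_top.ne, measure_univ_of_isAddLeftInvariant,
    ENNReal.top_sub measure_ball_lt_top.ne]
  exact ENNReal.top_ne_zero

end PerimeterOfBalls

section FractionalSobolev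

variable {E : Type*} [NormedAddCommGroup E] [InnerProductSpace ℝ E] [Nontrivial E] {s : ℝ}

lemma exists_eq_ball_of_isOpen {A : Set E} (hA : IsOpen A) (hb : Bornology.IsBounded A)
    (hrad : ∀ x ∈ A, ∀ y, ‖y‖ < ‖x‖ → y ∈ A) : ∃ ρ : ℝ, A = ball 0 ρ := by
  rcases A.eq_empty_or_nonempty with rfl | hne
  · exact ⟨0, by simp⟩
  set ρ := sSup (norm '' A)
  have hbdd : BddAbove (norm '' A) := hb.exists_norm_le.elim fun C hC =>
    ⟨C, Set.forall_mem_image.2 hC⟩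
  refine ⟨ρ, Set.Subset.antisymm ?_ fun y hy => ?_⟩
  · rw [← interior_closedBall' (0 : E) ρ]
    exact interior_maximal (fun x hx => mem_closedBall_zero_iff.2
      (le_csSup hbdd (Set.mem_image_of_mem _ hx))) hA
  · obtain ⟨_, ⟨x, hx, rfl⟩, hyx⟩ :=
      exists_lt_of_lt_csSup (hne.image _) (mem_ball_zero_iff.1 hy)
    exact hrad x hx y hyx

variable [FiniteDimensional ℝ E]

lemma lt_finrank_of_lt_one (hs1 : s < 1) : s < finrank ℝ E :=
  hs1.trans_le (by exact_mod_cast Module.finrank_pos (R := ℝ) (M := E))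

lemma finrank_sub_div_finrank_pos (hs1 : s < 1) : 0 < (finrank ℝ E - s) / finrank ℝ E :=
  div_pos (sub_pos.2 (lt_finrank_of_lt_one hs1))
    (by exact_mod_cast Module.finrank_pos (R := ℝ) (M := E))

lemma holderConjugate_finrank_div (hs0 : 0 < s) (hs1 : s < 1) :
    (finrank ℝ E / (finrank ℝ E - s)).HolderConjugate (finrank ℝ E / s) := by
  have hsd : 0 < finrank ℝ E - s := sub_pos.2 (lt_finrank_of_lt_one (E := E) hs1)
  have hd : (0 : ℝ) < finrank ℝ E := by exact_mod_cast Module.finrank_pos (R := ℝ) (M := E)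
  refine Real.holderConjugate_iff.2 ⟨(one_lt_div hsd).2 (by linarith), ?_⟩
  field_simp
  ring

variable [MeasurableSpace E] [BorelSpace E]

variable (E) in
/-- The optimal constant `κ` in the fractional isoperimetric inequality
`κ |A|^((d - s) / d) ≤ P_s(A)`, that is, the scale invariant isoperimetric quotient of balls. -/
noncomputable def fractionalIsoperimetricConst (s : ℝ) : ℝ≥0∞ :=
  nonlocalPerimeter (fractionalKernel E s) (ball (0 : E) 1) /
    volume (ball (0 : E) 1) ^ ((finrank ℝ E - s) / finrank ℝ E)

lemma fractionalIsoperimetricConst_ne_zero (hs0 : 0 ≤ s) :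
    fractionalIsoperimetricConst E s ≠ 0 := by
  have hB := (measure_ball_pos volume (0 : E) one_pos).ne'
  exact ENNReal.div_ne_zero.2 ⟨nonlocalPerimeter_ball_ne_zero measurable_fractionalKernel
    (fun _ => fractionalKernel_ne_zero hs0) 0 one_pos,
    ENNReal.rpow_ne_top_of_ne_zero hB measure_ball_lt_top.ne⟩

lemma fractionalIsoperimetricConst_ne_top (hs0 : 0 < s) (hs1 : s < 1) :
    fractionalIsoperimetricConst E s ≠ ⊤ := by
  refine ENNReal.div_ne_top (nonlocalPerimeter_ball_one_ne_top hs0 hs1) ?_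
  simp [ENNReal.rpow_eq_zero_iff, (measure_ball_pos volume (0 : E) one_pos).ne',
    measure_ball_lt_top.ne]

lemma fractionalIsoperimetricConst_mul_volume_ball (hs1 : s < 1) (ρ : ℝ) :
    fractionalIsoperimetricConst E s * volume (ball (0 : E) ρ) ^ ((finrank ℝ E - s) / finrank ℝ E) =
      nonlocalPerimeter (fractionalKernel E s) (ball (0 : E) ρ) := by
  have hd : (0 : ℝ) < finrank ℝ E := by exact_mod_cast Module.finrank_pos (R := ℝ) (M := E)
  have hθ := finrank_sub_div_finrank_pos (E := E) hs1
  rcases le_or_gt ρ 0 with hρ | hρ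
  · simp [ball_eq_empty.2 hρ, nonlocalPerimeter, nonlocalEnergy, hθ]
  · have h0 := (measure_ball_pos volume (0 : E) one_pos).ne'
    rw [nonlocalPerimeter_ball hρ, Measure.addHaar_ball_of_pos _ _ hρ,
      ENNReal.mul_rpow_of_nonneg _ _ hθ.le, ENNReal.ofReal_pow hρ.le,
      ← ENNReal.rpow_natCast_mul, mul_div_cancel₀ _ hd.ne', fractionalIsoperimetricConst,
      mul_left_comm, ENNReal.div_mul_cancel]
    · simp [ENNReal.rpow_eq_zero_iff, h0, measure_ball_lt_top.ne]
    · exact ENNReal.rpow_ne_top_of_ne_zero h0 measure_ball_lt_top.ne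

lemma fractionalIsoperimetricConst_mul_volume_lt_of_radial {f : E → ℝ} {t : ℝ} (hs1 : s < 1)
    (hf : Continuous f) (hfs : HasCompactSupport f) (hrad : ∀ x y, ‖x‖ < ‖y‖ → f y ≤ f x)
    (ht : 0 < t) :
    fractionalIsoperimetricConst E s * volume {x | t < f x} ^
        ((finrank ℝ E - s) / finrank ℝ E) =
      nonlocalPerimeter (fractionalKernel E s) {x | t < f x} := by
  obtain ⟨ρ, hρ⟩ := exists_eq_ball_of_isOpen (isOpen_lt continuous_const hf)
    (hfs.isBounded.subset fun x hx => subset_tsupport f (ht.trans hx).ne')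
    fun x hx y hyx => lt_of_lt_of_le hx (hrad y x hyx)
  rw [hρ, fractionalIsoperimetricConst_mul_volume_ball hs1]

lemma fractionalIsoperimetricConst_mul_lintegral_rpow_le_of_radial {f : E → ℝ} (hs0 : 0 < s)
    (hs1 : s < 1) (hf : Continuous f) (hfs : HasCompactSupport f) (hf0 : ∀ x, 0 ≤ f x)
    (hrad : ∀ x y, ‖x‖ < ‖y‖ → f y ≤ f x) :
    fractionalIsoperimetricConst E s * (∫⁻ x, ‖f x‖ₑ ^ (finrank ℝ E / (finrank ℝ E - s))) ^
      ((finrank ℝ E - s) / finrank ℝ E) ≤ nonlocalEnergy (fractionalKernel E s) f := by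
  have hpq := holderConjugate_finrank_div (E := E) hs0 hs1
  have hfin : ∫⁻ x, ‖f x‖ₑ ^ (finrank ℝ E / (finrank ℝ E - s)) ≠ ⊤ := by
    have hLp := (hf.memLp_of_hasCompactSupport (μ := volume)
      (p := ENNReal.ofReal (finrank ℝ E / (finrank ℝ E - s))) hfs).eLpNorm_lt_top
    simpa only [ENNReal.toReal_ofReal hpq.nonneg] using
      (lintegral_rpow_enorm_lt_top_of_eLpNorm_lt_top (by simpa using hpq.pos)
        ENNReal.ofReal_ne_top hLp).ne
  have hmink := lintegral_rpow_rpow_le_lintegral_measure_lt (μ := volume) hpq hf.measurable hf0 hfin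
  rw [one_div_div] at hmink
  calc _ ≤ fractionalIsoperimetricConst E s * ∫⁻ t in Set.Ioi (0 : ℝ),
        volume {x | t < f x} ^ ((finrank ℝ E - s) / finrank ℝ E) := by gcongr
    _ = ∫⁻ t in Set.Ioi (0 : ℝ), nonlocalPerimeter (fractionalKernel E s) {x | t < f x} := by
        rw [← lintegral_const_mul' _ _ (fractionalIsoperimetricConst_ne_top hs0 hs1)]
        exact setLIntegral_congr_fun measurableSet_Ioi fun t ht =>
          fractionalIsoperimetricConst_mul_volume_lt_of_radial hs1 hf hfs hrad ht
    _ = nonlocalEnergy (fractionalKernel E s) f :=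
        (nonlocalEnergy_eq_lintegral_nonlocalPerimeter measurable_fractionalKernel
          hf.measurable hf0).symm

lemma fractionalIsoperimetricConst_mul_lintegral_rpow_le_of_lipschitzWith {u : E → ℝ}
    {K : NNReal} (hs0 : 0 < s) (hs1 : s < 1) (hu : LipschitzWith K u)
    (hus : HasCompactSupport u) :
    fractionalIsoperimetricConst E s * (∫⁻ x, ‖u x‖ₑ ^ (finrank ℝ E / (finrank ℝ E - s))) ^
      ((finrank ℝ E - s) / finrank ℝ E) ≤ nonlocalEnergy (fractionalKernel E s) u := by
  have hp := (holderConjugate_finrank_div (E := E) hs0 hs1).pos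
  obtain ⟨M, hM⟩ := hus.exists_bound_of_continuous hu.continuous
  obtain ⟨R, hR⟩ := hus.isBounded.exists_norm_le
  have hcomp : IsCompetitor (fractionalKernel E s) K M R
      (finrank ℝ E / (finrank ℝ E - s)) (nonlocalEnergy (fractionalKernel E s) u)
      (∫⁻ x, ‖u x‖ₑ ^ (finrank ℝ E / (finrank ℝ E - s))) fun x => |u x| :=
    { lipschitzWith := by
        simpa only [one_mul, Function.comp_def, Real.norm_eq_abs] using
          lipschitzWith_one_norm.comp hu
      mem_Icc := fun x => ⟨abs_nonneg _, hM x⟩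
      eq_zero_of_lt_norm := fun x hx => abs_eq_zero.2 <| by_contra fun h =>
        hx.not_ge (hR x (subset_tsupport u h))
      nonlocalEnergy_le := nonlocalEnergy_mono fun x y => abs_abs_sub_abs_le _ _
      lintegral_rpow_eq := by simp only [← Real.norm_eq_abs, enorm_norm] }
  obtain ⟨g, hg, hrad⟩ := hcomp.exists_radial (antitone_fractionalKernel hs0.le) hp
  calc _ = _ := by rw [hg.lintegral_rpow_eq]
    _ ≤ nonlocalEnergy (fractionalKernel E s) g :=
        fractionalIsoperimetricConst_mul_lintegral_rpow_le_of_radial hs0 hs1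
          hg.lipschitzWith.continuous hg.hasCompactSupport (fun x => (hg.mem_Icc x).1) hrad
    _ ≤ nonlocalEnergy (fractionalKernel E s) u := hg.nonlocalEnergy_le

lemma fractionalIsoperimetricConst_mul_lintegral_rpow_le {u : E → ℝ} (hs0 : 0 < s) (hs1 : s < 1)
    (hu : Measurable u) (hui : Integrable u) (hus : HasCompactSupport u) :
    fractionalIsoperimetricConst E s * (∫⁻ x, ‖u x‖ₑ ^ (finrank ℝ E / (finrank ℝ E - s))) ^
      ((finrank ℝ E - s) / finrank ℝ E) ≤ nonlocalEnergy (fractionalKernel E s) u := by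
  have hpq := holderConjugate_finrank_div (E := E) hs0 hs1
  have hκ0 := fractionalIsoperimetricConst_ne_zero (E := E) hs0.le
  have hκt := fractionalIsoperimetricConst_ne_top (E := E) hs0 hs1
  have hiff : ∀ a : ℝ≥0∞, fractionalIsoperimetricConst E s * a ^
      ((finrank ℝ E - s) / finrank ℝ E) ≤ nonlocalEnergy (fractionalKernel E s) u ↔
      a ≤ (nonlocalEnergy (fractionalKernel E s) u / fractionalIsoperimetricConst E s) ^
        (finrank ℝ E / (finrank ℝ E - s)) := fun a => by
    rw [← inv_div (finrank ℝ E : ℝ), ← ENNReal.rpow_inv_le_iff hpq.pos,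
      ENNReal.le_div_iff_mul_le (.inl hκ0) (.inl hκt), mul_comm]
  obtain ⟨φ, hφ, hφs, hφE, hlim⟩ := exists_lipschitzWith_tendsto_ae_of_nonlocalEnergy_le
    (measurable_fractionalKernel (E := E) (s := s)) hu hui hus
  choose K hK using hφ
  rw [hiff]
  calc ∫⁻ x, ‖u x‖ₑ ^ (finrank ℝ E / (finrank ℝ E - s))
      = ∫⁻ x, liminf (fun n => ‖φ n x‖ₑ ^ (finrank ℝ E / (finrank ℝ E - s))) atTop := by
        refine lintegral_congr_ae (hlim.mono fun x hx => ?_)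
        exact ((ENNReal.continuous_rpow_const.tendsto _).comp hx.enorm).liminf_eq.symm
    _ ≤ liminf (fun n => ∫⁻ x, ‖φ n x‖ₑ ^ (finrank ℝ E / (finrank ℝ E - s))) atTop :=
        lintegral_liminf_le fun n => (hK n).continuous.measurable.enorm.pow_const _
    _ ≤ _ := (liminf_le_liminf (.of_forall fun n => (hiff _).1
        ((fractionalIsoperimetricConst_mul_lintegral_rpow_le_of_lipschitzWith hs0 hs1 (hK n)
          (hφs n)).trans (hφE n)))).trans_eq (liminf_const _)

lemma fractionalIsoperimetricConst_mul_volume_rpow_le {A : Set E} (hs0 : 0 < s) (hs1 : s < 1)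
    (hA : MeasurableSet A) (hb : Bornology.IsBounded A) :
    fractionalIsoperimetricConst E s * volume A ^ ((finrank ℝ E - s) / finrank ℝ E) ≤
      nonlocalPerimeter (fractionalKernel E s) A := by
  have hpow : ∫⁻ x, ‖A.indicator (fun _ => (1 : ℝ)) x‖ₑ ^ (finrank ℝ E / (finrank ℝ E - s)) =
      volume A := by
    have hp := (holderConjugate_finrank_div (E := E) hs0 hs1).pos
    rw [← lintegral_indicator_one hA]
    refine lintegral_congr fun x => ?_
    by_cases hx : x ∈ A <;> simp [hx, hp]
  rw [← hpow]
  exact fractionalIsoperimetricConst_mul_lintegral_rpow_le hs0 hs1 (measurable_const.indicator hA)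
    ((integrable_indicator_iff hA).2 (integrableOn_const hb.measure_lt_top.ne))
    (.of_support_subset_isCompact hb.isCompact_closure
      (Set.support_indicator_subset.trans subset_closure))

lemma fractionalIsoperimetricConst_mul_setLIntegral_le {u : E → ℝ} {A : Set E} (hs0 : 0 < s)
    (hs1 : s < 1) (hA : MeasurableSet A) (hu : Measurable u) (hui : Integrable u)
    (hus : HasCompactSupport u) :
    fractionalIsoperimetricConst E s * ∫⁻ x in A, ‖u x‖ₑ ≤
      volume A ^ (s / finrank ℝ E) * nonlocalEnergy (fractionalKernel E s) u := by
  have hpq := (holderConjugate_finrank_div (E := E) hs0 hs1).symm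
  have hholder := setLIntegral_le_measure_rpow_mul_lintegral_rpow (μ := volume) hpq hA
    (f := fun x => ‖u x‖ₑ) hu.enorm.aemeasurable
  rw [one_div_div, one_div_div] at hholder
  refine (mul_le_mul_right hholder _).trans ?_
  rw [mul_left_comm]
  gcongr
  exact fractionalIsoperimetricConst_mul_lintegral_rpow_le hs0 hs1 hu hui hus

end FractionalSobolev

section Cheeger

lemma eq_and_eq_of_rpow_mul_le {θ : ℝ} {a b m : ℝ≥0∞} (hθ0 : 0 < θ) (hθ1 : θ < 1)
    (ha0 : a ≠ 0) (ha : a ≠ ⊤) (hb0 : b ≠ 0) (hb : b ≠ ⊤) (hma : m ≤ a) (hmb : m ≤ b)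
    (h : a ^ θ * b ≤ b ^ θ * m) : m = a ∧ m = b := by
  have hbθ0 : b ^ θ ≠ 0 := by simp [ENNReal.rpow_eq_zero_iff, hb0, hb]
  have hbθ : b ^ θ ≠ ⊤ := ENNReal.rpow_ne_top_of_ne_zero hb0 hb
  have hab : a ≤ b := (ENNReal.rpow_le_rpow_iff hθ0).1 <|
    (ENNReal.mul_le_mul_iff_left hb0 hb).1 (h.trans (by gcongr))
  have hba : b ≤ a := by
    have hsplit : ∀ c : ℝ≥0∞, c ≠ 0 → c ≠ ⊤ → c ^ θ * c ^ (1 - θ) = c := fun c hc0 hc => by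
      rw [← ENNReal.rpow_add _ _ hc0 hc, add_sub_cancel, ENNReal.rpow_one]
    refine (ENNReal.rpow_le_rpow_iff (sub_pos.2 hθ1)).1 <|
      (ENNReal.mul_le_mul_iff_right (a := a ^ θ * b ^ θ) ?_ ?_).1 ?_
    · exact mul_ne_zero (by simp [ENNReal.rpow_eq_zero_iff, ha0, ha]) hbθ0
    · exact ENNReal.mul_ne_top (ENNReal.rpow_ne_top_of_ne_zero ha0 ha) hbθ
    · calc a ^ θ * b ^ θ * b ^ (1 - θ) = a ^ θ * b := by rw [mul_assoc, hsplit b hb0 hb]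
        _ ≤ b ^ θ * a := h.trans (by gcongr)
        _ = a ^ θ * b ^ θ * a ^ (1 - θ) := by rw [mul_right_comm, hsplit a ha0 ha, mul_comm]
  obtain rfl : a = b := le_antisymm hab hba
  have ham : a ≤ m := (ENNReal.mul_le_mul_iff_right hbθ0 hbθ).1 h
  exact ⟨le_antisymm hma ham, le_antisymm hmb ham⟩

lemma subset_closure_of_ae_le {X : Type*} [TopologicalSpace X] [MeasurableSpace X]
    {μ : Measure X} [μ.IsOpenPosMeasure] {U V : Set X} (hU : IsOpen U) (h : U ≤ᵐ[μ] V) :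
    U ⊆ closure V := by
  rw [← Set.sdiff_eq_empty, ← (hU.sdiff isClosed_closure).measure_eq_zero_iff μ]
  exact measure_mono_null (Set.sdiff_subset_sdiff_right subset_closure) (ae_le_set.1 h)

lemma eq_of_isOpen_of_ae_eq {X : Type*} [TopologicalSpace X] [MeasurableSpace X]
    {μ : Measure X} [μ.IsOpenPosMeasure] {U V : Set X} (hU : IsOpen U) (hV : IsOpen V)
    (hU' : interior (closure U) ⊆ U) (hV' : interior (closure V) ⊆ V) (h : U =ᵐ[μ] V) : U = V :=
  Set.Subset.antisymm
    ((interior_maximal (subset_closure_of_ae_le hU h.le) hU).trans hV')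
    ((interior_maximal (subset_closure_of_ae_le hV h.symm.le) hV).trans hU')

lemma interior_closure_setOf_lt_zero_subset {E : Type*} [NormedAddCommGroup E] [NormedSpace ℝ E]
    {f : E → ℝ} (hf : Continuous f) (hreg : ∀ x, f x = 0 → fderiv ℝ f x ≠ 0) :
    interior (closure {x | f x < 0}) ⊆ {x | f x < 0} := by
  intro x hx
  have hle : ∀ᶠ y in 𝓝 x, f y ≤ 0 := by
    filter_upwards [mem_interior_iff_mem_nhds.1 hx] with y hy
    exact closure_minimal (fun z (hz : f z < 0) => hz.le) (isClosed_le hf continuous_const) hy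
  refine lt_of_le_of_ne hle.self_of_nhds fun h0 => hreg x h0 (IsLocalMax.fderiv_eq_zero ?_)
  exact hle.mono fun y hy => hy.trans_eq h0.symm

variable {E : Type*} [NormedAddCommGroup E] [InnerProductSpace ℝ E] [FiniteDimensional ℝ E]
  [Nontrivial E] [MeasurableSpace E] [BorelSpace E] {s r ρ : ℝ}

lemma nonlocalPerimeter_ball_mul_setLIntegral_le {u : E → ℝ} (hs0 : 0 < s) (hs1 : s < 1)
    (hr : 0 < r) (hu : Measurable u) (hui : Integrable u) (hus : HasCompactSupport u) :
    nonlocalPerimeter (fractionalKernel E s) (ball (0 : E) r) * ∫⁻ x in ball 0 r, ‖u x‖ₑ ≤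
      volume (ball (0 : E) r) * nonlocalEnergy (fractionalKernel E s) u := by
  have hd : (0 : ℝ) < finrank ℝ E := by exact_mod_cast Module.finrank_pos (R := ℝ) (M := E)
  have hB : volume (ball (0 : E) r) = volume (ball (0 : E) r) ^ ((finrank ℝ E - s) / finrank ℝ E) *
      volume (ball (0 : E) r) ^ (s / finrank ℝ E) := by
    rw [← ENNReal.rpow_add _ _ (measure_ball_pos volume _ hr).ne' measure_ball_lt_top.ne,
      ← add_div, sub_add_cancel, div_self hd.ne', ENNReal.rpow_one]
  conv_rhs => rw [hB]
  rw [← fractionalIsoperimetricConst_mul_volume_ball hs1, mul_right_comm, mul_comm _ (_ ^ _),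
    mul_assoc (_ ^ _)]
  exact mul_le_mul_right
    (fractionalIsoperimetricConst_mul_setLIntegral_le hs0 hs1 measurableSet_ball hu hui hus) _

lemma ae_eq_ball_of_nonlocalPerimeter_mul_le {A : Set E} (hs0 : 0 < s) (hs1 : s < 1) (hr : 0 < r)
    (hA : MeasurableSet A) (hb : Bornology.IsBounded A) (hA0 : volume A ≠ 0)
    (h : nonlocalPerimeter (fractionalKernel E s) A * volume (ball (0 : E) r) ≤
      nonlocalPerimeter (fractionalKernel E s) (ball (0 : E) r) * volume (A ∩ ball 0 r)) :
    A =ᵐ[volume] ball (0 : E) r := by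
  have hd : (0 : ℝ) < finrank ℝ E := by exact_mod_cast Module.finrank_pos (R := ℝ) (M := E)
  have hAt : volume A ≠ ⊤ := hb.measure_lt_top.ne
  have hpow : volume A ^ ((finrank ℝ E - s) / finrank ℝ E) * volume (ball (0 : E) r) ≤
      volume (ball (0 : E) r) ^ ((finrank ℝ E - s) / finrank ℝ E) * volume (A ∩ ball 0 r) := by
    rw [← ENNReal.mul_le_mul_iff_right (fractionalIsoperimetricConst_ne_zero (E := E) hs0.le)
      (fractionalIsoperimetricConst_ne_top (E := E) hs0 hs1), ← mul_assoc, ← mul_assoc,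
      fractionalIsoperimetricConst_mul_volume_ball hs1]
    refine le_trans ?_ h
    gcongr
    exact fractionalIsoperimetricConst_mul_volume_rpow_le hs0 hs1 hA hb
  obtain ⟨hmA, hmB⟩ := eq_and_eq_of_rpow_mul_le (finrank_sub_div_finrank_pos hs1)
    ((div_lt_one hd).2 (by linarith)) hA0 hAt (measure_ball_pos volume _ hr).ne'
    measure_ball_lt_top.ne (measure_mono Set.inter_subset_left)
    (measure_mono Set.inter_subset_right) hpow
  have hm : NullMeasurableSet (A ∩ ball 0 r) volume :=
    (hA.inter measurableSet_ball).nullMeasurableSet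
  exact (ae_eq_of_subset_of_measure_ge Set.inter_subset_left hmA.ge hm hAt).symm.trans
    (ae_eq_of_subset_of_measure_ge Set.inter_subset_right hmB.ge hm measure_ball_lt_top.ne)

lemma nonlocalPerimeter_ball_ne_top (hs0 : 0 < s) (hs1 : s < 1) :
    nonlocalPerimeter (fractionalKernel E s) (ball (0 : E) r) ≠ ⊤ := by
  rw [← fractionalIsoperimetricConst_mul_volume_ball hs1]
  exact ENNReal.mul_ne_top (fractionalIsoperimetricConst_ne_top hs0 hs1)
    (ENNReal.rpow_ne_top_of_nonneg (finrank_sub_div_finrank_pos hs1).le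
      measure_ball_lt_top.ne)

lemma nonlocalEnergy_le_nonlocalPerimeter_ball_of_radial {f : E → ℝ} (hs1 : s < 1)
    (hf : Continuous f) (hfr : tsupport f ⊆ ball 0 r) (hf01 : ∀ x, f x ∈ Set.Icc 0 1)
    (hrad : ∀ x y, ‖x‖ < ‖y‖ → f y ≤ f x) :
    nonlocalEnergy (fractionalKernel E s) f ≤
      nonlocalPerimeter (fractionalKernel E s) (ball (0 : E) r) := by
  have hfs : HasCompactSupport f :=
    (isCompact_closedBall 0 r).of_isClosed_subset (isClosed_tsupport f)
      (hfr.trans ball_subset_closedBall)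
  rw [nonlocalEnergy_eq_lintegral_nonlocalPerimeter measurable_fractionalKernel hf.measurable
    fun x => (hf01 x).1]
  calc ∫⁻ t in Set.Ioi (0 : ℝ), nonlocalPerimeter (fractionalKernel E s) {x | t < f x}
      ≤ ∫⁻ t in Set.Ioi (0 : ℝ), (Set.Iio 1).indicator
          (fun _ => nonlocalPerimeter (fractionalKernel E s) (ball (0 : E) r)) t := by
        refine setLIntegral_mono' measurableSet_Ioi fun t (ht : 0 < t) => ?_
        rcases lt_or_ge t 1 with ht1 | ht1
        · rw [Set.indicator_of_mem (Set.mem_Iio.2 ht1),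
            ← fractionalIsoperimetricConst_mul_volume_lt_of_radial hs1 hf hfs hrad ht,
            ← fractionalIsoperimetricConst_mul_volume_ball hs1]
          gcongr
          · exact (finrank_sub_div_finrank_pos hs1).le
          · exact fun x hx => hfr (subset_tsupport f (ht.trans hx).ne')
        · have hempty : {x | t < f x} = ∅ :=
            Set.eq_empty_of_forall_notMem fun x hx => ((hf01 x).2.trans ht1).not_gt hx
          simp [hempty, nonlocalPerimeter, nonlocalEnergy]
    _ = nonlocalPerimeter (fractionalKernel E s) (ball (0 : E) r) := by
        rw [lintegral_indicator_const measurableSet_Iio, Measure.restrict_apply measurableSet_Iio]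
        simp [Set.Iio_inter_Ioi]

lemma exists_contDiff_nonlocalEnergy_le (hs1 : s < 1) (hρ : 0 < ρ) (hρr : ρ < r) :
    ∃ φ : E → ℝ, ContDiff ℝ (⊤ : ℕ∞) φ ∧ tsupport φ ⊆ ball 0 r ∧ (∀ x, 0 ≤ φ x) ∧
      (∀ x ∈ ball 0 ρ, φ x = 1) ∧ nonlocalEnergy (fractionalKernel E s) φ ≤
        nonlocalPerimeter (fractionalKernel E s) (ball (0 : E) r) := by
  obtain ⟨ρ', h₁, h₂⟩ := exists_between hρr
  have hd : 0 < ρ' ^ 2 - ρ ^ 2 := by nlinarith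
  set φ : E → ℝ := fun x => Real.smoothTransition ((ρ' ^ 2 - ‖x‖ ^ 2) / (ρ' ^ 2 - ρ ^ 2))
  have hφ : ContDiff ℝ (⊤ : ℕ∞) φ := Real.smoothTransition.contDiff.comp
    ((contDiff_const.sub (contDiff_norm_sq ℝ)).div_const _)
  have hφr : tsupport φ ⊆ ball 0 r := by
    refine (closure_minimal (fun x hx => ?_) isClosed_closedBall).trans (closedBall_subset_ball h₂)
    refine mem_closedBall_zero_iff.2 (not_lt.1 fun hlt => hx ?_)
    exact Real.smoothTransition.zero_of_nonpos
      (div_nonpos_of_nonpos_of_nonneg (by nlinarith) hd.le)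
  refine ⟨φ, hφ, hφr, fun x => Real.smoothTransition.nonneg _, fun x hx => ?_, ?_⟩
  · refine Real.smoothTransition.one_of_one_le ((one_le_div hd).2 ?_)
    nlinarith [norm_nonneg x, mem_ball_zero_iff.1 hx]
  · refine nonlocalEnergy_le_nonlocalPerimeter_ball_of_radial hs1 hφ.continuous hφr
      (fun x => ⟨Real.smoothTransition.nonneg _, Real.smoothTransition.le_one _⟩) fun x y hxy => ?_
    exact Real.smoothTransition.monotone (by gcongr)

end Cheeger

section EuclideanSpace

variable {N : ℕ} {s r R : ℝ}

lemma measureReal_ball_pos {X : Type*} [PseudoMetricSpace X] [ProperSpace X] [MeasurableSpace X]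
    (μ : Measure X) [IsFiniteMeasureOnCompacts μ] [μ.IsOpenPosMeasure] (x : X) (hr : 0 < r) :
    0 < μ.real (ball x r) :=
  ENNReal.toReal_pos (measure_ball_pos μ x hr).ne' measure_ball_lt_top.ne

lemma continuousOn_measureReal_ball {E : Type*} [NormedAddCommGroup E] [NormedSpace ℝ E]
    [FiniteDimensional ℝ E] [MeasurableSpace E] [BorelSpace E] (μ : Measure E) [μ.IsAddHaarMeasure]
    (x : E) : ContinuousOn (fun ρ : ℝ => μ.real (ball x ρ)) (Set.Ioi 0) := by
  refine ContinuousOn.congr (f := fun ρ : ℝ => ρ ^ finrank ℝ E * μ.real (ball 0 1))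
    (by fun_prop) fun ρ (hρ : 0 < ρ) => ?_
  simp only [Measure.real, Measure.addHaar_ball_of_pos μ x hρ, ENNReal.toReal_mul,
    ENNReal.toReal_ofReal (pow_pos hρ _).le]

lemma ofReal_abs_div_norm_rpow {E : Type*} [NormedAddCommGroup E] [InnerProductSpace ℝ E]
    {s : ℝ} (a : ℝ) {x y : E} (hxy : x ≠ y) :
    ENNReal.ofReal (|a| / ‖x - y‖ ^ (finrank ℝ E + s)) =
      ‖a‖ₑ * fractionalKernel E s (dist x y) := by
  have hpos : 0 < ‖x - y‖ := norm_pos_iff.2 (sub_ne_zero.2 hxy)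
  rw [dist_eq_norm, fractionalKernel, ENNReal.ofReal_rpow_of_pos hpos, Real.rpow_neg hpos.le,
    div_eq_mul_inv, ENNReal.ofReal_mul (abs_nonneg a), Real.enorm_eq_ofReal_abs]

lemma integral_eq_toReal_nonlocalEnergy {u : Euc N → ℝ} (hu : Measurable u) :
    ∫ z : Euc N × Euc N, |u z.1 - u z.2| / ‖z.1 - z.2‖ ^ (N + s) =
      (nonlocalEnergy (fractionalKernel (Euc N) s) u).toReal := by
  rw [integral_eq_lintegral_of_nonneg_ae (Eventually.of_forall fun z => by positivity)
    (Measurable.aestronglyMeasurable (by fun_prop)),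
    nonlocalEnergy_eq_lintegral_prod measurable_fractionalKernel hu]
  congr 1
  refine lintegral_congr fun ⟨x, y⟩ => ?_
  rcases eq_or_ne x y with rfl | hxy
  · simp
  · rw [← ofReal_abs_div_norm_rpow _ hxy, finrank_euclideanSpace_fin]

lemma gag_one_eq_toReal {u : Euc N → ℝ} (hu : Measurable u) :
    gag N 1 s u = (nonlocalEnergy (fractionalKernel (Euc N) s) u).toReal := by
  simp only [gag, Real.rpow_one, mul_one, integral_eq_toReal_nonlocalEnergy hu]

lemma sPer_eq_toReal {A : Set (Euc N)} (hA : MeasurableSet A) :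
    sPer N s A = (nonlocalPerimeter (fractionalKernel (Euc N) s) A).toReal :=
  integral_eq_toReal_nonlocalEnergy (measurable_const.indicator hA)

lemma gag_const_mul (p s c : ℝ) (u : Euc N → ℝ) :
    gag N p s (fun x => c * u x) = |c| ^ p * gag N p s u := by
  simp only [gag, ← mul_sub, abs_mul, Real.mul_rpow (abs_nonneg _) (abs_nonneg _), mul_div_assoc,
    integral_const_mul]

lemma TestOn.const_mul {Ω : Set (Euc N)} {u : Euc N → ℝ} (hu : TestOn Ω u) (c : ℝ) :
    TestOn Ω fun x => c * u x :=
  ⟨contDiff_const.mul hu.1, hu.2.1.mul_left, (tsupport_mul_subset_right).trans hu.2.2⟩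

variable [NeZero N]

lemma TestOn.nonlocalEnergy_ne_top {Ω : Set (Euc N)} {u : Euc N → ℝ} (hu : TestOn Ω u)
    (hs0 : 0 < s) (hs1 : s < 1) : nonlocalEnergy (fractionalKernel (Euc N) s) u ≠ ⊤ := by
  obtain ⟨K, hK⟩ := ContDiff.lipschitzWith_of_hasCompactSupport hu.2.1 hu.1 (by simp)
  exact nonlocalEnergy_fractionalKernel_ne_top hs0 hs1 hK hu.2.1

lemma sPer_ball_pos (hs0 : 0 < s) (hs1 : s < 1) (hr : 0 < r) :
    0 < sPer N s (ball (0 : Euc N) r) := by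
  rw [sPer_eq_toReal measurableSet_ball]
  exact ENNReal.toReal_pos (nonlocalPerimeter_ball_ne_zero measurable_fractionalKernel
    (fun _ => fractionalKernel_ne_zero hs0.le) 0 hr) (nonlocalPerimeter_ball_ne_top hs0 hs1)

lemma sPer_ball_mul_setIntegral_le {Ω : Set (Euc N)} {φ : Euc N → ℝ} (hs0 : 0 < s) (hs1 : s < 1)
    (hr : 0 < r) (hφ : TestOn Ω φ) :
    sPer N s (ball 0 r) * ∫ x in ball 0 r, |φ x| ≤
      volume.real (ball (0 : Euc N) r) * gag N 1 s φ := by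
  have hc := hφ.1.continuous
  rw [sPer_eq_toReal measurableSet_ball, gag_one_eq_toReal hc.measurable,
    integral_eq_lintegral_of_nonneg_ae (Eventually.of_forall fun x => abs_nonneg _)
      hc.abs.aestronglyMeasurable, Measure.real, ← ENNReal.toReal_mul, ← ENNReal.toReal_mul]
  simp only [← Real.enorm_eq_ofReal_abs]
  exact ENNReal.toReal_mono
    (ENNReal.mul_ne_top measure_ball_lt_top.ne (hφ.nonlocalEnergy_ne_top hs0 hs1))
    (nonlocalPerimeter_ball_mul_setLIntegral_le hs0 hs1 hr hc.measurable
      (hc.integrable_of_hasCompactSupport hφ.2.1) hφ.2.1)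

lemma eq_ball_of_sPer_div_eq {O : Set (Euc N)} (hs0 : 0 < s) (hs1 : s < 1) (hr : 0 < r)
    (hO : IsOpen O) (hOc : IsCompact (closure O)) (hreg : SmoothBdry O)
    (h : sPer N s O / volume.real (O ∩ ball 0 r) =
      sPer N s (ball 0 r) / volume.real (ball (0 : Euc N) r)) :
    O = ball 0 r := by
  have hV : 0 < volume.real (ball (0 : Euc N) r) := measureReal_ball_pos volume 0 hr
  have hquot : sPer N s O / volume.real (O ∩ ball 0 r) ≠ 0 :=
    h ▸ (div_pos (sPer_ball_pos hs0 hs1 hr) hV).ne'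
  obtain ⟨hP, hW⟩ := div_ne_zero_iff.1 hquot
  rw [div_eq_div_iff hW hV.ne', sPer_eq_toReal hO.measurableSet,
    sPer_eq_toReal measurableSet_ball, Measure.real, Measure.real, ← ENNReal.toReal_mul,
    ← ENNReal.toReal_mul] at h
  rw [sPer_eq_toReal hO.measurableSet] at hP
  have hWtop : volume (O ∩ ball 0 r) ≠ ⊤ :=
    measure_ne_top_of_subset Set.inter_subset_right measure_ball_lt_top.ne
  have hmul := (ENNReal.toReal_eq_toReal_iff'
    (ENNReal.mul_ne_top (ENNReal.toReal_ne_zero.1 hP).2 measure_ball_lt_top.ne)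
    (ENNReal.mul_ne_top (nonlocalPerimeter_ball_ne_top hs0 hs1) hWtop)).1 h
  have hO0 : volume O ≠ 0 := fun h0 => hW <| by
    rw [Measure.real, measure_mono_null Set.inter_subset_left h0, ENNReal.toReal_zero]
  obtain ⟨f, hf, rfl, hf0⟩ := hreg
  refine eq_of_isOpen_of_ae_eq hO isOpen_ball
    (interior_closure_setOf_lt_zero_subset hf.continuous hf0) ?_
    (ae_eq_ball_of_nonlocalPerimeter_mul_le hs0 hs1 hr hO.measurableSet
      (hOc.isBounded.subset subset_closure) hO0 hmul.le)
  rw [closure_ball 0 hr.ne', interior_closedBall 0 hr.ne']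

lemma exists_testOn_gag_le {ρ : ℝ} (hs0 : 0 < s) (hs1 : s < 1) (hρ : 0 < ρ) (hρr : ρ < r)
    (hrR : r ≤ R) :
    ∃ ψ : Euc N → ℝ, TestOn (ball 0 R) ψ ∧ ∫ x in ball 0 r, |ψ x| = 1 ∧
      gag N 1 s ψ ≤ sPer N s (ball 0 r) / volume.real (ball (0 : Euc N) ρ) := by
  obtain ⟨φ, hφ, hφr, hφ0, hφ1, hφE⟩ := exists_contDiff_nonlocalEnergy_le (E := Euc N) hs1 hρ hρr
  have hφs : HasCompactSupport φ := (isCompact_closedBall 0 r).of_isClosed_subset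
    (isClosed_tsupport φ) (hφr.trans ball_subset_closedBall)
  have hφt : TestOn (ball 0 R) φ := ⟨hφ, hφs, hφr.trans (ball_subset_ball hrR)⟩
  have hVρ : 0 < volume.real (ball (0 : Euc N) ρ) := measureReal_ball_pos volume 0 hρ
  set I := ∫ x in ball 0 r, φ x
  have hI : volume.real (ball (0 : Euc N) ρ) ≤ I := by
    calc volume.real (ball (0 : Euc N) ρ) = ∫ x in ball 0 ρ, φ x := by
          rw [setIntegral_congr_fun measurableSet_ball hφ1]; simp
      _ ≤ I := setIntegral_mono_set (hφ.continuous.integrable_of_hasCompactSupport hφs).integrableOn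
          (Eventually.of_forall hφ0) (ball_subset_ball hρr.le).eventuallyLE
  have hI0 : 0 < I := hVρ.trans_le hI
  refine ⟨fun x => I⁻¹ * φ x, hφt.const_mul _, ?_, ?_⟩
  · simp_rw [abs_mul, abs_of_pos (inv_pos.2 hI0), abs_of_nonneg (hφ0 _)]
    rw [integral_const_mul, inv_mul_cancel₀ hI0.ne']
  · have hgag : gag N 1 s φ ≤ sPer N s (ball 0 r) := by
      rw [gag_one_eq_toReal hφ.continuous.measurable, sPer_eq_toReal measurableSet_ball]
      exact ENNReal.toReal_mono (nonlocalPerimeter_ball_ne_top hs0 hs1) hφE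
    rw [gag_const_mul, Real.rpow_one, abs_of_pos (inv_pos.2 hI0), inv_mul_eq_div]
    exact div_le_div₀ (sPer_ball_pos hs0 hs1 (hρ.trans hρr)).le hgag hVρ hI

lemma isGLB_gag (hs0 : 0 < s) (hs1 : s < 1) (hr : 0 < r) (hrR : r ≤ R) :
    IsGLB {c | ∃ φ : Euc N → ℝ, TestOn (ball 0 R) φ ∧ (∫ x in ball 0 r, |φ x|) = 1 ∧
      c = gag N 1 s φ} (sPer N s (ball 0 r) / volume.real (ball (0 : Euc N) r)) := by
  have hV : 0 < volume.real (ball (0 : Euc N) r) := measureReal_ball_pos volume 0 hr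
  refine ⟨?_, fun b hb => ?_⟩
  · rintro _ ⟨φ, hφ, hφ1, rfl⟩
    rw [div_le_iff₀' hV]
    simpa only [hφ1, mul_one] using sPer_ball_mul_setIntegral_le hs0 hs1 hr hφ
  · have hlim : Tendsto (fun ρ => sPer N s (ball 0 r) / volume.real (ball (0 : Euc N) ρ))
        (𝓝[<] r) (𝓝 (sPer N s (ball 0 r) / volume.real (ball (0 : Euc N) r))) :=
      (tendsto_const_nhds.div ((continuousOn_measureReal_ball volume (0 : Euc N)).continuousAt
        (Ioi_mem_nhds hr)) hV.ne').mono_left nhdsWithin_le_nhds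
    refine ge_of_tendsto hlim ?_
    filter_upwards [Ioo_mem_nhdsLT hr] with ρ hρ
    obtain ⟨ψ, hψ, hψ1, hle⟩ := exists_testOn_gag_le (N := N) hs0 hs1 hρ.1 hρ.2 hrR
    exact (hb ⟨ψ, hψ, hψ1, rfl⟩).trans hle

end EuclideanSpace

end FractionalKernel

theorem stmt11 (N : ℕ) (hN : 0 < N) (s r R : ℝ) (hs0 : 0 < s) (hs1 : s < 1)
    (hr : 0 < r) (hrR : r ≤ R) :
    (sInf { c | ∃ φ : Euc N → ℝ, TestOn (ball (0 : Euc N) R) φ ∧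
        (∫ x in ball (0 : Euc N) r, |φ x|) = 1 ∧ c = gag N 1 s φ } =
      sPer N s (ball (0 : Euc N) r) / (volume (ball (0 : Euc N) r)).toReal) ∧
    (∀ O : Set (Euc N), IsOpen O → IsCompact (closure O) → closure O ⊆ ball (0 : Euc N) R →
      SmoothBdry O →
      sPer N s O / (volume (O ∩ ball (0 : Euc N) r)).toReal =
        sPer N s (ball (0 : Euc N) r) / (volume (ball (0 : Euc N) r)).toReal →
      ∃ v : Euc N, O = ball v r) ∧
    (∀ φ : Euc N → ℝ, TestOn (ball (0 : Euc N) R) φ →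
      (volume (ball (0 : Euc N) r)).toReal⁻¹ * ∫ x in ball (0 : Euc N) r, |φ x| ≤
        (sPer N s (ball (0 : Euc N) r))⁻¹ * gag N 1 s φ) := by
  have : NeZero N := ⟨hN.ne'⟩
  refine ⟨?_, fun O hO hOc _ hreg h => ⟨0, eq_ball_of_sPer_div_eq hs0 hs1 hr hO hOc hreg h⟩,
    fun φ hφ => ?_⟩
  · refine (isGLB_gag hs0 hs1 hr hrR).csInf_eq ?_
    obtain ⟨ψ, hψ, hψ1, -⟩ :=
      exists_testOn_gag_le (N := N) hs0 hs1 (half_pos hr) (half_lt_self hr) hrR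
    exact ⟨_, ψ, hψ, hψ1, rfl⟩
  · have hV : 0 < (volume (ball (0 : Euc N) r)).toReal := measureReal_ball_pos volume 0 hr
    rw [inv_mul_le_iff₀ hV, ← mul_assoc, mul_right_comm, ← div_eq_mul_inv,
      le_div_iff₀' (sPer_ball_pos hs0 hs1 hr)]
    exact sPer_ball_mul_setIntegral_le hs0 hs1 hr hφ
end

section
/- Fractional Maz'ya–Poincaré inequality: let 1 ≤ p < ∞, 0 < s < 1, x_0 ∈ R^N, 0 < r < R, and Σ ⊆ closure(B_r(x_0)) compact. There exists M = M(N, p, R/r) > 0 such that for every u ∈ C^∞_0(R^N) with u ≡ 0 on Σ, (M/r^{N/p}) · cap_{s,p}(Σ; B_R(x_0))^{1/p} · ‖u‖_{L^p(B_r(x_0))} ≤ (∬_{B_R(x_0)×R^N} |u(x)−u(y)|^p/|x−y|^{N+sp} dx dy)^{1/p}. -/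
open MeasureTheory Metric Filter
open scoped ENNReal

/-! Write `σ = s p`, `B = B_R(x₀)`, and `U` for the energy of `u` over `B × ℝ^N`. If `η` is a
cutoff equal to `1` on `B_r(x₀)` and supported in `B`, then for each constant `c` the function
`η (c - u)` equals `c` on `A`, so its energy is at least `cap(A; B) |c|^p`; by the Leibniz rule
this energy is at most `2^p (U + K ∫_B |c - u|^p)`, where `K` is of order `1 / σ + 1 / (p - σ)`.
Taking `c = u(x)` and integrating over `x ∈ B_r(x₀)` bounds `cap(A; B) ∫_{B_r} |u|^p` by a
multiple of `|B_r| U + K W`, where `W = ∬_{B × B} |u(x) - u(y)|^p`.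

The constant is uniform in `s` because `W` is controlled by both `σ U` and `(p - σ) U`, up to powers
of `R`. The factor `σ` comes from comparing `u` on `B` with its values far away, where the kernel
is comparable to a measure of mass of order `1 / σ`. The factor `p - σ` comes from the increments
`G(h) = ∫ |u(x + h) - u(x)|^p`: since `G(2h) ≤ 2^p G(h)`, each dyadic annulus carries at most the
fraction `p - σ` of the integral of `G(h) |h|^(-(N + σ))`. -/

open Module (finrank)

section Haar

variable {E : Type*} [NormedAddCommGroup E] [NormedSpace ℝ E] [FiniteDimensional ℝ E]
  [MeasurableSpace E] [BorelSpace E] (μ : Measure E) [μ.IsAddHaarMeasure]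

lemma addHaar_ball_eq_ofReal (x : E) {r : ℝ} (hr : 0 < r) :
    μ (ball x r) = ENNReal.ofReal (μ.real (ball 0 1) * r ^ (finrank ℝ E : ℝ)) := by
  rw [Measure.addHaar_ball_of_pos μ x hr, mul_comm, Real.rpow_natCast,
    ENNReal.ofReal_mul (by positivity), Measure.real, ENNReal.ofReal_toReal measure_ball_lt_top.ne]

omit [BorelSpace E] in
lemma addHaar_real_unitBall_pos : 0 < μ.real (ball (0 : E) 1) :=
  ENNReal.toReal_pos (measure_ball_pos _ _ one_pos).ne' measure_ball_lt_top.ne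

lemma lintegral_fun_norm_addHaar [Nontrivial E] {f : ℝ → ℝ≥0∞} (hf : Measurable f) :
    ∫⁻ x, f ‖x‖ ∂μ = μ.toSphere Set.univ *
      ∫⁻ y in Set.Ioi (0 : ℝ), ENNReal.ofReal (y ^ (finrank ℝ E - 1)) * f y :=
  calc ∫⁻ x, f ‖x‖ ∂μ
    _ = ∫⁻ x : ({0}ᶜ : Set E), f ‖x.1‖ ∂μ.comap (↑) := by
      rw [lintegral_subtype_comap (measurableSet_singleton _).compl fun x ↦ f ‖x‖,
        restrict_compl_singleton]
    _ = ∫⁻ z, f z.2 ∂μ.toSphere.prod (.volumeIoiPow (finrank ℝ E - 1)) := by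
      simpa using μ.measurePreserving_homeomorphUnitSphereProd.lintegral_comp_emb
        (Homeomorph.measurableEmbedding _) (f ∘ Subtype.val ∘ Prod.snd)
    _ = μ.toSphere Set.univ * ∫⁻ y : Set.Ioi (0 : ℝ), f y ∂.volumeIoiPow (finrank ℝ E - 1) := by
      rw [lintegral_prod _ (by fun_prop)]
      simp only [lintegral_const, mul_comm]
    _ = _ := by
      rw [Measure.volumeIoiPow, lintegral_withDensity_eq_lintegral_mul _ (by fun_prop)
        (by fun_prop)]
      congr 1
      exact lintegral_subtype_comap measurableSet_Ioi
        fun y ↦ ENNReal.ofReal (y ^ (finrank ℝ E - 1)) * f y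

lemma setLIntegral_enorm_rpow [Nontrivial E] {S : Set ℝ} (hS : MeasurableSet S) (b : ℝ) :
    ∫⁻ h in norm ⁻¹' S, ‖h‖ₑ ^ (b - finrank ℝ E) ∂μ =
      μ.toSphere Set.univ * ∫⁻ y in S ∩ Set.Ioi 0, ENNReal.ofReal (y ^ (b - 1)) := by
  rw [← lintegral_indicator (hS.preimage measurable_norm), ← setLIntegral_indicator hS]
  convert lintegral_fun_norm_addHaar μ
    (f := S.indicator fun y ↦ ENNReal.ofReal y ^ (b - finrank ℝ E))
    (Measurable.indicator (by fun_prop) hS) using 2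
  · ext h
    rw [← Set.indicator_comp_right (g := fun y ↦ ENNReal.ofReal y ^ (b - finrank ℝ E))]
    simp only [Function.comp_def, ofReal_norm]
  · refine setLIntegral_congr_fun measurableSet_Ioi fun y (hy : 0 < y) ↦ ?_
    have hpow : y ^ (b - 1) = y ^ (finrank ℝ E - 1) * y ^ (b - finrank ℝ E) := by
      rw [← Real.rpow_natCast, ← Real.rpow_add hy, Nat.cast_sub Module.finrank_pos]
      congr 1
      push_cast
      ring
    by_cases hyS : y ∈ S
    · simp only [Set.indicator_of_mem hyS]
      rw [hpow, ENNReal.ofReal_mul (by positivity), ENNReal.ofReal_rpow_of_pos hy]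
    · simp [hyS]

lemma setLIntegral_ball_enorm_rpow [Nontrivial E] {b ρ : ℝ} (hb : 0 < b) (hρ : 0 < ρ) :
    ∫⁻ h in ball (0 : E) ρ, ‖h‖ₑ ^ (b - finrank ℝ E) ∂μ =
      ENNReal.ofReal (finrank ℝ E * μ.real (ball 0 1) * (ρ ^ b / b)) := by
  have hball : ball (0 : E) ρ = norm ⁻¹' Set.Iio ρ := by ext; simp
  have hint : IntegrableOn (fun y : ℝ ↦ y ^ (b - 1)) (Set.Ioo 0 ρ) := by
    rw [intervalIntegral.integrableOn_Ioo_rpow_iff hρ]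
    linarith
  rw [hball, setLIntegral_enorm_rpow μ measurableSet_Iio, Set.inter_comm, Set.Ioi_inter_Iio,
    ← ofReal_integral_eq_lintegral_ofReal hint, ← integral_Ioc_eq_integral_Ioo,
    ← intervalIntegral.integral_of_le hρ.le, integral_rpow (Or.inl (by linarith)),
    sub_add_cancel, Real.zero_rpow hb.ne', sub_zero, ENNReal.ofReal_mul (by positivity),
    ← Measure.toSphere_real_apply_univ, Measure.real,
    ENNReal.ofReal_toReal (measure_ne_top _ _)]
  filter_upwards [ae_restrict_mem measurableSet_Ioo] with y hy using Real.rpow_nonneg hy.1.le _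

lemma setLIntegral_compl_ball_enorm_rpow [Nontrivial E] {a ρ : ℝ} (ha : 0 < a) (hρ : 0 < ρ) :
    ∫⁻ h in (ball (0 : E) ρ)ᶜ, ‖h‖ₑ ^ (-(finrank ℝ E + a)) ∂μ =
      ENNReal.ofReal (finrank ℝ E * μ.real (ball 0 1) * (ρ ^ (-a) / a)) := by
  have hball : (ball (0 : E) ρ)ᶜ = norm ⁻¹' Set.Ici ρ := by ext; simp
  have hexp : -((finrank ℝ E : ℝ) + a) = -a - finrank ℝ E := by ring
  rw [hball, hexp, setLIntegral_enorm_rpow μ measurableSet_Ici,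
    (Set.inter_eq_left.2 fun y (hy : ρ ≤ y) ↦ hρ.trans_le hy :
      Set.Ici ρ ∩ Set.Ioi 0 = Set.Ici ρ), setLIntegral_congr Ioi_ae_eq_Ici.symm,
    ← ofReal_integral_eq_lintegral_ofReal (integrableOn_Ioi_rpow_of_lt (by linarith) hρ),
    integral_Ioi_rpow_of_lt (by linarith) hρ, sub_add_cancel, neg_div_neg_eq,
    ENNReal.ofReal_mul (by positivity), ← Measure.toSphere_real_apply_univ, Measure.real,
    ENNReal.ofReal_toReal (measure_ne_top _ _)]
  filter_upwards [ae_restrict_mem measurableSet_Ioi] with y hy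
    using Real.rpow_nonneg (hρ.trans hy).le _

lemma setLIntegral_comp_smul_addHaar {r : ℝ} (hr : r ≠ 0) (s : Set E) (f : E → ℝ≥0∞) :
    ∫⁻ x in (r • ·) ⁻¹' s, f (r • x) ∂μ =
      ENNReal.ofReal |(r ^ finrank ℝ E)⁻¹| * ∫⁻ x in s, f x ∂μ := by
  have hemb := (Homeomorph.smulOfNeZero r hr : E ≃ₜ E).measurableEmbedding
  change MeasurableEmbedding (r • · : E → E) at hemb
  rw [← hemb.lintegral_map, ← hemb.restrict_map, Measure.map_addHaar_smul μ hr,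
    Measure.restrict_smul, lintegral_smul_measure, smul_eq_mul]

lemma setLIntegral_setLIntegral_eq_lintegral_shift {B : Set E} (hB : MeasurableSet B)
    {f : E → E → ℝ≥0∞} (hf : Measurable fun z : E × E ↦ f z.1 z.2) :
    ∫⁻ x in B, ∫⁻ y in B, f x y ∂μ ∂μ =
      ∫⁻ h, ∫⁻ x in B ∩ (· + h) ⁻¹' B, f x (x + h) ∂μ ∂μ := by
  have hshift (x : E) : ∫⁻ y in B, f x y ∂μ = ∫⁻ h in (x + ·) ⁻¹' B, f x (x + h) ∂μ := by
    rw [← lintegral_indicator hB, ← lintegral_indicator (hB.preimage (measurable_const_add x)),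
      ← lintegral_add_left_eq_self _ x]
    rfl
  let S : Set (E × E) := {z | z.1 ∈ B ∧ z.1 + z.2 ∈ B}
  have hSm : MeasurableSet S := (measurable_fst hB).inter ((measurable_fst.add measurable_snd) hB)
  have hg : Measurable fun z : E × E ↦ S.indicator (fun z ↦ f z.1 (z.1 + z.2)) z :=
    (hf.comp (measurable_fst.prodMk (measurable_fst.add measurable_snd))).indicator hSm
  calc ∫⁻ x in B, ∫⁻ y in B, f x y ∂μ ∂μ
    _ = ∫⁻ x, ∫⁻ h, S.indicator (fun z ↦ f z.1 (z.1 + z.2)) (x, h) ∂μ ∂μ := by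
      simp_rw [hshift]
      rw [← lintegral_indicator hB]
      congr with x
      by_cases hx : x ∈ B
      · rw [Set.indicator_of_mem hx, ← lintegral_indicator (hB.preimage (measurable_const_add x))]
        congr with h
        by_cases hxh : x + h ∈ B <;> simp [Set.indicator, S, hx, hxh]
      · simp [Set.indicator, S, hx]
    _ = ∫⁻ h, ∫⁻ x, S.indicator (fun z ↦ f z.1 (z.1 + z.2)) (x, h) ∂μ ∂μ :=
      lintegral_lintegral_swap hg.aemeasurable
    _ = _ := by
      congr with h
      rw [← lintegral_indicator (hB.inter (hB.preimage (measurable_add_const h)))]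
      rfl

end Haar

section Energy

variable {E F : Type*} [NormedAddCommGroup F]

/-- The mean oscillation energy `∬ |u(x) - u(y)|^p dν(y) dρ(x)`. With `ρ = ν` a restriction of Haar
measure it is, up to normalization, the left-hand side of a Poincaré inequality. -/
noncomputable def oscEnergy [MeasurableSpace E] (p : ℝ) (u : E → F) (ρ ν : Measure E) : ℝ≥0∞ :=
  ∫⁻ x, ∫⁻ y, ‖u x - u y‖ₑ ^ p ∂ν ∂ρ

/-- The Gagliardo energy `∬ |u(x) - u(y)|^p / |x - y|^(d + σ)` over `A × E`, where `d` is the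
dimension of `E`. The usual fractional seminorm of order `s` is the case `σ = s p`. On the
diagonal the kernel is infinite but multiplies `0`, so the integrand is `0` there. -/
noncomputable def gagliardoEnergy [NormedAddCommGroup E] [NormedSpace ℝ E] [MeasurableSpace E]
    (μ : Measure E) (p σ : ℝ) (u : E → F) (A : Set E) : ℝ≥0∞ :=
  ∫⁻ x in A, ∫⁻ y, ‖u x - u y‖ₑ ^ p * ‖x - y‖ₑ ^ (-(finrank ℝ E + σ)) ∂μ ∂μ

lemma enorm_sub_rpow_le_add {p : ℝ} (hp : 1 ≤ p) (a b c : F) :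
    ‖a - c‖ₑ ^ p ≤ 2 ^ (p - 1) * (‖a - b‖ₑ ^ p + ‖c - b‖ₑ ^ p) := by
  have htri : ‖a - c‖ₑ ≤ ‖a - b‖ₑ + ‖c - b‖ₑ := by
    rw [← sub_sub_sub_cancel_right a c b]
    exact enorm_sub_le
  exact (ENNReal.rpow_le_rpow htri (by positivity)).trans
    (ENNReal.rpow_add_le_mul_rpow_add_rpow _ _ hp)

lemma two_mul_two_rpow_sub_one (p : ℝ) : (2 : ℝ≥0∞) * 2 ^ (p - 1) = 2 ^ p := by
  conv_lhs => enter [1]; rw [← ENNReal.rpow_one 2]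
  rw [← ENNReal.rpow_add _ _ two_ne_zero ENNReal.ofNat_ne_top, add_sub_cancel]

lemma ofReal_two_rpow (a : ℝ) : ENNReal.ofReal (2 ^ a) = 2 ^ a := by
  rw [← ENNReal.ofReal_rpow_of_pos two_pos, ENNReal.ofReal_ofNat]

lemma le_ofReal_div_mul_of_mul_le {x y : ℝ≥0∞} {a m : ℝ} (hm : 0 < m)
    (h : x * ENNReal.ofReal m ≤ ENNReal.ofReal a * y) : x ≤ ENNReal.ofReal (a / m) * y := by
  rw [ENNReal.ofReal_div_of_pos hm, div_eq_mul_inv, mul_right_comm, ← div_eq_mul_inv]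
  exact (ENNReal.le_div_iff_mul_le (.inl (ENNReal.ofReal_pos.2 hm).ne')
    (.inl ENNReal.ofReal_ne_top)).2 h

lemma oscEnergy_mul_measure_univ_le [MeasurableSpace E] [MeasurableSpace F] [BorelSpace F]
    [SecondCountableTopology F] {p : ℝ} (hp : 1 ≤ p) {u : E → F} (hu : Measurable u)
    (ρ ν : Measure E) [SFinite ρ] [SFinite ν] :
    oscEnergy p u ρ ρ * ν Set.univ ≤ 2 ^ p * ρ Set.univ * oscEnergy p u ρ ν := by
  set g : E → ℝ≥0∞ := fun x ↦ ∫⁻ y, ‖u x - u y‖ₑ ^ p ∂ν with hg_def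
  have hg : Measurable g := by fun_prop
  have hmid (x z : E) : ‖u x - u z‖ₑ ^ p * ν Set.univ ≤ 2 ^ (p - 1) * (g x + g z) := by
    rw [← lintegral_const, hg_def, ← lintegral_add_left (by fun_prop),
      ← lintegral_const_mul _ (by fun_prop)]
    exact lintegral_mono fun y ↦ enorm_sub_rpow_le_add hp _ _ _
  calc oscEnergy p u ρ ρ * ν Set.univ
    _ = ∫⁻ x, ∫⁻ z, ‖u x - u z‖ₑ ^ p * ν Set.univ ∂ρ ∂ρ := by
      rw [oscEnergy, ← lintegral_mul_const _ (by fun_prop)]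
      congr with x
      rw [lintegral_mul_const _ (by fun_prop)]
    _ ≤ ∫⁻ x, ∫⁻ z, 2 ^ (p - 1) * (g x + g z) ∂ρ ∂ρ :=
      lintegral_mono fun x ↦ lintegral_mono fun z ↦ hmid x z
    _ = 2 ^ (p - 1) * ((∫⁻ x, g x ∂ρ) * ρ Set.univ + (∫⁻ z, g z ∂ρ) * ρ Set.univ) := by
      simp_rw [lintegral_const_mul _ (hg.const_add _), lintegral_add_left measurable_const,
        lintegral_const]
      rw [lintegral_const_mul _ (by fun_prop), lintegral_add_right _ measurable_const,
        lintegral_mul_const _ hg, lintegral_const]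
    _ = 2 ^ p * ρ Set.univ * oscEnergy p u ρ ν := by
      change _ = 2 ^ p * ρ Set.univ * ∫⁻ x, g x ∂ρ
      rw [← two_mul_two_rpow_sub_one p, ← two_mul]
      ac_rfl

variable [NormedAddCommGroup E] [NormedSpace ℝ E] [FiniteDimensional ℝ E] [Nontrivial E]
  [MeasurableSpace E] [BorelSpace E] (μ : Measure E) [μ.IsAddHaarMeasure] {p σ : ℝ}

lemma lintegral_gagliardo_kernel_le {f : E → F} {x : E} {b L ρ : ℝ} (hσ : 0 < σ) (hσp : σ < p)
    (hL : 0 ≤ L) (hρ : 0 < ρ) (hbound : ∀ y, ‖f x - f y‖ ≤ b)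
    (hlip : ∀ y, ‖f x - f y‖ ≤ L * ‖x - y‖) :
    ∫⁻ y, ‖f x - f y‖ₑ ^ p * ‖x - y‖ₑ ^ (-(finrank ℝ E + σ)) ∂μ ≤
      ENNReal.ofReal (finrank ℝ E * μ.real (ball 0 1) *
        (L ^ p * (ρ ^ (p - σ) / (p - σ)) + b ^ p * (ρ ^ (-σ) / σ))) := by
  have hp : 0 < p := hσ.trans hσp
  have hpσ : 0 < p - σ := sub_pos.2 hσp
  have hb : 0 ≤ b := (norm_nonneg _).trans (hbound x)
  have hnear (h : E) : ‖f x - f (x - h)‖ₑ ^ p * ‖h‖ₑ ^ (-(finrank ℝ E + σ)) ≤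
      ENNReal.ofReal (L ^ p) * ‖h‖ₑ ^ (p - σ - finrank ℝ E) := by
    rcases eq_or_ne h 0 with rfl | hh
    · simp [hp]
    have hle : ‖f x - f (x - h)‖ₑ ≤ ENNReal.ofReal L * ‖h‖ₑ := by
      rw [← ofReal_norm, ← ofReal_norm h, ← ENNReal.ofReal_mul hL]
      exact ENNReal.ofReal_le_ofReal (by simpa using hlip (x - h))
    calc ‖f x - f (x - h)‖ₑ ^ p * ‖h‖ₑ ^ (-(finrank ℝ E + σ))
      _ ≤ (ENNReal.ofReal L * ‖h‖ₑ) ^ p * ‖h‖ₑ ^ (-(finrank ℝ E + σ)) := by gcongr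
      _ = ENNReal.ofReal (L ^ p) * ‖h‖ₑ ^ (p - σ - finrank ℝ E) := by
        rw [ENNReal.mul_rpow_of_nonneg _ _ hp.le, ENNReal.ofReal_rpow_of_nonneg hL hp.le, mul_assoc,
          ← ENNReal.rpow_add _ _ (enorm_ne_zero.2 hh) enorm_ne_top]
        ring_nf
  have hfar (h : E) : ‖f x - f (x - h)‖ₑ ^ p * ‖h‖ₑ ^ (-(finrank ℝ E + σ)) ≤
      ENNReal.ofReal (b ^ p) * ‖h‖ₑ ^ (-(finrank ℝ E + σ)) := by
    rw [← ENNReal.ofReal_rpow_of_nonneg hb hp.le, ← ofReal_norm]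
    gcongr
    exact hbound _
  rw [← lintegral_sub_left_eq_self (fun y ↦ _ * ‖x - y‖ₑ ^ _) x]
  simp only [sub_sub_cancel]
  rw [← lintegral_add_compl _ (measurableSet_ball (x := (0 : E)) (ε := ρ)), mul_add,
    mul_left_comm, mul_left_comm _ (b ^ p), ENNReal.ofReal_add (by positivity) (by positivity),
    ENNReal.ofReal_mul (by positivity), ENNReal.ofReal_mul (p := b ^ p) (by positivity),
    ← setLIntegral_ball_enorm_rpow μ hpσ hρ, ← setLIntegral_compl_ball_enorm_rpow μ hσ hρ,
    ← lintegral_const_mul _ (by fun_prop), ← lintegral_const_mul _ (by fun_prop)]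
  exact add_le_add (lintegral_mono hnear) (lintegral_mono hfar)

/-- The measure `|y - x₀|^(-(d + σ)) dy` on the complement of the ball of radius `R`: the part of
the Gagliardo kernel that survives as `σ → 0`, where its mass is of order `1 / σ`. -/
noncomputable def tailMeasure (σ : ℝ) (x₀ : E) (R : ℝ) : Measure E :=
  (μ.restrict (ball x₀ R)ᶜ).withDensity fun y ↦ ‖y - x₀‖ₑ ^ (-(finrank ℝ E + σ))

instance tailMeasure.instSFinite (x₀ : E) (R : ℝ) : SFinite (tailMeasure μ σ x₀ R) := by
  unfold tailMeasure
  infer_instance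

lemma tailMeasure_univ (hσ : 0 < σ) (x₀ : E) {R : ℝ} (hR : 0 < R) :
    tailMeasure μ σ x₀ R Set.univ =
      ENNReal.ofReal (finrank ℝ E * μ.real (ball 0 1) * (R ^ (-σ) / σ)) := by
  have htrans : (ball x₀ R)ᶜ = (· - x₀) ⁻¹' (ball (0 : E) R)ᶜ := by
    ext y
    simp [dist_eq_norm]
  rw [tailMeasure, withDensity_apply _ .univ, Measure.restrict_univ, htrans,
    (measurePreserving_sub_right μ x₀).setLIntegral_comp_preimage measurableSet_ball.compl
      (f := fun h ↦ ‖h‖ₑ ^ (-(finrank ℝ E + σ))) (by fun_prop),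
    setLIntegral_compl_ball_enorm_rpow μ hσ hR]

omit [Nontrivial E] in
lemma oscEnergy_tailMeasure_le [MeasurableSpace F] [BorelSpace F] [SecondCountableTopology F]
    {u : E → F} (hu : Measurable u) (hσ : 0 < σ) (x₀ : E) (R : ℝ) :
    oscEnergy p u (μ.restrict (ball x₀ R)) (tailMeasure μ σ x₀ (2 * R)) ≤
      2 ^ (finrank ℝ E + σ) * gagliardoEnergy μ p σ u (ball x₀ R) := by
  have hker {x y : E} (hx : x ∈ ball x₀ R) (hy : y ∈ (ball x₀ (2 * R))ᶜ) :
      ‖y - x₀‖ₑ ^ (-(finrank ℝ E + σ)) ≤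
        2 ^ (finrank ℝ E + σ) * ‖x - y‖ₑ ^ (-(finrank ℝ E + σ)) := by
    have hnorm : ‖x - y‖ ≤ 2 * ‖y - x₀‖ := by
      rw [mem_ball_iff_norm] at hx
      rw [Set.mem_compl_iff, mem_ball_iff_norm, not_lt] at hy
      have htri := norm_sub_le (x - x₀) (y - x₀)
      have hpos := (norm_nonneg _).trans_lt hx
      rw [sub_sub_sub_cancel_right] at htri
      linarith
    have henorm : ‖x - y‖ₑ ≤ 2 * ‖y - x₀‖ₑ := by
      rw [← ofReal_norm, ← ofReal_norm, ← ENNReal.ofReal_ofNat, ← ENNReal.ofReal_mul zero_le_two]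
      exact ENNReal.ofReal_le_ofReal hnorm
    have hpow := ENNReal.rpow_le_rpow henorm (z := finrank ℝ E + σ) (by positivity)
    rw [ENNReal.mul_rpow_of_nonneg _ _ (by positivity)] at hpow
    have htwo : (2 : ℝ≥0∞) ^ (finrank ℝ E + σ) ≠ ⊤ := by finiteness
    have htwo' : (2 : ℝ≥0∞) ^ (finrank ℝ E + σ) ≠ 0 := by simp
    calc ‖y - x₀‖ₑ ^ (-(finrank ℝ E + σ))
      _ = 2 ^ (finrank ℝ E + σ) *
          (2 ^ (finrank ℝ E + σ) * ‖y - x₀‖ₑ ^ (finrank ℝ E + σ))⁻¹ := by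
        rw [ENNReal.mul_inv (.inl htwo') (.inl htwo), ENNReal.mul_inv_cancel_left htwo' htwo,
          ENNReal.rpow_neg]
      _ ≤ 2 ^ (finrank ℝ E + σ) * ‖x - y‖ₑ ^ (-(finrank ℝ E + σ)) := by
        rw [ENNReal.rpow_neg]
        gcongr
  rw [gagliardoEnergy, ← lintegral_const_mul _ (by fun_prop)]
  refine setLIntegral_mono (by fun_prop) fun x hx ↦ ?_
  rw [tailMeasure, lintegral_withDensity_eq_lintegral_mul _ (by fun_prop) (by fun_prop),
    ← lintegral_const_mul _ (by fun_prop)]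
  refine (setLIntegral_mono (by fun_prop) fun y hy ↦ ?_).trans (setLIntegral_le_lintegral _ _)
  rw [Pi.mul_apply, mul_left_comm, mul_comm (‖y - x₀‖ₑ ^ _)]
  gcongr
  exact hker hx hy

lemma oscEnergy_ball_le_order_mul_gagliardoEnergy [MeasurableSpace F] [BorelSpace F]
    [SecondCountableTopology F] (hp : 1 ≤ p) {u : E → F} (hu : Measurable u) (hσ : 0 < σ)
    (x₀ : E) {R : ℝ} (hR : 0 < R) :
    oscEnergy p u (μ.restrict (ball x₀ R)) (μ.restrict (ball x₀ R)) ≤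
      ENNReal.ofReal (2 ^ (p + σ) / finrank ℝ E * σ * (2 * R) ^ (finrank ℝ E + σ)) *
        gagliardoEnergy μ p σ u (ball x₀ R) := by
  set W := oscEnergy p u (μ.restrict (ball x₀ R)) (μ.restrict (ball x₀ R))
  set U := gagliardoEnergy μ p σ u (ball x₀ R)
  set d := finrank ℝ E
  have hd : (0 : ℝ) < d := Nat.cast_pos.2 Module.finrank_pos
  set ω := μ.real (ball (0 : E) 1)
  have hω : 0 < ω := addHaar_real_unitBall_pos μ
  set m := d * ω * ((2 * R) ^ (-σ) / σ)
  have hm : 0 < m := by positivity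
  have hmean : W * ENNReal.ofReal m ≤
      ENNReal.ofReal (2 ^ p * (ω * R ^ (d : ℝ)) * 2 ^ (d + σ)) * U :=
    calc W * ENNReal.ofReal m
      _ = W * tailMeasure μ σ x₀ (2 * R) Set.univ := by
        rw [tailMeasure_univ μ hσ x₀ (by positivity)]
      _ ≤ 2 ^ p * μ.restrict (ball x₀ R) Set.univ *
          oscEnergy p u (μ.restrict (ball x₀ R)) (tailMeasure μ σ x₀ (2 * R)) :=
        oscEnergy_mul_measure_univ_le hp hu _ _
      _ ≤ 2 ^ p * ENNReal.ofReal (ω * R ^ (d : ℝ)) * (2 ^ (d + σ) * U) := by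
        rw [Measure.restrict_apply_univ, addHaar_ball_eq_ofReal μ x₀ hR]
        gcongr
        exact oscEnergy_tailMeasure_le μ hu hσ x₀ R
      _ = _ := by
        rw [ENNReal.ofReal_mul (q := 2 ^ _) (by positivity),
          ENNReal.ofReal_mul (p := 2 ^ p) (by positivity), ofReal_two_rpow, ofReal_two_rpow,
          mul_assoc _ _ U]
  refine (le_ofReal_div_mul_of_mul_le hm hmean).trans_eq ?_
  congr 2
  simp only [m, Real.mul_rpow zero_le_two hR.le, Real.rpow_add two_pos, Real.rpow_add hR,
    Real.rpow_neg zero_le_two, Real.rpow_neg hR.le]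
  field_simp

section Doubling

lemma one_le_ofReal_add_two_rpow_neg {a : ℝ} (ha : 0 ≤ a) :
    1 ≤ ENNReal.ofReal a + 2 ^ (-a) := by
  have hexp : 1 ≤ a + (2 : ℝ) ^ (-a) := by
    rw [Real.rpow_def_of_pos two_pos]
    nlinarith [Real.add_one_le_exp (Real.log 2 * -a), Real.log_two_lt_d9]
  rw [← ofReal_two_rpow]
  exact (ENNReal.one_le_ofReal.2 hexp).trans ENNReal.ofReal_add_le

variable {G : E → ℝ≥0∞}

omit [Nontrivial E] in
lemma setLIntegral_closedBall_le_half_of_doubling (hG : ∀ h, G ((2 : ℝ) • h) ≤ 2 ^ p * G h)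
    (ρ : ℝ) :
    ∫⁻ h in closedBall 0 ρ, G h * ‖h‖ₑ ^ (-(finrank ℝ E + σ)) ∂μ ≤
      2 ^ (p - σ) * ∫⁻ h in closedBall 0 (ρ / 2), G h * ‖h‖ₑ ^ (-(finrank ℝ E + σ)) ∂μ := by
  set d := finrank ℝ E
  have hpre : ((2 : ℝ) • ·) ⁻¹' closedBall (0 : E) ρ = closedBall 0 (ρ / 2) := by
    ext h
    simp [norm_smul, le_div_iff₀']
  have hpow : (2 : ℝ≥0∞) ^ (p - σ) = 2 ^ d * (2 ^ p * 2 ^ (-(d + σ))) := by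
    rw [← ENNReal.rpow_natCast, ← ENNReal.rpow_add _ _ two_ne_zero ENNReal.ofNat_ne_top,
      ← ENNReal.rpow_add _ _ two_ne_zero ENNReal.ofNat_ne_top]
    ring_nf
  have hpoint (h : E) : G ((2 : ℝ) • h) * ‖(2 : ℝ) • h‖ₑ ^ (-(d + σ)) ≤
      2 ^ p * 2 ^ (-(d + σ)) * (G h * ‖h‖ₑ ^ (-(d + σ))) := by
    have htwo : ‖(2 : ℝ)‖ₑ = 2 := by simp [← ofReal_norm]
    rw [enorm_smul, htwo, ENNReal.mul_rpow_of_ne_top (by finiteness) (by finiteness),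
      mul_mul_mul_comm]
    gcongr
    exact hG h
  have hscale : ∫⁻ h in closedBall 0 ρ, G h * ‖h‖ₑ ^ (-(d + σ)) ∂μ = 2 ^ d *
      ∫⁻ h in closedBall 0 (ρ / 2), G ((2 : ℝ) • h) * ‖(2 : ℝ) • h‖ₑ ^ (-(d + σ)) ∂μ := by
    rw [← hpre, setLIntegral_comp_smul_addHaar μ two_ne_zero _ fun h ↦ G h * ‖h‖ₑ ^ (-(d + σ)),
      ← mul_assoc, abs_of_pos (by positivity), ENNReal.ofReal_inv_of_pos (by positivity),
      ENNReal.ofReal_pow zero_le_two, ENNReal.ofReal_ofNat,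
      ENNReal.mul_inv_cancel (by simp) (by finiteness), one_mul]
  rw [hscale, hpow, mul_assoc, ← lintegral_const_mul' (2 ^ p * _) _ (by finiteness)]
  exact mul_le_mul_right (lintegral_mono hpoint) _

omit [Nontrivial E] in
lemma setLIntegral_annulus_le_of_doubling (hG : ∀ h, G ((2 : ℝ) • h) ≤ 2 ^ p * G h)
    (hσp : σ < p) {ρ : ℝ} (hρ : 0 < ρ) :
    ∫⁻ h in closedBall 0 ρ \ closedBall 0 (ρ / 2), G h * ‖h‖ₑ ^ (-(finrank ℝ E + σ)) ∂μ ≤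
      ENNReal.ofReal (p - σ) *
        ∫⁻ h in closedBall 0 ρ, G h * ‖h‖ₑ ^ (-(finrank ℝ E + σ)) ∂μ := by
  set f : E → ℝ≥0∞ := fun h ↦ G h * ‖h‖ₑ ^ (-(finrank ℝ E + σ))
  set J := ∫⁻ h in closedBall 0 ρ, f h ∂μ with hJ_def
  set J₂ := ∫⁻ h in closedBall 0 (ρ / 2), f h ∂μ
  set A := ∫⁻ h in closedBall 0 ρ \ closedBall 0 (ρ / 2), f h ∂μ
  have hpσ : 0 < p - σ := sub_pos.2 hσp
  rcases eq_or_ne J ⊤ with hJ | hJ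
  · rw [hJ, ENNReal.mul_top (ENNReal.ofReal_pos.2 hpσ).ne']
    exact le_top
  have hsplit : A + J₂ = J := by
    rw [hJ_def, ← lintegral_inter_add_sdiff f (closedBall 0 ρ)
      (measurableSet_closedBall (x := (0 : E)) (ε := ρ / 2)),
      Set.inter_eq_right.2 (closedBall_subset_closedBall (by linarith)), add_comm]
  have hhalf : 2 ^ (-(p - σ)) * J ≤ J₂ := by
    rw [ENNReal.rpow_neg, ← ENNReal.div_eq_inv_mul]
    exact ENNReal.div_le_of_le_mul' (setLIntegral_closedBall_le_half_of_doubling μ hG ρ)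
  refine (ENNReal.add_le_add_iff_right
    (ENNReal.mul_ne_top (by finiteness) hJ : 2 ^ (-(p - σ)) * J ≠ ⊤)).1 ?_
  calc A + 2 ^ (-(p - σ)) * J
    _ ≤ A + J₂ := by gcongr
    _ = 1 * J := by rw [hsplit, one_mul]
    _ ≤ ENNReal.ofReal (p - σ) * J + 2 ^ (-(p - σ)) * J := by
      rw [← add_mul]
      gcongr
      exact one_le_ofReal_add_two_rpow_neg hpσ.le

lemma setLIntegral_closedBall_le_tsum_annulus {ρ : ℝ} (hρ : 0 < ρ) (G : E → ℝ≥0∞) :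
    ∫⁻ h in closedBall 0 ρ, G h ∂μ ≤
      ∑' j : ℕ, ∫⁻ h in closedBall 0 (ρ * 2⁻¹ ^ j) \ closedBall 0 (ρ * 2⁻¹ ^ j / 2), G h ∂μ := by
  have hcover : closedBall (0 : E) ρ \ {0} ⊆
      ⋃ j : ℕ, closedBall 0 (ρ * 2⁻¹ ^ j) \ closedBall 0 (ρ * 2⁻¹ ^ j / 2) := by
    rintro h ⟨hh, hh0 : h ≠ 0⟩
    rw [mem_closedBall_zero_iff] at hh
    obtain ⟨j, hlt, hle⟩ := exists_nat_pow_near_of_lt_one (x := ‖h‖ / ρ) (y := 2⁻¹)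
      (by positivity) ((div_le_one hρ).2 hh) (by norm_num) (by norm_num)
    rw [lt_div_iff₀ hρ] at hlt
    rw [div_le_iff₀ hρ] at hle
    refine Set.mem_iUnion.2 ⟨j, ?_, ?_⟩
    · rwa [mem_closedBall_zero_iff, mul_comm]
    · rw [mem_closedBall_zero_iff, not_le]
      convert hlt using 1
      ring
  calc ∫⁻ h in closedBall 0 ρ, G h ∂μ
    _ = ∫⁻ h in closedBall 0 ρ \ {0}, G h ∂μ :=
      setLIntegral_congr (sdiff_null_ae_eq_self (measure_singleton 0)).symm
    _ ≤ _ := (lintegral_mono_set hcover).trans (lintegral_iUnion_le _ _)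

omit [NormedSpace ℝ E] [FiniteDimensional ℝ E] [Nontrivial E] [μ.IsAddHaarMeasure] in
lemma setLIntegral_annulus_le_rpow_mul {q t : ℝ} (hq : 0 ≤ q) (ht : 0 < t) (G : E → ℝ≥0∞) :
    ∫⁻ h in closedBall 0 t \ closedBall 0 (t / 2), G h ∂μ ≤ ENNReal.ofReal (t ^ q) *
      ∫⁻ h in closedBall 0 t \ closedBall 0 (t / 2), G h * ‖h‖ₑ ^ (-q) ∂μ := by
  rw [← lintegral_const_mul' _ _ ENNReal.ofReal_ne_top]
  refine setLIntegral_mono' (measurableSet_closedBall.diff measurableSet_closedBall)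
    fun h ⟨hh, hh'⟩ ↦ ?_
  rw [mem_closedBall_zero_iff] at hh hh'
  have hh0 : h ≠ 0 := norm_pos_iff.1 ((half_pos ht).trans (not_le.1 hh'))
  calc G h
    _ = ‖h‖ₑ ^ q * (G h * ‖h‖ₑ ^ (-q)) := by
      rw [mul_left_comm, ← ENNReal.rpow_add _ _ (enorm_ne_zero.2 hh0) enorm_ne_top,
        add_neg_cancel, ENNReal.rpow_zero, mul_one]
    _ ≤ ENNReal.ofReal (t ^ q) * (G h * ‖h‖ₑ ^ (-q)) := by
      rw [← ofReal_norm, ENNReal.ofReal_rpow_of_nonneg (norm_nonneg h) hq]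
      gcongr

lemma setLIntegral_closedBall_le_of_doubling (hG : ∀ h, G ((2 : ℝ) • h) ≤ 2 ^ p * G h)
    (hσ : 0 ≤ σ) (hσp : σ < p) {ρ : ℝ} (hρ : 0 < ρ) :
    ∫⁻ h in closedBall 0 ρ, G h ∂μ ≤ ENNReal.ofReal (2 * (p - σ) * ρ ^ (finrank ℝ E + σ)) *
      ∫⁻ h in closedBall 0 ρ, G h * ‖h‖ₑ ^ (-(finrank ℝ E + σ)) ∂μ := by
  set q := finrank ℝ E + σ
  have hq : 1 ≤ q := by
    have : (1 : ℝ) ≤ finrank ℝ E := Nat.one_le_cast.2 Module.finrank_pos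
    linarith
  set J : ℝ → ℝ≥0∞ := fun t ↦ ∫⁻ h in closedBall 0 t, G h * ‖h‖ₑ ^ (-q) ∂μ
  have hannulus {t : ℝ} (ht : 0 < t) : ∫⁻ h in closedBall 0 t \ closedBall 0 (t / 2), G h ∂μ ≤
      ENNReal.ofReal (t ^ q) * (ENNReal.ofReal (p - σ) * J t) :=
    (setLIntegral_annulus_le_rpow_mul μ (by positivity) ht G).trans
      (mul_le_mul_right (setLIntegral_annulus_le_of_doubling μ hG hσp ht) _)
  have hterm (j : ℕ) :
      ∫⁻ h in closedBall 0 (ρ * 2⁻¹ ^ j) \ closedBall 0 (ρ * 2⁻¹ ^ j / 2), G h ∂μ ≤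
        2⁻¹ ^ j * (ENNReal.ofReal (ρ ^ q) * (ENNReal.ofReal (p - σ) * J ρ)) := by
    have hpow : ENNReal.ofReal ((ρ * 2⁻¹ ^ j) ^ q) ≤ 2⁻¹ ^ j * ENNReal.ofReal (ρ ^ q) := by
      rw [Real.mul_rpow hρ.le (by positivity), ENNReal.ofReal_mul (by positivity), mul_comm]
      gcongr
      refine (ENNReal.ofReal_le_ofReal (Real.rpow_le_self_of_le_one (by positivity)
        (pow_le_one₀ (by norm_num) (by norm_num)) hq)).trans_eq ?_
      rw [ENNReal.ofReal_pow (by norm_num), ENNReal.ofReal_inv_of_pos two_pos, ENNReal.ofReal_ofNat]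
    rw [← mul_assoc]
    refine (hannulus (by positivity)).trans ?_
    gcongr
    exact lintegral_mono_set (closedBall_subset_closedBall
      (mul_le_of_le_one_right hρ.le (pow_le_one₀ (by norm_num) (by norm_num))))
  calc ∫⁻ h in closedBall 0 ρ, G h ∂μ
    _ ≤ ∑' j : ℕ, 2⁻¹ ^ j * (ENNReal.ofReal (ρ ^ q) * (ENNReal.ofReal (p - σ) * J ρ)) :=
      (setLIntegral_closedBall_le_tsum_annulus μ hρ G).trans (ENNReal.tsum_le_tsum hterm)
    _ = ENNReal.ofReal (2 * (p - σ) * ρ ^ q) * J ρ := by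
      rw [ENNReal.tsum_mul_right, ENNReal.tsum_geometric_two, ENNReal.ofReal_mul (q := ρ ^ q),
        ENNReal.ofReal_mul zero_le_two, ENNReal.ofReal_ofNat]
      · ring
      · linarith

end Doubling

/-- The `p`-th power of the `L^p` norm of the increment `u(· + h) - u` over the part of `B` on which
both points lie in `B`. -/
noncomputable def shiftEnergy (p : ℝ) (u : E → F) (B : Set E) (h : E) : ℝ≥0∞ :=
  ∫⁻ x in B ∩ (· + h) ⁻¹' B, ‖u (x + h) - u x‖ₑ ^ p ∂μ

omit [FiniteDimensional ℝ E] [Nontrivial E] in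
lemma shiftEnergy_two_smul_le [MeasurableSpace F] [BorelSpace F] [SecondCountableTopology F]
    (hp : 1 ≤ p) {u : E → F} (hu : Measurable u) {B : Set E}
    (hB : Convex ℝ B) (hBm : MeasurableSet B) (h : E) :
    shiftEnergy μ p u B ((2 : ℝ) • h) ≤ 2 ^ p * shiftEnergy μ p u B h := by
  have hmid {x : E} (hx : x ∈ B ∩ (· + (2 : ℝ) • h) ⁻¹' B) : x + h ∈ B := by
    convert hB hx.1 hx.2 (a := 1 / 2) (b := 1 / 2) (by norm_num) (by norm_num) (by norm_num) using 1
    module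
  have hsub : B ∩ (· + (2 : ℝ) • h) ⁻¹' B ⊆ (· + h) ⁻¹' (B ∩ (· + h) ⁻¹' B) := fun x hx ↦
    ⟨hmid hx, by simpa [two_smul, add_assoc] using hx.2⟩
  calc shiftEnergy μ p u B ((2 : ℝ) • h)
    _ ≤ ∫⁻ x in B ∩ (· + (2 : ℝ) • h) ⁻¹' B,
        2 ^ (p - 1) * (‖u (x + h + h) - u (x + h)‖ₑ ^ p + ‖u (x + h) - u x‖ₑ ^ p) ∂μ := by
      refine lintegral_mono fun x ↦ ?_
      rw [two_smul, ← add_assoc, enorm_sub_rev (u (x + h)) (u x)]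
      exact enorm_sub_rpow_le_add hp _ _ _
    _ ≤ 2 ^ (p - 1) * (shiftEnergy μ p u B h + shiftEnergy μ p u B h) := by
      rw [lintegral_const_mul _ (by fun_prop), lintegral_add_right _ (by fun_prop)]
      gcongr
      · refine (lintegral_mono_set hsub).trans_eq ?_
        exact (measurePreserving_add_right μ h).setLIntegral_comp_preimage
          (hBm.inter (hBm.preimage (measurable_add_const h)))
          (f := fun x ↦ ‖u (x + h) - u x‖ₑ ^ p) (by fun_prop)
      · exact lintegral_mono_set fun x hx ↦ ⟨hx.1, hmid hx⟩
    _ = 2 ^ p * shiftEnergy μ p u B h := by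
      rw [← two_mul, ← mul_assoc, mul_comm _ 2, two_mul_two_rpow_sub_one]

lemma oscEnergy_ball_le_sub_order_mul_gagliardoEnergy [MeasurableSpace F] [BorelSpace F]
    [SecondCountableTopology F] (hp : 1 ≤ p) {u : E → F} (hu : Measurable u) (hσ : 0 ≤ σ)
    (hσp : σ < p) (x₀ : E) {R : ℝ} (hR : 0 < R) :
    oscEnergy p u (μ.restrict (ball x₀ R)) (μ.restrict (ball x₀ R)) ≤
      ENNReal.ofReal (2 * (p - σ) * (2 * R) ^ (finrank ℝ E + σ)) *
        gagliardoEnergy μ p σ u (ball x₀ R) := by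
  set B := ball x₀ R
  have hsupp {h : E} (hh : h ∉ closedBall 0 (2 * R)) : B ∩ (· + h) ⁻¹' B = ∅ := by
    refine Set.eq_empty_of_forall_notMem fun x ⟨hx, hxh⟩ ↦ hh ?_
    have := dist_triangle_right (x + h) x x₀
    rw [Set.mem_preimage, mem_ball] at hxh
    rw [mem_ball] at hx
    rw [dist_self_add_left] at this
    rw [mem_closedBall_zero_iff]
    linarith
  calc oscEnergy p u (μ.restrict B) (μ.restrict B)
    _ = ∫⁻ h, shiftEnergy μ p u B h ∂μ := by
      rw [oscEnergy, setLIntegral_setLIntegral_eq_lintegral_shift μ measurableSet_ball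
        (by fun_prop)]
      simp_rw [enorm_sub_rev (u _) (u (_ + _))]
      rfl
    _ = ∫⁻ h in closedBall 0 (2 * R), shiftEnergy μ p u B h ∂μ := by
      refine (setLIntegral_eq_of_support_subset fun h hh ↦ ?_).symm
      by_contra hh'
      exact hh (by rw [shiftEnergy, hsupp hh', setLIntegral_empty])
    _ ≤ ENNReal.ofReal (2 * (p - σ) * (2 * R) ^ (finrank ℝ E + σ)) *
        ∫⁻ h in closedBall 0 (2 * R), shiftEnergy μ p u B h * ‖h‖ₑ ^ (-(finrank ℝ E + σ)) ∂μ :=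
      setLIntegral_closedBall_le_of_doubling μ
        (shiftEnergy_two_smul_le μ hp hu (convex_ball x₀ R) measurableSet_ball) hσ hσp
        (by positivity)
    _ ≤ ENNReal.ofReal (2 * (p - σ) * (2 * R) ^ (finrank ℝ E + σ)) *
        gagliardoEnergy μ p σ u B := by
      gcongr
      calc _ ≤ ∫⁻ h, shiftEnergy μ p u B h * ‖h‖ₑ ^ (-(finrank ℝ E + σ)) ∂μ :=
            setLIntegral_le_lintegral _ _
        _ = ∫⁻ x in B, ∫⁻ y in B, ‖u x - u y‖ₑ ^ p * ‖x - y‖ₑ ^ (-(finrank ℝ E + σ)) ∂μ ∂μ := by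
          rw [setLIntegral_setLIntegral_eq_lintegral_shift μ measurableSet_ball (by fun_prop)]
          simp_rw [sub_add_cancel_left, enorm_neg, enorm_sub_rev (u _) (u (_ + _)), shiftEnergy]
          congr with h
          rw [lintegral_mul_const _ (by fun_prop)]
        _ ≤ gagliardoEnergy μ p σ u B :=
          lintegral_mono fun x ↦ setLIntegral_le_lintegral _ _

end Energy

section Localization

lemma lintegral_lintegral_le_two_mul_of_symm {X : Type*} [MeasurableSpace X] (μ : Measure X)
    [SFinite μ] {f : X → X → ℝ≥0∞} (hf : Measurable fun z : X × X ↦ f z.1 z.2)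
    (hsymm : ∀ x y, f x y = f y x) {B : Set X} (hB : MeasurableSet B)
    (hzero : ∀ x ∉ B, ∀ y ∉ B, f x y = 0) :
    ∫⁻ x, ∫⁻ y, f x y ∂μ ∂μ ≤ 2 * ∫⁻ x in B, ∫⁻ y, f x y ∂μ ∂μ := by
  have hcompl : ∫⁻ x in Bᶜ, ∫⁻ y, f x y ∂μ ∂μ ≤ ∫⁻ x in B, ∫⁻ y, f x y ∂μ ∂μ :=
    calc ∫⁻ x in Bᶜ, ∫⁻ y, f x y ∂μ ∂μ
      _ = ∫⁻ x in Bᶜ, ∫⁻ y in B, f x y ∂μ ∂μ := by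
        refine setLIntegral_congr_fun hB.compl fun x hx ↦
          (setLIntegral_eq_of_support_subset fun y hy ↦ ?_).symm
        exact by_contra fun hyB ↦ hy (hzero x hx y hyB)
      _ = ∫⁻ y in B, ∫⁻ x in Bᶜ, f y x ∂μ ∂μ := by
        rw [lintegral_lintegral_swap hf.aemeasurable]
        simp_rw [hsymm]
      _ ≤ ∫⁻ x in B, ∫⁻ y, f x y ∂μ ∂μ :=
        lintegral_mono fun y ↦ setLIntegral_le_lintegral _ _
  rw [← lintegral_add_compl _ hB, two_mul]
  gcongr

variable {E F : Type*} [NormedAddCommGroup E] [NormedSpace ℝ E] [MeasurableSpace E]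
  (μ : Measure E) [NormedAddCommGroup F] {p σ : ℝ}

lemma gagliardoEnergy_const_sub (c : F) (u : E → F) (A : Set E) :
    gagliardoEnergy μ p σ (fun x ↦ c - u x) A = gagliardoEnergy μ p σ u A := by
  simp only [gagliardoEnergy, sub_sub_sub_cancel_left]
  congr with x
  congr with y
  rw [enorm_sub_rev]

variable [NormedSpace ℝ F]

lemma gagliardoEnergy_const_smul (hp : 0 ≤ p) (c : ℝ) (u : E → F) (A : Set E) :
    gagliardoEnergy μ p σ (fun x ↦ c • u x) A = ‖c‖ₑ ^ p * gagliardoEnergy μ p σ u A := by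
  have hc : ‖c‖ₑ ^ p ≠ ⊤ := by finiteness
  simp only [gagliardoEnergy, ← smul_sub, enorm_smul, ENNReal.mul_rpow_of_nonneg _ _ hp, mul_assoc,
    lintegral_const_mul' _ _ hc]

lemma enorm_smul_sub_smul_rpow_le (hp : 1 ≤ p) (a : ℝ) {b : ℝ} (hb : ‖b‖ₑ ≤ 1) (v w : F) :
    ‖a • v - b • w‖ₑ ^ p ≤ 2 ^ (p - 1) * (‖v - w‖ₑ ^ p + ‖a - b‖ₑ ^ p * ‖v‖ₑ ^ p) := by
  have htri : ‖a • v - b • w‖ₑ ≤ ‖v - w‖ₑ + ‖a - b‖ₑ * ‖v‖ₑ :=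
    calc ‖a • v - b • w‖ₑ
      _ = ‖b • (v - w) + (a - b) • v‖ₑ := by congr 1; module
      _ ≤ ‖b‖ₑ * ‖v - w‖ₑ + ‖a - b‖ₑ * ‖v‖ₑ := by
        rw [← enorm_smul, ← enorm_smul]
        exact enorm_add_le _ _
      _ ≤ ‖v - w‖ₑ + ‖a - b‖ₑ * ‖v‖ₑ := by
        gcongr
        exact mul_le_of_le_one_left' hb
  rw [← ENNReal.mul_rpow_of_nonneg _ _ (by positivity)]
  exact (ENNReal.rpow_le_rpow htri (by positivity)).trans
    (ENNReal.rpow_add_le_mul_rpow_add_rpow _ _ hp)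

variable [FiniteDimensional ℝ E] [BorelSpace E] [μ.IsAddHaarMeasure] [MeasurableSpace F]
  [BorelSpace F] [SecondCountableTopology F]

lemma gagliardoEnergy_smul_le (hp : 1 ≤ p) {η : E → ℝ} {v : E → F} (hη : Measurable η)
    (hv : Measurable v) (hη1 : ∀ x, ‖η x‖ₑ ≤ 1) {K : ℝ≥0∞}
    (hK : ∀ x, ∫⁻ y, ‖η x - η y‖ₑ ^ p * ‖x - y‖ₑ ^ (-(finrank ℝ E + σ)) ∂μ ≤ K) (A : Set E) :
    gagliardoEnergy μ p σ (fun x ↦ η x • v x) A ≤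
      2 ^ (p - 1) * (gagliardoEnergy μ p σ v A + K * ∫⁻ x in A, ‖v x‖ₑ ^ p ∂μ) := by
  have hpoint (x : E) :
      ∫⁻ y, ‖η x • v x - η y • v y‖ₑ ^ p * ‖x - y‖ₑ ^ (-(finrank ℝ E + σ)) ∂μ ≤ 2 ^ (p - 1) *
        (∫⁻ y, ‖v x - v y‖ₑ ^ p * ‖x - y‖ₑ ^ (-(finrank ℝ E + σ)) ∂μ + K * ‖v x‖ₑ ^ p) :=
    calc _
      _ ≤ ∫⁻ y, 2 ^ (p - 1) * (‖v x - v y‖ₑ ^ p * ‖x - y‖ₑ ^ (-(finrank ℝ E + σ)) +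
          ‖η x - η y‖ₑ ^ p * ‖x - y‖ₑ ^ (-(finrank ℝ E + σ)) * ‖v x‖ₑ ^ p) ∂μ := by
        refine lintegral_mono fun y ↦ ?_
        rw [mul_right_comm (‖η x - η y‖ₑ ^ p), ← add_mul, ← mul_assoc]
        gcongr
        exact enorm_smul_sub_smul_rpow_le hp _ (hη1 y) _ _
      _ ≤ _ := by
        rw [lintegral_const_mul _ (by fun_prop), lintegral_add_left (by fun_prop),
          lintegral_mul_const _ (by fun_prop)]
        gcongr
        exact hK x
  refine (lintegral_mono hpoint).trans_eq ?_
  rw [lintegral_const_mul _ (by fun_prop), lintegral_add_left (by fun_prop),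
    lintegral_const_mul _ (by fun_prop), gagliardoEnergy]

lemma gagliardoEnergy_smul_univ_le (hp : 1 ≤ p) {η : E → ℝ} {v : E → F} (hη : Measurable η)
    (hv : Measurable v) (hη1 : ∀ x, ‖η x‖ₑ ≤ 1) {B : Set E} (hB : MeasurableSet B)
    (hηB : ∀ x ∉ B, η x = 0) {K : ℝ≥0∞}
    (hK : ∀ x, ∫⁻ y, ‖η x - η y‖ₑ ^ p * ‖x - y‖ₑ ^ (-(finrank ℝ E + σ)) ∂μ ≤ K) :
    gagliardoEnergy μ p σ (fun x ↦ η x • v x) Set.univ ≤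
      2 ^ p * (gagliardoEnergy μ p σ v B + K * ∫⁻ x in B, ‖v x‖ₑ ^ p ∂μ) := by
  rw [← two_mul_two_rpow_sub_one p, mul_assoc]
  refine le_trans ?_ (mul_le_mul_right (gagliardoEnergy_smul_le μ hp hη hv hη1 hK B) 2)
  rw [gagliardoEnergy, Measure.restrict_univ]
  refine lintegral_lintegral_le_two_mul_of_symm μ (by fun_prop) (fun x y ↦ ?_) hB
    fun x hx y hy ↦ ?_
  · rw [enorm_sub_rev, enorm_sub_rev x]
  · simp [hηB x hx, hηB y hy, zero_lt_one.trans_le hp]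

end Localization

section UniformEstimate

variable {E F : Type*} [NormedAddCommGroup E] [NormedSpace ℝ E] [FiniteDimensional ℝ E]
  [Nontrivial E] [MeasurableSpace E] [BorelSpace E] (μ : Measure E) [μ.IsAddHaarMeasure]
  [NormedAddCommGroup F] [MeasurableSpace F] [BorelSpace F] [SecondCountableTopology F] {p σ : ℝ}

lemma ofReal_div_add_div_mul_oscEnergy_ball_le (hp : 1 ≤ p) (hσ : 0 < σ) (hσp : σ < p)
    {u : E → F} (hu : Measurable u) (x₀ : E) {R a b : ℝ} (hR : 0 < R) (ha : 0 ≤ a) (hb : 0 ≤ b) :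
    ENNReal.ofReal (a / (p - σ) + b / σ) *
        oscEnergy p u (μ.restrict (ball x₀ R)) (μ.restrict (ball x₀ R)) ≤
      ENNReal.ofReal ((2 * a + 2 ^ (p + σ) * (b / finrank ℝ E)) * (2 * R) ^ (finrank ℝ E + σ)) *
        gagliardoEnergy μ p σ u (ball x₀ R) := by
  have hpσ : 0 < p - σ := sub_pos.2 hσp
  set d := finrank ℝ E
  set W := oscEnergy p u (μ.restrict (ball x₀ R)) (μ.restrict (ball x₀ R))
  set U := gagliardoEnergy μ p σ u (ball x₀ R)
  calc ENNReal.ofReal (a / (p - σ) + b / σ) * W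
    _ = ENNReal.ofReal (a / (p - σ)) * W + ENNReal.ofReal (b / σ) * W := by
      rw [ENNReal.ofReal_add (by positivity) (by positivity), add_mul]
    _ ≤ ENNReal.ofReal (a / (p - σ)) *
          (ENNReal.ofReal (2 * (p - σ) * (2 * R) ^ (d + σ)) * U) +
        ENNReal.ofReal (b / σ) *
          (ENNReal.ofReal (2 ^ (p + σ) / d * σ * (2 * R) ^ (d + σ)) * U) := by
      gcongr
      · exact oscEnergy_ball_le_sub_order_mul_gagliardoEnergy μ hp hu hσ.le hσp x₀ hR
      · exact oscEnergy_ball_le_order_mul_gagliardoEnergy μ hp hu hσ x₀ hR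
    _ = _ := by
      rw [← mul_assoc (ENNReal.ofReal _) _ U, ← mul_assoc (ENNReal.ofReal _) _ U,
        ← ENNReal.ofReal_mul (by positivity), ← ENNReal.ofReal_mul (by positivity), ← add_mul,
        ← ENNReal.ofReal_add (by positivity) (by positivity)]
      congr 2
      field_simp

lemma ofReal_kernel_mul_oscEnergy_ball_le (hp : 1 ≤ p) (hσ : 0 < σ) (hσp : σ < p) {u : E → F}
    (hu : Measurable u) (x₀ : E) {r t L : ℝ} (hr : 0 < r) (ht : 1 ≤ t) (hL : 0 ≤ L) :
    ENNReal.ofReal (finrank ℝ E * μ.real (ball 0 1) *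
        ((L / r) ^ p * (r ^ (p - σ) / (p - σ)) + 1 ^ p * (r ^ (-σ) / σ))) *
          oscEnergy p u (μ.restrict (ball x₀ (t * r))) (μ.restrict (ball x₀ (t * r))) ≤
      ENNReal.ofReal (μ.real (ball 0 1) * ((2 * t) ^ (finrank ℝ E + p) *
        (2 * finrank ℝ E * L ^ p + 4 ^ p)) * r ^ (finrank ℝ E : ℝ)) *
          gagliardoEnergy μ p σ u (ball x₀ (t * r)) := by
  set d := finrank ℝ E
  have hd : (0 : ℝ) < d := Nat.cast_pos.2 Module.finrank_pos
  set ω := μ.real (ball (0 : E) 1)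
  have hkernel : d * ω * ((L / r) ^ p * (r ^ (p - σ) / (p - σ)) + 1 ^ p * (r ^ (-σ) / σ)) =
      d * ω * L ^ p * r ^ (-σ) / (p - σ) + d * ω * r ^ (-σ) / σ := by
    rw [Real.div_rpow hL hr.le, sub_eq_add_neg p, Real.rpow_add hr, Real.one_rpow]
    field_simp
  have hscale : r ^ (-σ) * (2 * (t * r)) ^ (d + σ) = (2 * t) ^ (d + σ) * r ^ (d : ℝ) := by
    rw [← mul_assoc 2, Real.mul_rpow (by positivity) hr.le, mul_left_comm, ← Real.rpow_add hr]
    ring_nf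
  have hpow : (2 : ℝ) ^ (p + σ) ≤ 4 ^ p := by
    rw [show (4 : ℝ) = 2 ^ (2 : ℝ) by norm_num, ← Real.rpow_mul zero_le_two]
    exact Real.rpow_le_rpow_of_exponent_le one_le_two (by linarith)
  rw [hkernel]
  refine (ofReal_div_add_div_mul_oscEnergy_ball_le μ hp hσ hσp hu x₀ (by positivity)
    (by positivity) (by positivity)).trans (mul_le_mul_left (ENNReal.ofReal_le_ofReal ?_) _)
  calc (2 * (d * ω * L ^ p * r ^ (-σ)) + 2 ^ (p + σ) * (d * ω * r ^ (-σ) / d)) *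
        (2 * (t * r)) ^ (d + σ)
    _ = ω * ((r ^ (-σ) * (2 * (t * r)) ^ (d + σ)) * (2 * d * L ^ p + 2 ^ (p + σ))) := by
      field_simp
    _ = ω * ((2 * t) ^ (d + σ) * (2 * d * L ^ p + 2 ^ (p + σ))) * r ^ (d : ℝ) := by
      rw [hscale]
      ring
    _ ≤ ω * ((2 * t) ^ (d + p) * (2 * d * L ^ p + 4 ^ p)) * r ^ (d : ℝ) := by
      gcongr
      linarith

end UniformEstimate

section Capacity

variable {N : ℕ} {p s : ℝ}

lemma gag_nonneg (u : Euc N → ℝ) : 0 ≤ gag N p s u :=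
  integral_nonneg fun _ ↦ by positivity

lemma fcap_nonneg (A E : Set (Euc N)) : 0 ≤ fcap N p s A E := by
  refine Real.sInf_nonneg ?_
  rintro _ ⟨φ, -, -, rfl⟩
  exact gag_nonneg φ

lemma fcap_le_gag {A E : Set (Euc N)} {φ : Euc N → ℝ} (hφ : TestOn E φ) (hA : ∀ x ∈ A, 1 ≤ φ x) :
    fcap N p s A E ≤ gag N p s φ := by
  refine csInf_le ⟨0, ?_⟩ ⟨φ, hφ, hA, rfl⟩
  rintro _ ⟨φ, -, -, rfl⟩
  exact gag_nonneg φ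

lemma ofReal_abs_rpow_div_norm_rpow {E : Type*} [NormedAddCommGroup E] (hp : 0 < p) (q : ℝ) {a : ℝ}
    {z : E} (h : z = 0 → a = 0) :
    ENNReal.ofReal (|a| ^ p / ‖z‖ ^ q) = ‖a‖ₑ ^ p * ‖z‖ₑ ^ (-q) := by
  rcases eq_or_ne a 0 with rfl | ha
  · simp [hp, hp.ne']
  have hz : 0 < ‖z‖ := norm_pos_iff.2 fun hz ↦ ha (h hz)
  rw [div_eq_mul_inv, ← Real.rpow_neg hz.le, ENNReal.ofReal_mul (by positivity),
    ← ENNReal.ofReal_rpow_of_pos (abs_pos.2 ha), ← ENNReal.ofReal_rpow_of_pos hz,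
    Real.enorm_eq_ofReal_abs, ofReal_norm]

lemma lintegral_ofReal_gagliardo_kernel (hp : 0 < p) {u : Euc N → ℝ} (hu : Measurable u)
    (B : Set (Euc N)) :
    ∫⁻ z, ENNReal.ofReal (|u z.1 - u z.2| ^ p / ‖z.1 - z.2‖ ^ (N + s * p))
        ∂(volume.restrict B).prod volume =
      gagliardoEnergy volume p (s * p) u B := by
  have hkernel (z : Euc N × Euc N) :
      ENNReal.ofReal (|u z.1 - u z.2| ^ p / ‖z.1 - z.2‖ ^ (N + s * p)) =
        ‖u z.1 - u z.2‖ₑ ^ p * ‖z.1 - z.2‖ₑ ^ (-(finrank ℝ (Euc N) + s * p)) := by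
    rw [finrank_euclideanSpace_fin]
    refine ofReal_abs_rpow_div_norm_rpow hp _ fun hz ↦ ?_
    rw [sub_eq_zero.1 hz, sub_self]
  simp_rw [hkernel]
  exact lintegral_prod _ (by fun_prop)

lemma ofReal_gag_le_gagliardoEnergy (hp : 0 < p) {u : Euc N → ℝ} (hu : Measurable u) :
    ENNReal.ofReal (gag N p s u) ≤ gagliardoEnergy volume p (s * p) u Set.univ := by
  rw [gag, integral_eq_lintegral_of_nonneg_ae (Eventually.of_forall fun _ ↦ by positivity)
    (Measurable.aestronglyMeasurable (by fun_prop)), ← lintegral_ofReal_gagliardo_kernel hp hu,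
    Measure.restrict_univ]
  exact ENNReal.ofReal_toReal_le

lemma ofReal_fcap_mul_enorm_rpow_le (hp : 0 < p) {A B : Set (Euc N)} {ψ : Euc N → ℝ}
    (hψ : TestOn B ψ) {c : ℝ} (hA : ∀ x ∈ A, ψ x = c) :
    ENNReal.ofReal (fcap N p s A B) * ‖c‖ₑ ^ p ≤
      gagliardoEnergy volume p (s * p) ψ Set.univ := by
  rcases eq_or_ne c 0 with rfl | hc
  · simp [hp]
  have hcψ : TestOn B (c⁻¹ • ψ) := ⟨hψ.1.const_smul c⁻¹, hψ.2.1.smul_left (f := fun _ ↦ c⁻¹),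
    (tsupport_smul_subset_right (fun _ ↦ c⁻¹) ψ).trans hψ.2.2⟩
  have hcap : fcap N p s A B ≤ gag N p s (c⁻¹ • ψ) :=
    fcap_le_gag hcψ fun x hx ↦ by simp [hA x hx, hc]
  calc ENNReal.ofReal (fcap N p s A B) * ‖c‖ₑ ^ p
    _ ≤ ‖c⁻¹‖ₑ ^ p * gagliardoEnergy volume p (s * p) ψ Set.univ * ‖c‖ₑ ^ p := by
      rw [← gagliardoEnergy_const_smul volume hp.le]
      gcongr
      exact (ENNReal.ofReal_le_ofReal hcap).trans
        (ofReal_gag_le_gagliardoEnergy hp hcψ.1.continuous.measurable)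
    _ = gagliardoEnergy volume p (s * p) ψ Set.univ := by
      rw [mul_right_comm, ← ENNReal.mul_rpow_of_nonneg _ _ hp.le, ← enorm_mul,
        inv_mul_cancel₀ hc, enorm_one, ENNReal.one_rpow, one_mul]

lemma TestOn.smul_of_contDiffOn {B : Set (Euc N)} (hB : IsOpen B) {η v : Euc N → ℝ}
    (hη : TestOn B η) (hv : ContDiffOn ℝ (⊤ : ℕ∞) v B) : TestOn B fun x ↦ η x • v x := by
  refine ⟨contDiff_iff_contDiffAt.2 fun x ↦ ?_, hη.2.1.smul_right,
    (tsupport_smul_subset_left η v).trans hη.2.2⟩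
  by_cases hx : x ∈ B
  · exact hη.1.contDiffAt.smul (hv.contDiffAt (hB.mem_nhds hx))
  · refine contDiffAt_const (c := (0 : ℝ)) |>.congr_of_eventuallyEq ?_
    filter_upwards [notMem_tsupport_iff_eventuallyEq.1 fun h ↦ hx (hη.2.2 h)] with y hy
    simp [hy]

lemma ofReal_fcap_mul_enorm_rpow_le_add (hp : 1 ≤ p) {A B : Set (Euc N)} (hB : IsOpen B)
    {η : Euc N → ℝ} (hη : TestOn B η) (hη1 : ∀ x, ‖η x‖ₑ ≤ 1) (hηA : ∀ x ∈ A, η x = 1) {K : ℝ≥0∞}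
    (hK : ∀ x, ∫⁻ y, ‖η x - η y‖ₑ ^ p * ‖x - y‖ₑ ^ (-(finrank ℝ (Euc N) + s * p)) ≤ K)
    {u : Euc N → ℝ} (hu : Measurable u) (hsmooth : ContDiffOn ℝ (⊤ : ℕ∞) u B)
    (huA : ∀ x ∈ A, u x = 0) (c : ℝ) :
    ENNReal.ofReal (fcap N p s A B) * ‖c‖ₑ ^ p ≤
      2 ^ p * (gagliardoEnergy volume p (s * p) u B + K * ∫⁻ x in B, ‖c - u x‖ₑ ^ p) := by
  rw [← gagliardoEnergy_const_sub volume c u]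
  refine (ofReal_fcap_mul_enorm_rpow_le (by positivity)
    (hη.smul_of_contDiffOn hB (contDiffOn_const.sub hsmooth)) fun x hx ↦ ?_).trans
    (gagliardoEnergy_smul_univ_le volume hp hη.1.continuous.measurable (hu.const_sub c) hη1
      hB.measurableSet (fun x hx ↦ ?_) hK)
  · simp [hηA x hx, huA x hx]
  · exact image_eq_zero_of_notMem_tsupport fun h ↦ hx (hη.2.2 h)

lemma ofReal_fcap_mul_setLIntegral_le (hp : 1 ≤ p) {A B : Set (Euc N)} (hB : IsOpen B)
    {η : Euc N → ℝ} (hη : TestOn B η) (hη1 : ∀ x, ‖η x‖ₑ ≤ 1) (hηA : ∀ x ∈ A, η x = 1) {K : ℝ≥0∞}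
    (hK : ∀ x, ∫⁻ y, ‖η x - η y‖ₑ ^ p * ‖x - y‖ₑ ^ (-(finrank ℝ (Euc N) + s * p)) ≤ K)
    {u : Euc N → ℝ} (hu : Measurable u) (hsmooth : ContDiffOn ℝ (⊤ : ℕ∞) u B)
    (huA : ∀ x ∈ A, u x = 0) {D : Set (Euc N)} (hDB : D ⊆ B) :
    ENNReal.ofReal (fcap N p s A B) * ∫⁻ x in D, ‖u x‖ₑ ^ p ≤
      2 ^ p * (gagliardoEnergy volume p (s * p) u B * volume D +
        K * oscEnergy p u (volume.restrict B) (volume.restrict B)) := by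
  calc ENNReal.ofReal (fcap N p s A B) * ∫⁻ x in D, ‖u x‖ₑ ^ p
    _ ≤ ∫⁻ x in D, 2 ^ p * (gagliardoEnergy volume p (s * p) u B +
        K * ∫⁻ y in B, ‖u x - u y‖ₑ ^ p) := by
      rw [← lintegral_const_mul _ (by fun_prop)]
      exact lintegral_mono fun x ↦
        ofReal_fcap_mul_enorm_rpow_le_add hp hB hη hη1 hηA hK hu hsmooth huA (u x)
    _ = 2 ^ p * (gagliardoEnergy volume p (s * p) u B * volume D +
        K * ∫⁻ x in D, ∫⁻ y in B, ‖u x - u y‖ₑ ^ p) := by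
      rw [lintegral_const_mul _ (by fun_prop), lintegral_add_left (by fun_prop),
        lintegral_const_mul _ (by fun_prop), setLIntegral_const]
    _ ≤ _ := by
      gcongr
      exact lintegral_mono_set hDB

end Capacity

section MazyaPoincare

variable {N : ℕ} {p s : ℝ}

/-- `η` is a smooth cutoff between the concentric balls of radii `r` and `R` about `x₀`. The
Lipschitz constant is written `L / r`, so that `L` is invariant under scaling. -/
structure IsCutoff (L r R : ℝ) (x₀ : Euc N) (η : Euc N → ℝ) : Prop where
  testOn : TestOn (ball x₀ R) η
  mem_Icc : ∀ x, η x ∈ Set.Icc 0 1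
  eq_one : ∀ x ∈ closedBall x₀ r, η x = 1
  norm_sub_le : ∀ x y, ‖η x - η y‖ ≤ L / r * ‖x - y‖

lemma exists_isCutoff (N : ℕ) {t : ℝ} (ht : 1 < t) :
    ∃ L : ℝ, 0 ≤ L ∧ ∀ (x₀ : Euc N) (r : ℝ), 0 < r → ∃ η, IsCutoff L r (t * r) x₀ η := by
  let f : ContDiffBump (0 : Euc N) := ⟨1, (1 + t) / 2, one_pos, by linarith⟩
  have hf : ContDiff ℝ (⊤ : ℕ∞) f := f.contDiff
  obtain ⟨L, hL⟩ := hf.lipschitzWith_of_hasCompactSupport f.hasCompactSupport (by simp)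
  refine ⟨L, L.2, fun x₀ r hr ↦ ?_⟩
  have hnorm (x : Euc N) : ‖r⁻¹ • x‖ = r⁻¹ * ‖x‖ := by
    rw [norm_smul, norm_inv, Real.norm_of_nonneg hr.le]
  have hsupp : Function.support (fun x ↦ f (r⁻¹ • (x - x₀))) ⊆
      closedBall x₀ (r * ((1 + t) / 2)) := by
    intro x hx
    have hmem : r⁻¹ • (x - x₀) ∈ Function.support f := hx
    rw [f.support_eq, mem_ball_zero_iff, hnorm, inv_mul_lt_iff₀ hr] at hmem
    exact mem_closedBall_iff_norm.2 hmem.le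
  refine ⟨fun x ↦ f (r⁻¹ • (x - x₀)), ⟨hf.comp (by fun_prop), ?_, ?_⟩,
    fun x ↦ ⟨f.nonneg, f.le_one⟩, fun x hx ↦ f.one_of_mem_closedBall ?_, fun x y ↦ ?_⟩
  · exact HasCompactSupport.of_support_subset_isCompact (isCompact_closedBall _ _) hsupp
  · refine (closure_minimal hsupp isClosed_closedBall).trans (closedBall_subset_ball ?_)
    nlinarith
  · rw [mem_closedBall_zero_iff, hnorm, inv_mul_le_iff₀ hr, ← dist_eq_norm]
    simpa [f] using hx
  · have hlip := hL.norm_sub_le (r⁻¹ • (x - x₀)) (r⁻¹ • (y - x₀))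
    rw [← smul_sub, sub_sub_sub_cancel_right, hnorm] at hlip
    exact hlip.trans_eq (by ring)

/-- The constant of the `p`-th power capacitary Poincaré inequality on concentric balls with ratio
of radii `t`, for a cutoff with scale-invariant Lipschitz constant `L`. -/
noncomputable def mazyaConst (N : ℕ) (p t L : ℝ) : ℝ :=
  2 ^ p * (volume.real (ball (0 : Euc N) 1) *
    (1 + (2 * t) ^ (N + p) * (2 * N * L ^ p + 4 ^ p)))

lemma mazyaConst_pos (N : ℕ) (p : ℝ) {t L : ℝ} (ht : 0 < t) (hL : 0 ≤ L) :
    0 < mazyaConst N p t L := by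
  have := addHaar_real_unitBall_pos (volume : Measure (Euc N))
  unfold mazyaConst
  positivity

lemma ofReal_fcap_mul_setLIntegral_ball_le (hN : 0 < N) (hp : 1 ≤ p) (hs : 0 < s) (hs1 : s < 1)
    {x₀ : Euc N} {L r t : ℝ} (hL : 0 ≤ L) (hr : 0 < r) (ht : 1 ≤ t) {η : Euc N → ℝ}
    (hη : IsCutoff L r (t * r) x₀ η) {A : Set (Euc N)} (hA : A ⊆ closedBall x₀ r)
    {u : Euc N → ℝ} (hu : Measurable u) (hsmooth : ContDiffOn ℝ (⊤ : ℕ∞) u (ball x₀ (t * r)))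
    (huA : ∀ x ∈ A, u x = 0) :
    ENNReal.ofReal (fcap N p s A (ball x₀ (t * r))) * ∫⁻ x in ball x₀ r, ‖u x‖ₑ ^ p ≤
      ENNReal.ofReal (mazyaConst N p t L * r ^ (N : ℝ)) *
        gagliardoEnergy volume p (s * p) u (ball x₀ (t * r)) := by
  have : NeZero N := ⟨hN.ne'⟩
  have hσ : 0 < s * p := by positivity
  have hσp : s * p < p := by nlinarith
  set ω := volume.real (ball (0 : Euc N) 1)
  set U := gagliardoEnergy volume p (s * p) u (ball x₀ (t * r))
  have hη1 (x : Euc N) : ‖η x‖ₑ ≤ 1 := by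
    rw [Real.enorm_eq_ofReal (hη.mem_Icc x).1, ENNReal.ofReal_le_one]
    exact (hη.mem_Icc x).2
  have hbound (x y : Euc N) : ‖η x - η y‖ ≤ 1 := by
    have hx := hη.mem_Icc x
    have hy := hη.mem_Icc y
    exact abs_le.2 ⟨by linarith [hx.1, hy.2], by linarith [hx.2, hy.1]⟩
  have hK (x : Euc N) := lintegral_gagliardo_kernel_le volume hσ hσp (div_nonneg hL hr.le) hr
    (hbound x) (hη.norm_sub_le x)
  refine (ofReal_fcap_mul_setLIntegral_le hp isOpen_ball hη.testOn hη1
    (fun x hx ↦ hη.eq_one x (hA hx)) hK hu hsmooth huA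
    (ball_subset_ball (le_mul_of_one_le_left hr.le ht))).trans ?_
  have hosc := ofReal_kernel_mul_oscEnergy_ball_le volume hp hσ hσp hu x₀ hr ht hL
  calc _
    _ ≤ 2 ^ p * (U * ENNReal.ofReal (ω * r ^ (N : ℝ)) + ENNReal.ofReal (ω *
        ((2 * t) ^ (N + p) * (2 * N * L ^ p + 4 ^ p)) * r ^ (N : ℝ)) * U) := by
      rw [addHaar_ball_eq_ofReal volume x₀ hr]
      simp only [finrank_euclideanSpace_fin] at hosc ⊢
      gcongr
    _ = ENNReal.ofReal (mazyaConst N p t L * r ^ (N : ℝ)) * U := by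
      rw [mul_comm U, ← add_mul, ← ENNReal.ofReal_add (by positivity) (by positivity),
        ← ofReal_two_rpow, ← mul_assoc, ← ENNReal.ofReal_mul (by positivity), mazyaConst]
      congr 2
      ring

lemma integrable_gagliardo_kernel_of_testOn (hN : 0 < N) (hp : 1 ≤ p) (hs : 0 < s) (hs1 : s < 1)
    {u : Euc N → ℝ} (hu : TestOn Set.univ u) (x₀ : Euc N) (R : ℝ) :
    Integrable (fun z : Euc N × Euc N ↦ |u z.1 - u z.2| ^ p / ‖z.1 - z.2‖ ^ (N + s * p))
      ((volume.restrict (ball x₀ R)).prod volume) := by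
  have : NeZero N := ⟨hN.ne'⟩
  have hmeas := hu.1.continuous.measurable
  obtain ⟨L, hL⟩ := hu.1.lipschitzWith_of_hasCompactSupport hu.2.1 (by simp)
  obtain ⟨C, hC⟩ := hu.2.1.exists_bound_of_continuous hu.1.continuous
  have hbound (x y : Euc N) : ‖u x - u y‖ ≤ C + C :=
    (norm_sub_le _ _).trans (add_le_add (hC x) (hC y))
  have hkernel (x : Euc N) := lintegral_gagliardo_kernel_le volume (p := p) (σ := s * p)
    (by positivity) (by nlinarith) L.2 one_pos (hbound x) (hL.norm_sub_le x)
  refine ⟨Measurable.aestronglyMeasurable (by fun_prop), ?_⟩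
  rw [hasFiniteIntegral_iff_ofReal (Eventually.of_forall fun _ ↦ by positivity),
    lintegral_ofReal_gagliardo_kernel (by positivity) hmeas]
  refine (setLIntegral_mono measurable_const fun x _ ↦ hkernel x).trans_lt ?_
  rw [setLIntegral_const]
  exact ENNReal.mul_lt_top ENNReal.ofReal_lt_top measure_ball_lt_top

lemma rpow_mul_rpow_le_rpow_of_mul_le {C a b c q r : ℝ} (hp : 0 < p) (hC : 0 < C) (hr : 0 < r)
    (ha : 0 ≤ a) (hb : 0 ≤ b) (h : a * b ≤ C * r ^ q * c) :
    C ^ (-(1 / p)) / r ^ (q / p) * a ^ (1 / p) * b ^ (1 / p) ≤ c ^ (1 / p) := by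
  have hrq : 0 < r ^ q := by positivity
  calc C ^ (-(1 / p)) / r ^ (q / p) * a ^ (1 / p) * b ^ (1 / p)
    _ = ((C * r ^ q)⁻¹ * (a * b)) ^ (1 / p) := by
      rw [Real.mul_rpow (by positivity) (by positivity), Real.mul_rpow ha hb,
        Real.inv_rpow (by positivity), Real.mul_rpow hC.le hrq.le, ← Real.rpow_mul hr.le,
        Real.rpow_neg hC.le, mul_one_div]
      field_simp
    _ ≤ c ^ (1 / p) := by
      gcongr
      exact (inv_mul_le_iff₀ (by positivity)).2 h

lemma fcap_mul_setIntegral_ball_le (hN : 0 < N) (hp : 1 ≤ p) (hs : 0 < s) (hs1 : s < 1)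
    {x₀ : Euc N} {L r t : ℝ} (hL : 0 ≤ L) (hr : 0 < r) (ht : 1 ≤ t) {η : Euc N → ℝ}
    (hη : IsCutoff L r (t * r) x₀ η) {A : Set (Euc N)} (hA : A ⊆ closedBall x₀ r)
    {u : Euc N → ℝ} (hu : Measurable u) (hsmooth : ContDiffOn ℝ (⊤ : ℕ∞) u (ball x₀ (t * r)))
    (hint : Integrable (fun z : Euc N × Euc N ↦ |u z.1 - u z.2| ^ p / ‖z.1 - z.2‖ ^ (N + s * p))
      ((volume.restrict (ball x₀ (t * r))).prod volume)) (huA : ∀ x ∈ A, u x = 0) :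
    fcap N p s A (ball x₀ (t * r)) * ∫ x in ball x₀ r, |u x| ^ p ≤
      mazyaConst N p t L * r ^ (N : ℝ) *
        ∫ x in ball x₀ (t * r), ∫ y, |u x - u y| ^ p / ‖x - y‖ ^ (N + s * p) := by
  have hC := mazyaConst_pos N p (zero_lt_one.trans_le ht) hL
  have hmass : ENNReal.ofReal (∫ x in ball x₀ r, |u x| ^ p) ≤ ∫⁻ x in ball x₀ r, ‖u x‖ₑ ^ p := by
    rw [integral_eq_lintegral_of_nonneg_ae (Eventually.of_forall fun _ ↦ by positivity)
      (Measurable.aestronglyMeasurable (by fun_prop))]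
    refine ENNReal.ofReal_toReal_le.trans_eq (lintegral_congr fun x ↦ ?_)
    rw [Real.enorm_eq_ofReal_abs, ENNReal.ofReal_rpow_of_nonneg (abs_nonneg _) (by positivity)]
  refine (ENNReal.ofReal_le_ofReal_iff (mul_nonneg (by positivity)
    (integral_nonneg fun _ ↦ integral_nonneg fun _ ↦ by positivity))).1 ?_
  rw [ENNReal.ofReal_mul (fcap_nonneg _ _), ENNReal.ofReal_mul (by positivity),
    ← integral_prod (fun z : Euc N × Euc N ↦ |u z.1 - u z.2| ^ p / ‖z.1 - z.2‖ ^ (N + s * p)) hint,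
    ofReal_integral_eq_lintegral_ofReal hint (Eventually.of_forall fun _ ↦ by positivity),
    lintegral_ofReal_gagliardo_kernel (by positivity) hu]
  exact (mul_le_mul_right hmass _).trans
    (ofReal_fcap_mul_setLIntegral_ball_le hN hp hs hs1 hL hr ht hη hA hu hsmooth huA)

end MazyaPoincare

theorem stmt15_general (N : ℕ) (hN : 0 < N) (p : ℝ) (hp : 1 ≤ p) :
    ∃ M : ℝ → ℝ, (∀ t, 1 < t → 0 < M t) ∧
      ∀ s : ℝ, 0 < s → s < 1 → ∀ (x₀ : Euc N) (r R : ℝ), 0 < r → r < R →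
        ∀ A ⊆ closedBall x₀ r, ∀ u : Euc N → ℝ, Measurable u →
          ContDiffOn ℝ (⊤ : ℕ∞) u (ball x₀ R) →
          Integrable (fun z : Euc N × Euc N ↦ |u z.1 - u z.2| ^ p / ‖z.1 - z.2‖ ^ (N + s * p))
            ((volume.restrict (ball x₀ R)).prod volume) → (∀ x ∈ A, u x = 0) →
            M (R / r) / r ^ ((N : ℝ) / p) * (fcap N p s A (ball x₀ R)) ^ (1 / p) *
                (∫ x in ball x₀ r, |u x| ^ p) ^ (1 / p) ≤
              (∫ x in ball x₀ R, ∫ y, |u x - u y| ^ p / ‖x - y‖ ^ ((N : ℝ) + s * p)) ^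
                (1 / p) := by
  choose! L hL0 hcutoff using fun t (ht : 1 < t) ↦ exists_isCutoff N ht
  have hCpos {t : ℝ} (ht : 1 < t) : 0 < mazyaConst N p t (L t) :=
    mazyaConst_pos N p (zero_lt_one.trans ht) (hL0 t ht)
  refine ⟨fun t ↦ mazyaConst N p t (L t) ^ (-(1 / p)), fun t ht ↦ Real.rpow_pos_of_pos (hCpos ht) _,
    fun s hs hs1 x₀ r R hr hrR A hA u hu hsmooth hint huA ↦ ?_⟩
  obtain ⟨t, ht, rfl⟩ : ∃ t, 1 < t ∧ R = t * r :=
    ⟨R / r, (one_lt_div hr).2 hrR, (div_mul_cancel₀ R hr.ne').symm⟩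
  obtain ⟨η, hη⟩ := hcutoff t ht x₀ r hr
  rw [mul_div_cancel_right₀ t hr.ne']
  exact rpow_mul_rpow_le_rpow_of_mul_le (by positivity) (hCpos ht) hr (fcap_nonneg _ _)
    (integral_nonneg fun _ ↦ by positivity) (fcap_mul_setIntegral_ball_le hN hp hs hs1
      (hL0 t ht) hr ht.le hη hA hu hsmooth hint huA)

theorem stmt15 (N : ℕ) (hN : 0 < N) (p : ℝ) (hp : 1 ≤ p) :
    ∃ M : ℝ → ℝ, (∀ t, 1 < t → 0 < M t) ∧
      ∀ s : ℝ, 0 < s → s < 1 → ∀ (x0 : Euc N) (r R : ℝ), 0 < r → r < R →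
        ∀ A : Set (Euc N), IsCompact A → A ⊆ closedBall x0 r →
          ∀ u : Euc N → ℝ, TestOn (Set.univ : Set (Euc N)) u → (∀ x ∈ A, u x = 0) →
            M (R / r) / r ^ ((N : ℝ) / p) * (fcap N p s A (ball x0 R)) ^ (1 / p) *
                (∫ x in ball x0 r, |u x| ^ p) ^ (1 / p) ≤
              (∫ x in ball x0 R, ∫ y, |u x - u y| ^ p / ‖x - y‖ ^ ((N : ℝ) + s * p)) ^
                (1 / p) := by
  obtain ⟨M, hM, h⟩ := stmt15_general N hN p hp
  exact ⟨M, hM, fun s hs hs1 x0 r R hr hrR A _ hA u hu ↦ h s hs hs1 x0 r R hr hrR A hA u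
    hu.1.continuous.measurable hu.1.contDiffOn
    (integrable_gagliardo_kernel_of_testOn hN hp hs hs1 hu x0 R)⟩
end
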